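/- Let n ≥ 1, m ∈ ℝ and 1 ≥ ρ > δ ≥ 0. Assume σ ∈ S^m_{ρ,δ}(ℝⁿ) is real-valued and satisfies the ellipticity condition σ(x,ξ) ≥ c (1+|ξ|²)^{m/2} for all (x,ξ) ∈ ℝⁿ×ℝⁿ, for some constant c > 0. Then there exists a constant C > 0 such that for all f ∈ 𝒮(ℝⁿ): Re ∫_{ℝⁿ} Op^{KN}(σ)f(x) · conj(f(x)) dx ≥ −C ‖f‖²_{H^{(m−(ρ−δ))/2}(ℝⁿ)}. (Theorem A.3: Gårding inequality for the Hörmander calculus on ℝⁿ.) -/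

import Mathlib

open MeasureTheory Complex

noncomputable section

/-- `e^{2πit}`. -/
def expi (t : ℝ) : ℂ := Complex.exp (2 * (Real.pi : ℂ) * Complex.I * (t : ℂ))

/-- Dot product on `ℝⁿ`. -/
def dotp {n : ℕ} (x y : Fin n → ℝ) : ℝ := ∑ i, x i * y i

/-- Euclidean Fourier transform `𝓕f(ξ) = ∫ f(y) e^{-2πi y·ξ} dy`. -/
def FT {n : ℕ} (f : (Fin n → ℝ) → ℂ) (ξ : Fin n → ℝ) : ℂ :=
  ∫ y, f y * expi (-(dotp y ξ))

/-- Bargmann-type transform `B_a[f](x,ξ) = ∫ f(y) a(y-x) e^{-2πi y·ξ} dy`. -/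
def Barg {n : ℕ} (a f : (Fin n → ℝ) → ℂ) (x ξ : Fin n → ℝ) : ℂ :=
  ∫ y, f y * a (y - x) * expi (-(dotp y ξ))

/-- Wick quantization with window `a`. -/
def WickOp {n : ℕ} (a : (Fin n → ℝ) → ℂ) (σ : (Fin n → ℝ) → (Fin n → ℝ) → ℂ)
    (f : (Fin n → ℝ) → ℂ) (y : Fin n → ℝ) : ℂ :=
  ∫ p : (Fin n → ℝ) × (Fin n → ℝ),
    σ p.1 p.2 * Barg a f p.1 p.2 * (starRingEnd ℂ) (a (y - p.1)) * expi (dotp y p.2)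

/-- Kohn–Nirenberg quantization. -/
def OpKN {n : ℕ} (σ : (Fin n → ℝ) → (Fin n → ℝ) → ℂ) (f : (Fin n → ℝ) → ℂ)
    (x : Fin n → ℝ) : ℂ :=
  ∫ ξ, expi (dotp x ξ) * σ x ξ * FT f ξ

/-- Partial derivative in the `i`-th coordinate direction. -/
def pd {n : ℕ} (i : Fin n) (F : (Fin n → ℝ) → ℂ) : (Fin n → ℝ) → ℂ :=
  fun x => fderiv ℝ F x (Pi.single i 1)

/-- Multi-index derivative `∂^α`. -/
def md {n : ℕ} (α : Fin n → ℕ) (F : (Fin n → ℝ) → ℂ) : (Fin n → ℝ) → ℂ :=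
  (((List.finRange n).map fun i => (pd i)^[α i]).foldr (· ∘ ·) id) F

/-- Mixed derivative `∂_x^β ∂_ξ^α σ`. -/
def mixedD {n : ℕ} (β α : Fin n → ℕ) (σ : (Fin n → ℝ) → (Fin n → ℝ) → ℂ) :
    (Fin n → ℝ) → (Fin n → ℝ) → ℂ :=
  fun x ξ => md β (fun x' => md α (fun ξ' => σ x' ξ') ξ) x

/-- The weight `1 + |ξ|²` (Euclidean norm squared). -/
def wt {n : ℕ} (ξ : Fin n → ℝ) : ℝ := 1 + ∑ i, ξ i ^ 2

/-- Length `|α|` of a multi-index, as a real number. -/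
def mOrd {n : ℕ} (α : Fin n → ℕ) : ℝ := ∑ i, (α i : ℝ)

/-- The Hörmander class `S^m_{ρ,δ}(ℝⁿ)`. -/
def SymbolClass {n : ℕ} (m ρ δ : ℝ) (σ : (Fin n → ℝ) → (Fin n → ℝ) → ℂ) : Prop :=
  (ContDiff ℝ (⊤ : ℕ∞) fun p : (Fin n → ℝ) × (Fin n → ℝ) => σ p.1 p.2) ∧
  ∀ α β : Fin n → ℕ, ∃ C > 0, ∀ x ξ,
    ‖mixedD β α σ x ξ‖ ≤ C * wt ξ ^ ((m - ρ * mOrd α + δ * mOrd β) / 2)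

/-- The seminorm `‖σ‖_{S^m_{ρ,δ},α,β}`. -/
def hSem {n : ℕ} (m ρ δ : ℝ) (α β : Fin n → ℕ)
    (σ : (Fin n → ℝ) → (Fin n → ℝ) → ℂ) : ℝ :=
  ⨆ p : (Fin n → ℝ) × (Fin n → ℝ),
    wt p.2 ^ (-(m - ρ * mOrd α + δ * mOrd β) / 2) * ‖mixedD β α σ p.1 p.2‖

/-- Squared Sobolev norm `‖f‖²_{H^s}`. -/
def sobSq {n : ℕ} (s : ℝ) (f : (Fin n → ℝ) → ℂ) : ℝ :=
  ∫ ξ, wt ξ ^ s * ‖FT f ξ‖ ^ 2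

end

/-!
Write `⟨ξ⟩ = (1 + |ξ|²)^{1/2}` and cover frequency space by cells of radius `∼ ⟨ζ⟩^τ` around every
`ζ`, with `τ = (ρ + δ) / 2`. Bumps `θ_ζ` on the cells with `∫ θ_ζ(ξ)² dζ = 1` split the form into
`⟨Op(σ) f, f⟩ = ∫ ⟨Op(σ θ_ζ) w_ζ, f⟩ dζ`, where `w_ζ` has Fourier transform `θ_ζ 𝓕f`.

* *Near the diagonal* only the frequencies of `f` in the cell of `ζ` matter. There `Op(σ θ_ζ)` may
  be replaced by `θ_ζ(D) ∘ σ(·, ζ)`, at the price of `κ = (ρ - δ) / 2` orders: the symbol moves by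
  `⟨ζ⟩^{m-(ρ-τ)}` over a cell, and by `⟨ζ⟩^{m-(τ-δ)}` over the dual length `⟨ζ⟩^{-τ}`. Moving
  `θ_ζ(D)` to the other side leaves `∫ σ(x, ζ) |w_ζ(x)|² dx ≥ c ⟨ζ⟩^m ‖w_ζ‖²`.
* *Far from the diagonal* the remaining frequencies of `f` are separated from those of `w_ζ` by a
  slab of width `∼ ⟨ζ⟩^τ`. Each integration by parts across the slab costs an `x`-derivative
  `⟨ζ⟩^δ` and gains the width, so these terms are smaller than any power of `⟨ζ⟩`.

Integrating in `ζ` bounds the real part of the form from below by a multiple of `‖f‖²_{H^{m/2}}`, up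
to `‖f‖²_{H^{(m-κ)/2}}` and arbitrarily weak norms; interpolation absorbs the former into the main
term.
-/

noncomputable section

open Filter Metric Set
open scoped Topology ContDiff FourierTransform SchwartzMap ComplexConjugate

variable {n : ℕ}

section Characters

theorem norm_expi (t : ℝ) : ‖expi t‖ = 1 := by
  have h : 2 * (Real.pi : ℂ) * I * (t : ℂ) = ((2 * Real.pi * t : ℝ) : ℂ) * I := by
    push_cast; ring
  rw [expi, h, Complex.norm_exp_ofReal_mul_I]

theorem expi_add (s t : ℝ) : expi (s + t) = expi s * expi t := by
  rw [expi, expi, expi, ← Complex.exp_add]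
  push_cast; ring_nf

theorem conj_expi (t : ℝ) : conj (expi t) = expi (-t) := by
  simp [expi, ← Complex.exp_conj, Complex.conj_ofNat]

@[fun_prop]
theorem continuous_expi : Continuous expi := by
  unfold expi; fun_prop

@[fun_prop]
theorem continuous_dotp {X : Type*} [TopologicalSpace X] {u v : X → Fin n → ℝ}
    (hu : Continuous u) (hv : Continuous v) : Continuous fun a => dotp (u a) (v a) := by
  unfold dotp; fun_prop

theorem dotp_comm (x y : Fin n → ℝ) : dotp x y = dotp y x := by
  simp [dotp, mul_comm]

theorem dotp_neg_left (x y : Fin n → ℝ) : dotp (-x) y = -dotp x y := by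
  simp [dotp]

theorem dotp_sub_left (x y z : Fin n → ℝ) : dotp (x - y) z = dotp x z - dotp y z := by
  simp [dotp, sub_mul, Finset.sum_sub_distrib]

theorem dotp_add_right (x y z : Fin n → ℝ) : dotp x (y + z) = dotp x y + dotp x z := by
  simp [dotp, mul_add, Finset.sum_add_distrib]

theorem dotp_smul_right (c : ℝ) (x y : Fin n → ℝ) : dotp x (c • y) = c * dotp x y := by
  simp [dotp, Finset.mul_sum, mul_left_comm]

theorem dotp_single (x : Fin n → ℝ) (i : Fin n) (c : ℝ) : dotp x (Pi.single i c) = x i * c := by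
  simp [dotp, Pi.single_apply]

end Characters

section LpSpaces

/-- Membership in `L¹ ∩ L²`, the class of functions on which the integral formula for the Fourier
transform converges and Plancherel's identity holds. -/
structure MemL1L2 (g : (Fin n → ℝ) → ℂ) : Prop where
  integrable : Integrable g
  memLp_two : MemLp g 2

/-- The `L²` norm, as a real number; it is meaningful on functions satisfying `MemLp g 2`. -/
def l2norm (g : (Fin n → ℝ) → ℂ) : ℝ := √(∫ x, ‖g x‖ ^ 2)

theorem l2norm_nonneg (g : (Fin n → ℝ) → ℂ) : 0 ≤ l2norm g := Real.sqrt_nonneg _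

theorem sq_l2norm (g : (Fin n → ℝ) → ℂ) : l2norm g ^ 2 = ∫ x, ‖g x‖ ^ 2 :=
  Real.sq_sqrt (integral_nonneg fun _ => sq_nonneg _)

theorem MemL1L2.integrable_sq {g : (Fin n → ℝ) → ℂ} (hg : MemL1L2 g) :
    Integrable fun x => ‖g x‖ ^ 2 :=
  (memLp_two_iff_integrable_sq_norm hg.memLp_two.1).1 hg.memLp_two

theorem MemL1L2.of_le_mul {g h : (Fin n → ℝ) → ℂ} {c : ℝ} (hg : MemL1L2 g)
    (hh : AEStronglyMeasurable h) (hle : ∀ x, ‖h x‖ ≤ c * ‖g x‖) : MemL1L2 h where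
  integrable := (hg.integrable.norm.const_mul c).mono' hh (.of_forall hle)
  memLp_two := hg.memLp_two.of_le_mul hh (.of_forall hle)

theorem MemL1L2.indicator {g : (Fin n → ℝ) → ℂ} (hg : MemL1L2 g) {S : Set (Fin n → ℝ)}
    (hS : MeasurableSet S) : MemL1L2 (S.indicator g) :=
  ⟨hg.integrable.indicator hS, hg.memLp_two.indicator hS⟩

theorem MemL1L2.expi_mul {g : (Fin n → ℝ) → ℂ} (hg : MemL1L2 g) (z : Fin n → ℝ) :
    MemL1L2 fun ξ => expi (dotp z ξ) * g ξ := by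
  refine hg.of_le_mul (c := 1) ?_ fun ξ => by simp [norm_expi]
  exact Continuous.aestronglyMeasurable (by fun_prop) |>.mul hg.integrable.1

theorem l2norm_le_mul_l2norm {g h : (Fin n → ℝ) → ℂ} {c : ℝ} (hg : MemL1L2 g) (hc : 0 ≤ c)
    (hle : ∀ x, ‖h x‖ ≤ c * ‖g x‖) : l2norm h ≤ c * l2norm g := by
  rw [l2norm, l2norm, ← Real.sqrt_sq hc, ← Real.sqrt_mul (sq_nonneg c), ← integral_const_mul]
  refine Real.sqrt_le_sqrt (integral_mono_of_nonneg (.of_forall fun _ => sq_nonneg _)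
    (hg.integrable_sq.const_mul _) (.of_forall fun x => ?_))
  simpa only [mul_pow] using pow_le_pow_left₀ (norm_nonneg _) (hle x) 2

theorem l2norm_expi_mul (g : (Fin n → ℝ) → ℂ) (z : Fin n → ℝ) :
    l2norm (fun ξ => expi (dotp z ξ) * g ξ) = l2norm g := by
  simp [l2norm, norm_expi]

theorem l2norm_comp_sub_right (g : (Fin n → ℝ) → ℂ) (z : Fin n → ℝ) :
    l2norm (fun x => g (x - z)) = l2norm g := by
  rw [l2norm, l2norm, integral_sub_right_eq_self (fun x => ‖g x‖ ^ 2) z]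

theorem integral_norm_mul_norm_le_l2norm_mul {w v : (Fin n → ℝ) → ℂ} (hw : MemLp w 2)
    (hv : MemLp v 2) : ∫ x, ‖w x‖ * ‖v x‖ ≤ l2norm w * l2norm v := by
  have := integral_mul_le_Lp_mul_Lq_of_nonneg (p := 2) (q := 2) Real.HolderConjugate.two_two
    (.of_forall fun x => norm_nonneg (w x)) (.of_forall fun x => norm_nonneg (v x))
    (by simpa using hw.norm) (by simpa using hv.norm)
  simpa [l2norm, Real.sqrt_eq_rpow] using this

theorem integrable_norm_mul_norm {w v : (Fin n → ℝ) → ℂ} (hw : MemLp w 2) (hv : MemLp v 2) :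
    Integrable fun x => ‖w x‖ * ‖v x‖ :=
  MemLp.integrable_mul hw.norm hv.norm

theorem l2norm_eq_toReal_eLpNorm {g : (Fin n → ℝ) → ℂ} (hg : MemLp g 2) :
    l2norm g = (eLpNorm g 2).toReal := by
  rw [hg.eLpNorm_eq_integral_rpow_norm two_ne_zero ENNReal.ofNat_ne_top,
    ENNReal.toReal_ofReal (by positivity)]
  simp [l2norm, Real.sqrt_eq_rpow]

end LpSpaces

section Fourier

/-- The inverse Fourier transform `∫ G(ξ) e^{2πi x·ξ} dξ`. -/
def IFT (G : (Fin n → ℝ) → ℂ) (x : Fin n → ℝ) : ℂ :=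
  ∫ ξ, expi (dotp x ξ) * G ξ

theorem IFT_eq_FT_neg (G : (Fin n → ℝ) → ℂ) (x : Fin n → ℝ) : IFT G x = FT G (-x) := by
  refine integral_congr_ae (.of_forall fun ξ => ?_)
  simp only [dotp_comm ξ, dotp_neg_left, neg_neg, mul_comm]

theorem FT_eq_fourier (f : (Fin n → ℝ) → ℂ) (ξ : Fin n → ℝ) :
    FT f ξ = 𝓕 (fun y : EuclideanSpace ℝ (Fin n) => f (WithLp.ofLp y)) (WithLp.toLp 2 ξ) := by
  rw [Real.fourier_eq', FT, ← (PiLp.volume_preserving_ofLp (Fin n)).integral_comp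
    (MeasurableEquiv.toLp 2 (Fin n → ℝ)).symm.measurableEmbedding]
  refine integral_congr_ae (.of_forall fun y => ?_)
  have h : inner ℝ y (WithLp.toLp 2 ξ) = dotp (WithLp.ofLp y) ξ := by
    simp [PiLp.inner_apply, dotp, mul_comm]
  simp only [expi, smul_eq_mul, h, mul_comm (f _)]
  push_cast; ring_nf

theorem integrable_comp_ofLp_iff {f : (Fin n → ℝ) → ℂ} :
    Integrable (fun y : EuclideanSpace ℝ (Fin n) => f (WithLp.ofLp y)) ↔ Integrable f :=
  (PiLp.volume_preserving_ofLp (Fin n)).integrable_comp_emb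
    (MeasurableEquiv.toLp 2 (Fin n → ℝ)).symm.measurableEmbedding

theorem FT_IFT {F : (Fin n → ℝ) → ℂ} (hc : Continuous F) (hi : Integrable F)
    (hk : Integrable (IFT F)) : FT (IFT F) = F := by
  have hk' : Integrable (FT F) := by
    simpa [IFT_eq_FT_neg] using hk.comp_neg
  set F' := fun y : EuclideanSpace ℝ (Fin n) => F (WithLp.ofLp y)
  have hFT : 𝓕 F' = fun y : EuclideanSpace ℝ (Fin n) => FT F (WithLp.ofLp y) := by
    ext y; rw [FT_eq_fourier]
  have hIFT : 𝓕⁻ F' = fun y : EuclideanSpace ℝ (Fin n) => IFT F (WithLp.ofLp y) := by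
    ext y
    rw [Real.fourierInv_eq_fourier_neg, hFT, IFT_eq_FT_neg]; rfl
  have inversion := Continuous.fourier_fourierInv_eq (f := F') (hc.comp (PiLp.continuous_ofLp 2 _))
    (integrable_comp_ofLp_iff.2 hi) (by rw [hFT]; exact integrable_comp_ofLp_iff.2 hk')
  ext x
  rw [FT_eq_fourier, ← hIFT, inversion]

theorem fourier_toLp_ae_eq {E : Type*} [NormedAddCommGroup E] [InnerProductSpace ℝ E]
    [FiniteDimensional ℝ E] [MeasurableSpace E] [BorelSpace E] {f : E → ℂ}
    (h1 : Integrable f) (h2 : MemLp f 2) :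
    (𝓕 (h2.toLp f) : Lp ℂ 2 (volume : Measure E)) =ᵐ[volume] 𝓕 f := by
  have hcont : Continuous (𝓕 f) :=
    VectorFourier.fourierIntegral_continuous Real.continuous_fourierChar
      (by exact continuous_inner) h1
  refine ae_eq_of_integral_contDiff_smul_eq ((Lp.memLp _).locallyIntegrable (by norm_num))
    hcont.locallyIntegrable fun φ hφ hφc => ?_
  let φS : 𝓢(E, ℂ) := HasCompactSupport.toSchwartzMap (f := fun x => (φ x : ℂ))
    (hφc.comp_left (g := ((↑) : ℝ → ℂ)) (by simp)) (Complex.ofRealCLM.contDiff.comp hφ)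
  have hφS : ∀ x, φS x = (φ x : ℂ) := fun x => rfl
  calc ∫ x, φ x • (𝓕 (h2.toLp f) : Lp ℂ 2 (volume : Measure E)) x
      = ((𝓕 (h2.toLp f) : Lp ℂ 2 (volume : Measure E)) : 𝓢'(E, ℂ)) φS := by
        rw [Lp.toTemperedDistribution_apply]
        simp [hφS]
    _ = ∫ x, (𝓕 φS) x • (h2.toLp f) x := by
        rw [← Lp.fourier_toTemperedDistribution_eq, TemperedDistribution.fourier_apply,
          Lp.toTemperedDistribution_apply]
    _ = ∫ x, (𝓕 φS) x • f x := by
        refine integral_congr_ae ?_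
        filter_upwards [h2.coeFn_toLp] with x hx
        rw [hx]
    _ = ∫ x, φ x • 𝓕 f x := by
        have := VectorFourier.integral_fourierIntegral_smul_eq_flip (μ := volume) (ν := volume)
          (L := innerₗ E) (f := fun x => (φ x : ℂ)) (g := f)
          Real.continuous_fourierChar continuous_inner φS.integrable h1
        rw [flip_innerₗ] at this
        simpa using! this

theorem eLpNorm_FT {f : (Fin n → ℝ) → ℂ} (hf : MemL1L2 f) :
    eLpNorm (FT f) 2 = eLpNorm f 2 := by
  have hmp := PiLp.volume_preserving_ofLp (Fin n)
  have hemb := (MeasurableEquiv.toLp 2 (Fin n → ℝ)).symm.measurableEmbedding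
  set f' := fun y : EuclideanSpace ℝ (Fin n) => f (WithLp.ofLp y)
  have hf' : MemLp f' 2 := hf.memLp_two.comp_measurePreserving hmp
  have hFT : 𝓕 f' = fun y : EuclideanSpace ℝ (Fin n) => FT f (WithLp.ofLp y) := by
    ext y; rw [FT_eq_fourier]
  have hnorm : eLpNorm (𝓕 f') 2 = eLpNorm f' 2 := by
    have := Lp.norm_fourier_eq (hf'.toLp f')
    rw [Lp.norm_toLp, Lp.norm_def,
      ENNReal.toReal_eq_toReal_iff' (Lp.eLpNorm_ne_top _) hf'.eLpNorm_ne_top] at this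
    rw [← this, eLpNorm_congr_ae
      (fourier_toLp_ae_eq (integrable_comp_ofLp_iff.2 hf.integrable) hf')]
  rw [hFT] at hnorm
  exact (hmp.map_eq ▸ hemb.eLpNorm_map_measure).trans
    (hnorm.trans (hmp.map_eq ▸ hemb.eLpNorm_map_measure).symm)

theorem continuous_IFT {f : (Fin n → ℝ) → ℂ} (hf : Integrable f) : Continuous (IFT f) := by
  refine continuous_of_dominated (bound := fun ξ => ‖f ξ‖) (fun x => ?_) (fun x => ?_) hf.norm ?_
  · exact Continuous.aestronglyMeasurable (by fun_prop) |>.mul hf.1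
  · exact .of_forall fun ξ => by rw [norm_mul, norm_expi, one_mul]
  · exact .of_forall fun ξ => by fun_prop

theorem eLpNorm_IFT {f : (Fin n → ℝ) → ℂ} (hf : MemL1L2 f) :
    eLpNorm (IFT f) 2 = eLpNorm f 2 := by
  have hneg : IFT f = fun x => FT f (-x) := funext (IFT_eq_FT_neg f)
  have hFTneg : FT f = fun x => IFT f (-x) := by simp [hneg]
  have hmeas : AEStronglyMeasurable (FT f) := by
    rw [hFTneg]; exact (continuous_IFT hf.integrable).comp continuous_neg |>.aestronglyMeasurable
  rw [hneg, ← eLpNorm_FT hf]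
  exact eLpNorm_comp_measurePreserving hmeas (Measure.measurePreserving_neg volume)

theorem MemL1L2.memLp_IFT {f : (Fin n → ℝ) → ℂ} (hf : MemL1L2 f) : MemLp (IFT f) 2 :=
  ⟨(continuous_IFT hf.integrable).aestronglyMeasurable, by
    rw [eLpNorm_IFT hf]; exact hf.memLp_two.2⟩

theorem l2norm_IFT {f : (Fin n → ℝ) → ℂ} (hf : MemL1L2 f) : l2norm (IFT f) = l2norm f := by
  rw [l2norm_eq_toReal_eLpNorm hf.memLp_IFT, l2norm_eq_toReal_eLpNorm hf.memLp_two, eLpNorm_IFT hf]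

theorem IFT_comp_sub_right (f : (Fin n → ℝ) → ℂ) (x z : Fin n → ℝ) :
    IFT f (x - z) = IFT (fun ξ => expi (dotp (-z) ξ) * f ξ) x := by
  refine integral_congr_ae (.of_forall fun ξ => ?_)
  simp only [dotp_sub_left, dotp_neg_left]
  rw [sub_eq_add_neg, expi_add, mul_assoc]

theorem IFT_add {f g : (Fin n → ℝ) → ℂ} (hf : Integrable f) (hg : Integrable g)
    (x : Fin n → ℝ) : IFT (fun ξ => f ξ + g ξ) x = IFT f x + IFT g x := by
  have hint {h : (Fin n → ℝ) → ℂ} (hh : Integrable h) :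
      Integrable fun ξ => expi (dotp x ξ) * h ξ :=
    hh.bdd_mul (c := 1) (Continuous.aestronglyMeasurable (by fun_prop))
      (.of_forall fun ξ => (norm_expi _).le)
  simp only [IFT, mul_add]
  exact integral_add (hint hf) (hint hg)

theorem exists_schwartz_eq_FT (f : 𝓢(Fin n → ℝ, ℂ)) :
    ∃ g : 𝓢(Fin n → ℝ, ℂ), ⇑g = FT f ∧ IFT g = f := by
  let L := PiLp.continuousLinearEquiv 2 ℝ (fun _ : Fin n => ℝ)
  let g : 𝓢(Fin n → ℝ, ℂ) := SchwartzMap.compCLMOfContinuousLinearEquiv ℂ L.symm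
    (𝓕 (SchwartzMap.compCLMOfContinuousLinearEquiv ℂ L f))
  have hg : ⇑g = FT f := by
    ext ξ; rw [FT_eq_fourier]; rfl
  have hswap : IFT (FT f) = FT (IFT f) := by
    ext x
    rw [IFT_eq_FT_neg, FT, FT, ← integral_neg_eq_self]
    refine integral_congr_ae (.of_forall fun ξ => ?_)
    simp only [IFT_eq_FT_neg, dotp_comm _ (-x), dotp_neg_left, dotp_comm _ x, neg_neg]
    rw [dotp_comm x, dotp_neg_left, dotp_comm x]
  refine ⟨g, hg, ?_⟩
  rw [hg, hswap]
  refine FT_IFT f.continuous f.integrable ?_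
  have hneg : IFT f = fun x => g (-x) := by ext x; rw [IFT_eq_FT_neg, hg]
  exact hneg ▸ g.integrable.comp_neg

end Fourier

section DirectionalDerivatives

variable {E : Type*} [NormedAddCommGroup E] [NormedSpace ℝ E]

/-- The derivative of `F` in the direction `v`, as an operator that can be iterated. The partial
derivative `pd i` is `dirDeriv (Pi.single i 1)` by definition. -/
def dirDeriv (v : E) (F : E → ℂ) : E → ℂ := fun x => fderiv ℝ F x v

theorem contDiff_dirDeriv (v : E) {F : E → ℂ} (hF : ContDiff ℝ ∞ F) :
    ContDiff ℝ ∞ (dirDeriv v F) :=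
  (hF.fderiv_right (m := ∞) (by simp)).clm_apply contDiff_const

theorem contDiff_iterate_dirDeriv (v : E) {F : E → ℂ} (hF : ContDiff ℝ ∞ F) (k : ℕ) :
    ContDiff ℝ ∞ ((dirDeriv v)^[k] F) := by
  induction k with
  | zero => exact hF
  | succ k ih => rw [Function.iterate_succ_apply']; exact contDiff_dirDeriv v ih

theorem hasLineDerivAt_dirDeriv (v : E) {F : E → ℂ} (hF : ContDiff ℝ ∞ F) (x : E) :
    HasLineDerivAt ℝ F (dirDeriv v F x) x v :=
  ((hF.differentiable (by simp) x).hasFDerivAt).hasLineDerivAt v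

theorem dirDeriv_eq_of_hasLineDerivAt {v : E} {F F' : E → ℂ} (hF : ContDiff ℝ ∞ F)
    (h : ∀ x, HasLineDerivAt ℝ F (F' x) x v) : dirDeriv v F = F' :=
  funext fun x => (hasLineDerivAt_dirDeriv v hF x).lineDeriv.symm.trans (h x).lineDeriv

theorem dirDeriv_add (v : E) {F G : E → ℂ} (hF : ContDiff ℝ ∞ F) (hG : ContDiff ℝ ∞ G) :
    dirDeriv v (fun x => F x + G x) = fun x => dirDeriv v F x + dirDeriv v G x := by
  ext x
  rw [dirDeriv, fderiv_fun_add (hF.differentiable (by simp) x) (hG.differentiable (by simp) x)]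
  rfl

theorem dirDeriv_mul (v : E) {F G : E → ℂ} (hF : ContDiff ℝ ∞ F) (hG : ContDiff ℝ ∞ G) :
    dirDeriv v (fun x => F x * G x) = fun x => dirDeriv v F x * G x + F x * dirDeriv v G x := by
  ext x
  rw [dirDeriv, fderiv_fun_mul (hF.differentiable (by simp) x) (hG.differentiable (by simp) x)]
  simp only [dirDeriv, add_apply, smul_apply, smul_eq_mul]
  ring

theorem iterate_dirDeriv_add (v : E) (k : ℕ) {F G : E → ℂ} (hF : ContDiff ℝ ∞ F)
    (hG : ContDiff ℝ ∞ G) :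
    (dirDeriv v)^[k] (fun x => F x + G x)
      = fun x => (dirDeriv v)^[k] F x + (dirDeriv v)^[k] G x := by
  induction k generalizing F G with
  | zero => rfl
  | succ k ih =>
    rw [Function.iterate_succ_apply, dirDeriv_add v hF hG,
      ih (contDiff_dirDeriv v hF) (contDiff_dirDeriv v hG)]
    rfl

theorem dirDeriv_const_mul (v : E) (c : ℂ) {F : E → ℂ} (hF : ContDiff ℝ ∞ F) :
    dirDeriv v (fun x => c * F x) = fun x => c * dirDeriv v F x := by
  rw [dirDeriv_mul v contDiff_const hF]
  simp [dirDeriv]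

theorem iterate_dirDeriv_const_mul (v : E) (k : ℕ) (c : ℂ) {F : E → ℂ} (hF : ContDiff ℝ ∞ F) :
    (dirDeriv v)^[k] (fun x => c * F x) = fun x => c * (dirDeriv v)^[k] F x := by
  induction k generalizing F with
  | zero => rfl
  | succ k ih =>
    rw [Function.iterate_succ_apply, dirDeriv_const_mul v c hF, ih (contDiff_dirDeriv v hF)]
    rfl

theorem tsupport_iterate_dirDeriv_subset (v : E) (k : ℕ) (F : E → ℂ) :
    tsupport ((dirDeriv v)^[k] F) ⊆ tsupport F := by
  induction k with
  | zero => exact subset_rfl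
  | succ k ih =>
    rw [Function.iterate_succ_apply']
    exact (tsupport_fderiv_apply_subset ℝ v).trans ih

theorem pow_mul_norm_dirDeriv_iterate_le_div {v : E} {k : ℕ} {s A : ℝ} (hs : 0 < s) {x : E}
    {F : E → ℂ} (hA : ∀ j ≤ k + 1, s ^ j * ‖(dirDeriv v)^[j] F x‖ ≤ A) :
    ∀ j ≤ k, s ^ j * ‖(dirDeriv v)^[j] (dirDeriv v F) x‖ ≤ A / s := by
  intro j hj
  rw [le_div_iff₀ hs]
  calc s ^ j * ‖(dirDeriv v)^[j] (dirDeriv v F) x‖ * s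
      = s ^ (j + 1) * ‖(dirDeriv v)^[j + 1] F x‖ := by rw [Function.iterate_succ_apply]; ring
    _ ≤ A := hA (j + 1) (by omega)

theorem pow_mul_norm_iterate_dirDeriv_mul_le (v : E) (k : ℕ) {s A B : ℝ} (hs : 0 < s) (x : E)
    {F G : E → ℂ} (hF : ContDiff ℝ ∞ F) (hG : ContDiff ℝ ∞ G)
    (hA : ∀ j ≤ k, s ^ j * ‖(dirDeriv v)^[j] F x‖ ≤ A)
    (hB : ∀ j ≤ k, s ^ j * ‖(dirDeriv v)^[j] G x‖ ≤ B) :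
    s ^ k * ‖(dirDeriv v)^[k] (fun y => F y * G y) x‖ ≤ 2 ^ k * A * B := by
  induction k generalizing F G A B with
  | zero =>
    have a := hA 0 le_rfl
    have b := hB 0 le_rfl
    simp only [pow_zero, one_mul, Function.iterate_zero, id, norm_mul] at *
    exact mul_le_mul a b (norm_nonneg _) ((norm_nonneg _).trans a)
  | succ k ih =>
    have hF' := contDiff_dirDeriv v hF
    have hG' := contDiff_dirDeriv v hG
    rw [Function.iterate_succ_apply, dirDeriv_mul v hF hG,
      iterate_dirDeriv_add v k (hF'.mul hG) (hF.mul hG')]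
    have hleft := ih hF' hG (pow_mul_norm_dirDeriv_iterate_le_div hs hA)
      fun j hj => hB j (by omega)
    have hright := ih hF hG' (fun j hj => hA j (by omega))
      (pow_mul_norm_dirDeriv_iterate_le_div hs hB)
    set P := (dirDeriv v)^[k] (fun y => dirDeriv v F y * G y) x
    set Q := (dirDeriv v)^[k] (fun y => F y * dirDeriv v G y) x
    calc s ^ (k + 1) * ‖P + Q‖ ≤ s ^ (k + 1) * (‖P‖ + ‖Q‖) := by gcongr; exact norm_add_le _ _
      _ = s * (s ^ k * ‖P‖) + s * (s ^ k * ‖Q‖) := by ring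
      _ ≤ s * (2 ^ k * (A / s) * B) + s * (2 ^ k * A * (B / s)) := by gcongr
      _ = 2 ^ (k + 1) * A * B := by field_simp; ring

theorem dirDeriv_comm (v w : E) {F : E → ℂ} (hF : ContDiff ℝ ∞ F) :
    dirDeriv v (dirDeriv w F) = dirDeriv w (dirDeriv v F) := by
  have hsecond (u u' : E) (x : E) :
      dirDeriv u (dirDeriv u' F) x = fderiv ℝ (fderiv ℝ F) x u u' := by
    have hd : DifferentiableAt ℝ (fderiv ℝ F) x :=
      (hF.fderiv_right (m := ∞) (by simp)).differentiable (by simp) x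
    change fderiv ℝ (fun y => fderiv ℝ F y u') x u = _
    rw [fderiv_clm_apply hd (differentiableAt_const u')]
    simp
  ext x
  have hsymm : IsSymmSndFDerivAt ℝ F x := hF.contDiffAt.isSymmSndFDerivAt
    (by simpa using ENat.LEInfty.out)
  rw [hsecond, hsecond, hsymm.eq]

theorem iterate_dirDeriv_comm (v w : E) (k l : ℕ) {F : E → ℂ} (hF : ContDiff ℝ ∞ F) :
    (dirDeriv v)^[k] ((dirDeriv w)^[l] F) = (dirDeriv w)^[l] ((dirDeriv v)^[k] F) := by
  have hone (l : ℕ) {G : E → ℂ} (hG : ContDiff ℝ ∞ G) :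
      dirDeriv v ((dirDeriv w)^[l] G) = (dirDeriv w)^[l] (dirDeriv v G) := by
    induction l with
    | zero => rfl
    | succ l ih =>
      rw [Function.iterate_succ_apply', Function.iterate_succ_apply',
        dirDeriv_comm v w (contDiff_iterate_dirDeriv w hG l), ih]
  induction k with
  | zero => rfl
  | succ k ih =>
    rw [Function.iterate_succ_apply', ih, hone l (contDiff_iterate_dirDeriv v hF k),
      Function.iterate_succ_apply']

theorem iterate_dirDeriv_prodMk_right {E' : Type*} [NormedAddCommGroup E'] [NormedSpace ℝ E']
    (v : E') (k : ℕ) {F : E × E' → ℂ} (hF : ContDiff ℝ ∞ F) (x : E) :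
    (dirDeriv v)^[k] (fun y => F (x, y)) = fun y => (dirDeriv (0, v))^[k] F (x, y) := by
  induction k with
  | zero => rfl
  | succ k ih =>
    rw [Function.iterate_succ_apply', ih, Function.iterate_succ_apply']
    refine dirDeriv_eq_of_hasLineDerivAt
      ((contDiff_iterate_dirDeriv _ hF k).comp (by fun_prop)) fun y => ?_
    simpa [HasLineDerivAt] using
      hasLineDerivAt_dirDeriv ((0 : E), v) (contDiff_iterate_dirDeriv _ hF k) (x, y)

theorem iterate_dirDeriv_prodMk_left {E' : Type*} [NormedAddCommGroup E'] [NormedSpace ℝ E']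
    (v : E) (k : ℕ) {F : E × E' → ℂ} (hF : ContDiff ℝ ∞ F) (y : E') :
    (dirDeriv v)^[k] (fun x => F (x, y)) = fun x => (dirDeriv (v, 0))^[k] F (x, y) := by
  induction k with
  | zero => rfl
  | succ k ih =>
    rw [Function.iterate_succ_apply', ih, Function.iterate_succ_apply']
    refine dirDeriv_eq_of_hasLineDerivAt
      ((contDiff_iterate_dirDeriv _ hF k).comp (by fun_prop)) fun x => ?_
    simpa [HasLineDerivAt] using
      hasLineDerivAt_dirDeriv (v, (0 : E')) (contDiff_iterate_dirDeriv _ hF k) (x, y)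

theorem norm_sub_le_of_norm_dirDeriv_le {F : (Fin n → ℝ) → ℂ} (hF : ContDiff ℝ ∞ F)
    {S : Set (Fin n → ℝ)} (hS : Convex ℝ S) {A : ℝ} (hA0 : 0 ≤ A)
    (hA : ∀ i, ∀ t ∈ S, ‖dirDeriv (Pi.single i 1) F t‖ ≤ A) {x y : Fin n → ℝ}
    (hx : x ∈ S) (hy : y ∈ S) : ‖F y - F x‖ ≤ n * A * ‖y - x‖ := by
  refine hS.norm_image_sub_le_of_norm_fderiv_le (𝕜 := ℝ)
    (fun t _ => hF.differentiable (by simp) t) (fun t ht => ?_) hx hy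
  refine ContinuousLinearMap.opNorm_le_bound _ (by positivity) fun v => ?_
  calc ‖fderiv ℝ F t v‖ = ‖∑ i, (v i : ℂ) * dirDeriv (Pi.single i 1) F t‖ := by
        conv_lhs => rw [pi_eq_sum_univ' v, map_sum]
        simp [dirDeriv]
    _ ≤ ∑ i, ‖(v i : ℂ) * dirDeriv (Pi.single i 1) F t‖ := norm_sum_le _ _
    _ ≤ ∑ _i : Fin n, ‖v‖ * A := by
        refine Finset.sum_le_sum fun i _ => ?_
        rw [norm_mul, Complex.norm_real]
        exact mul_le_mul (norm_le_pi_norm v i) (hA i t ht) (norm_nonneg _) (norm_nonneg _)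
    _ = n * A * ‖v‖ := by simp; ring

end DirectionalDerivatives

section KernelDecay

theorem hasDerivAt_expi_add_mul (s d : ℝ) :
    HasDerivAt (fun t : ℝ => expi (s + t * d)) (2 * Real.pi * I * d * expi s) 0 := by
  have h := ((((hasDerivAt_id (0 : ℝ)).mul_const d).const_add s).ofReal_comp.const_mul
    (2 * (Real.pi : ℂ) * I)).cexp
  simp only [id, zero_mul, add_zero, one_mul] at h
  exact h.congr_deriv (by rw [expi]; ring)

theorem hasLineDerivAt_expi_dotp (z ξ v : Fin n → ℝ) :
    HasLineDerivAt ℝ (fun η => expi (dotp z η)) (2 * Real.pi * I * dotp z v * expi (dotp z ξ))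
      ξ v := by
  simpa [HasLineDerivAt, dotp_add_right, dotp_smul_right] using
    hasDerivAt_expi_add_mul (dotp z ξ) (dotp z v)

theorem IFT_dirDeriv (v : Fin n → ℝ) {b : (Fin n → ℝ) → ℂ} (hb : ContDiff ℝ ∞ b)
    (hc : HasCompactSupport b) (z : Fin n → ℝ) :
    IFT (dirDeriv v b) z = -(2 * Real.pi * I * dotp z v) * IFT b z := by
  have hc' : HasCompactSupport (dirDeriv v b) := hc.fderiv_apply (𝕜 := ℝ) v
  have hcont := (contDiff_dirDeriv v hb).continuous
  have hcont' := hb.continuous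
  have hint {F : (Fin n → ℝ) → ℂ} (hF : HasCompactSupport F) (hF' : Continuous F) :
      Integrable F := hF'.integrable_of_hasCompactSupport hF
  have parts := integral_bilinear_hasLineDerivAt_right_eq_neg_left_of_integrable
    (μ := (volume : Measure (Fin n → ℝ))) (B := ContinuousLinearMap.mul ℝ ℂ)
    (hint hc.mul_left (by fun_prop))
    (hint hc'.mul_left (by fun_prop))
    (hint hc.mul_left (by fun_prop))
    (fun ξ _ => hasLineDerivAt_expi_dotp z ξ v) (fun ξ _ => hasLineDerivAt_dirDeriv v hb ξ)
  simp only [ContinuousLinearMap.mul_apply'] at parts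
  rw [IFT, IFT, parts, ← integral_const_mul, ← integral_neg]
  exact integral_congr_ae (.of_forall fun ξ => by ring)

theorem hasCompactSupport_of_tsupport_subset_closedBall {b : (Fin n → ℝ) → ℂ} {ζ : Fin n → ℝ}
    {s : ℝ} (hb : tsupport b ⊆ closedBall ζ s) : HasCompactSupport b :=
  (isCompact_closedBall ζ s).of_isClosed_subset (isClosed_tsupport b) hb

theorem IFT_iterate_dirDeriv (v : Fin n → ℝ) {b : (Fin n → ℝ) → ℂ} (hb : ContDiff ℝ ∞ b)
    (hc : HasCompactSupport b) (z : Fin n → ℝ) (k : ℕ) :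
    IFT ((dirDeriv v)^[k] b) z = (-(2 * Real.pi * I * dotp z v)) ^ k * IFT b z := by
  induction k with
  | zero => simp
  | succ k ih =>
    have hck : HasCompactSupport ((dirDeriv v)^[k] b) :=
      hc.mono' ((subset_tsupport _).trans (tsupport_iterate_dirDeriv_subset v k b))
    rw [Function.iterate_succ_apply', IFT_dirDeriv v (contDiff_iterate_dirDeriv v hb k) hck, ih]
    ring

theorem norm_IFT_le_of_tsupport_subset {b : (Fin n → ℝ) → ℂ} {ζ : Fin n → ℝ} {s A : ℝ}
    (hs : 0 ≤ s) (hb : tsupport b ⊆ closedBall ζ s) (hA : ∀ ξ ∈ closedBall ζ s, ‖b ξ‖ ≤ A)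
    (z : Fin n → ℝ) : ‖IFT b z‖ ≤ (2 * s) ^ n * A := by
  have hvol : (volume : Measure (Fin n → ℝ)) (closedBall ζ s) = ENNReal.ofReal ((2 * s) ^ n) := by
    rw [Real.volume_pi_closedBall _ hs]; simp
  have hrestrict : IFT b z = ∫ ξ in closedBall ζ s, expi (dotp z ξ) * b ξ := by
    rw [IFT, setIntegral_eq_integral_of_forall_compl_eq_zero]
    intro ξ hξ
    rw [image_eq_zero_of_notMem_tsupport fun h => hξ (hb h), mul_zero]
  rw [hrestrict]
  refine (norm_setIntegral_le_of_norm_le_const (C := A) (by rw [hvol]; exact ENNReal.ofReal_lt_top)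
    fun ξ hξ => ?_).trans_eq ?_
  · rw [norm_mul, norm_expi, one_mul]; exact hA ξ hξ
  · rw [Measure.real, hvol, ENNReal.toReal_ofReal (by positivity), mul_comm]

theorem exists_abs_apply_eq_norm [NeZero n] (z : Fin n → ℝ) : ∃ i, |z i| = ‖z‖ := by
  obtain ⟨i, hi⟩ := Finite.exists_max fun i => |z i|
  exact ⟨i, le_antisymm (norm_le_pi_norm z i)
    ((pi_norm_le_iff_of_nonneg (abs_nonneg _)).2 fun j => hi j)⟩

theorem pow_mul_norm_IFT_le {b : (Fin n → ℝ) → ℂ} (hb : ContDiff ℝ ∞ b) {ζ : Fin n → ℝ}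
    {s A : ℝ} (hs : 0 < s) (hsupp : tsupport b ⊆ closedBall ζ s) (k : ℕ) (i : Fin n)
    (hA : ∀ ξ ∈ closedBall ζ s, s ^ k * ‖(dirDeriv (Pi.single i 1))^[k] b ξ‖ ≤ A)
    (z : Fin n → ℝ) : (s * |z i|) ^ k * ‖IFT b z‖ ≤ (2 * s) ^ n * A := by
  have hpi : (1 : ℝ) ≤ 2 * Real.pi := by linarith [Real.pi_gt_three]
  have hderiv := norm_IFT_le_of_tsupport_subset hs.le
    ((tsupport_iterate_dirDeriv_subset (Pi.single i 1) k b).trans hsupp)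
    (fun ξ hξ => (le_div_iff₀' (by positivity)).2 (hA ξ hξ)) z
  rw [IFT_iterate_dirDeriv _ hb (hasCompactSupport_of_tsupport_subset_closedBall hsupp),
    dotp_single, norm_mul, norm_pow] at hderiv
  have hnorm : ‖-(2 * Real.pi * I * ((z i * 1 : ℝ) : ℂ))‖ = 2 * Real.pi * |z i| := by
    simp [abs_of_pos Real.pi_pos]
  rw [hnorm] at hderiv
  calc (s * |z i|) ^ k * ‖IFT b z‖ = s ^ k * (|z i| ^ k * ‖IFT b z‖) := by rw [mul_pow]; ring
    _ ≤ s ^ k * ((2 * Real.pi * |z i|) ^ k * ‖IFT b z‖) := by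
        gcongr; exact le_mul_of_one_le_left (abs_nonneg _) hpi
    _ ≤ s ^ k * ((2 * s) ^ n * (A / s ^ k)) := by gcongr
    _ = (2 * s) ^ n * A := by field_simp

theorem norm_IFT_le_div_of_norm_iterate_dirDeriv_le [NeZero n] {b : (Fin n → ℝ) → ℂ}
    (hb : ContDiff ℝ ∞ b) {ζ : Fin n → ℝ} {s A : ℝ} (hs : 0 < s)
    (hsupp : tsupport b ⊆ closedBall ζ s) (k : ℕ)
    (hA : ∀ i, ∀ j ≤ k, ∀ ξ ∈ closedBall ζ s,
      s ^ j * ‖(dirDeriv (Pi.single i 1))^[j] b ξ‖ ≤ A) (z : Fin n → ℝ) :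
    ‖IFT b z‖ ≤ 2 ^ (k + n) * A * (s ^ n / (1 + s * ‖z‖) ^ k) := by
  suffices h : (1 + s * ‖z‖) ^ k * ‖IFT b z‖ ≤ 2 ^ k * ((2 * s) ^ n * A) by
    rw [← mul_div_assoc, le_div_iff₀' (by positivity)]
    exact h.trans_eq (by rw [mul_pow, pow_add]; ring)
  rcases le_total (s * ‖z‖) 1 with hsmall | hlarge
  · have h0 := norm_IFT_le_of_tsupport_subset hs.le hsupp
      (fun ξ hξ => by simpa using hA 0 0 (by omega) ξ hξ) z
    gcongr
    linarith
  · obtain ⟨i, hi⟩ := exists_abs_apply_eq_norm z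
    have hk := pow_mul_norm_IFT_le hb hs hsupp k i (hA i k le_rfl) z
    rw [hi] at hk
    calc (1 + s * ‖z‖) ^ k * ‖IFT b z‖ ≤ (2 * (s * ‖z‖)) ^ k * ‖IFT b z‖ := by
          gcongr; linarith
      _ = 2 ^ k * ((s * ‖z‖) ^ k * ‖IFT b z‖) := by rw [mul_pow]; ring
      _ ≤ 2 ^ k * ((2 * s) ^ n * A) := by gcongr

end KernelDecay

section KernelForms

/-- The sesquilinear form `⟨T w, v⟩` of the operator `T w(x) = ∫ K(x, z) w(x - z) dz`. -/
def kernelForm (K : (Fin n → ℝ) → (Fin n → ℝ) → ℂ) (w v : (Fin n → ℝ) → ℂ) : ℂ :=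
  ∫ z, ∫ x, K x z * w (x - z) * conj (v x)

/-- A continuous kernel `K(x, z)` dominated, uniformly in `x`, by an integrable function of `z`;
such kernels define bounded operators on `L²`. -/
structure IsDominatedKernel (K : (Fin n → ℝ) → (Fin n → ℝ) → ℂ) (H : (Fin n → ℝ) → ℝ) : Prop where
  continuous : Continuous fun p : (Fin n → ℝ) × (Fin n → ℝ) => K p.1 p.2
  integrable : Integrable H
  norm_le : ∀ x z, ‖K x z‖ ≤ H z

variable {K K' : (Fin n → ℝ) → (Fin n → ℝ) → ℂ} {H H' : (Fin n → ℝ) → ℝ}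
  {w v v' : (Fin n → ℝ) → ℂ}

theorem norm_kernelForm_le_of_forall {B : ℝ} (hH : Integrable H)
    (h : ∀ z, ‖∫ x, K x z * w (x - z) * conj (v x)‖ ≤ H z * B) :
    ‖kernelForm K w v‖ ≤ (∫ z, H z) * B := by
  rw [← integral_mul_const]
  exact norm_integral_le_of_norm_le (hH.mul_const B) (.of_forall h)

theorem integrable_norm_comp_sub_mul_norm (hw : MemLp w 2) (hv : MemLp v 2) (z : Fin n → ℝ) :
    Integrable fun x => ‖w (x - z)‖ * ‖v x‖ :=
  integrable_norm_mul_norm (w := fun x => w (x - z))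
    (hw.comp_measurePreserving (measurePreserving_sub_right volume z)) hv

theorem integral_norm_comp_sub_mul_norm_le (hw : MemLp w 2) (hv : MemLp v 2) (z : Fin n → ℝ) :
    ∫ x, ‖w (x - z)‖ * ‖v x‖ ≤ l2norm w * l2norm v := by
  rw [← l2norm_comp_sub_right w z]
  exact integral_norm_mul_norm_le_l2norm_mul (w := fun x => w (x - z))
    (hw.comp_measurePreserving (measurePreserving_sub_right volume z)) hv

namespace IsDominatedKernel

theorem nonneg (hK : IsDominatedKernel K H) (z : Fin n → ℝ) : 0 ≤ H z :=
  (norm_nonneg _).trans (hK.norm_le 0 z)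

theorem norm_mul_mul_conj_le (hK : IsDominatedKernel K H) (x z : Fin n → ℝ) :
    ‖K x z * w (x - z) * conj (v x)‖ ≤ H z * (‖w (x - z)‖ * ‖v x‖) := by
  rw [norm_mul, norm_mul, RCLike.norm_conj, mul_assoc]
  gcongr
  exact hK.norm_le x z

theorem integral_norm_slice_le (hK : IsDominatedKernel K H) (hw : MemLp w 2) (hv : MemLp v 2)
    (z : Fin n → ℝ) :
    ∫ x, ‖K x z * w (x - z) * conj (v x)‖ ≤ H z * (l2norm w * l2norm v) := by
  refine (integral_mono_of_nonneg (.of_forall fun _ => norm_nonneg _)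
    ((integrable_norm_comp_sub_mul_norm hw hv z).const_mul (H z))
    (.of_forall fun x => hK.norm_mul_mul_conj_le x z)).trans ?_
  rw [integral_const_mul]
  exact mul_le_mul_of_nonneg_left (integral_norm_comp_sub_mul_norm_le hw hv z) (hK.nonneg z)

theorem integrable_prod (hK : IsDominatedKernel K H) (hw : MemLp w 2) (hwc : Continuous w)
    (hv : MemLp v 2) (hvc : Continuous v) :
    Integrable (fun p : (Fin n → ℝ) × (Fin n → ℝ) => K p.1 p.2 * w (p.1 - p.2) * conj (v p.1))
      (volume.prod volume) := by
  have hc : Continuous fun p : (Fin n → ℝ) × (Fin n → ℝ) =>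
      K p.1 p.2 * w (p.1 - p.2) * conj (v p.1) :=
    (hK.continuous.mul (by fun_prop)).mul (continuous_conj.comp (by fun_prop))
  rw [integrable_prod_iff' hc.aestronglyMeasurable]
  refine ⟨.of_forall fun z => ?_, ?_⟩
  · exact ((integrable_norm_comp_sub_mul_norm hw hv z).const_mul (H z)).mono'
      (hc.comp (by fun_prop : Continuous fun x => (x, z))).aestronglyMeasurable
      (.of_forall fun x => hK.norm_mul_mul_conj_le x z)
  · refine (hK.integrable.mul_const (l2norm w * l2norm v)).mono'
      (hc.norm.aestronglyMeasurable.prod_swap (μ := volume) (ν := volume)).integral_prod_right'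
      (.of_forall fun z => ?_)
    rw [Real.norm_of_nonneg (integral_nonneg fun x => norm_nonneg _)]
    exact hK.integral_norm_slice_le hw hv z

theorem norm_kernelForm_le (hK : IsDominatedKernel K H) (hw : MemLp w 2) (hv : MemLp v 2) :
    ‖kernelForm K w v‖ ≤ (∫ z, H z) * (l2norm w * l2norm v) :=
  norm_kernelForm_le_of_forall hK.integrable fun z =>
    (norm_integral_le_integral_norm _).trans (hK.integral_norm_slice_le hw hv z)

theorem kernelForm_eq_integral_prod (hK : IsDominatedKernel K H) (hw : MemLp w 2)
    (hwc : Continuous w) (hv : MemLp v 2) (hvc : Continuous v) :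
    kernelForm K w v = ∫ p : (Fin n → ℝ) × (Fin n → ℝ),
      K p.1 p.2 * w (p.1 - p.2) * conj (v p.1) ∂(volume.prod volume) :=
  (integral_prod_symm _ (hK.integrable_prod hw hwc hv hvc)).symm

theorem kernelForm_swap (hK : IsDominatedKernel K H) (hw : MemLp w 2) (hwc : Continuous w)
    (hv : MemLp v 2) (hvc : Continuous v) :
    kernelForm K w v = ∫ x, (∫ z, K x z * w (x - z)) * conj (v x) := by
  rw [hK.kernelForm_eq_integral_prod hw hwc hv hvc,
    integral_prod _ (hK.integrable_prod hw hwc hv hvc)]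
  simp only [integral_mul_const]

theorem sub (hK : IsDominatedKernel K H) (hK' : IsDominatedKernel K' H') :
    IsDominatedKernel (fun x z => K x z - K' x z) fun z => H z + H' z where
  continuous := hK.continuous.sub hK'.continuous
  integrable := hK.integrable.add hK'.integrable
  norm_le x z := (norm_sub_le _ _).trans (add_le_add (hK.norm_le x z) (hK'.norm_le x z))

theorem kernelForm_sub (hK : IsDominatedKernel K H) (hK' : IsDominatedKernel K' H')
    (hw : MemLp w 2) (hwc : Continuous w) (hv : MemLp v 2) (hvc : Continuous v) :
    kernelForm (fun x z => K x z - K' x z) w v = kernelForm K w v - kernelForm K' w v := by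
  rw [hK.kernelForm_eq_integral_prod hw hwc hv hvc, hK'.kernelForm_eq_integral_prod hw hwc hv hvc,
    (hK.sub hK').kernelForm_eq_integral_prod hw hwc hv hvc,
    ← integral_sub (hK.integrable_prod hw hwc hv hvc) (hK'.integrable_prod hw hwc hv hvc)]
  simp only [sub_mul]

theorem kernelForm_add_right (hK : IsDominatedKernel K H) (hw : MemLp w 2) (hwc : Continuous w)
    (hv : MemLp v 2) (hvc : Continuous v) (hv' : MemLp v' 2) (hvc' : Continuous v') :
    kernelForm K w (fun x => v x + v' x) = kernelForm K w v + kernelForm K w v' := by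
  have hadd : MemLp (fun x => v x + v' x) 2 := hv.add hv'
  rw [hK.kernelForm_eq_integral_prod hw hwc hv hvc, hK.kernelForm_eq_integral_prod hw hwc hv' hvc',
    hK.kernelForm_eq_integral_prod hw hwc hadd (by fun_prop),
    ← integral_add (hK.integrable_prod hw hwc hv hvc) (hK.integrable_prod hw hwc hv' hvc')]
  simp only [map_add, mul_add]

end IsDominatedKernel

theorem integral_mul_IFT_sub {k G : (Fin n → ℝ) → ℂ} (hk : Integrable k) (hG : Integrable G)
    (x : Fin n → ℝ) : ∫ z, k z * IFT G (x - z) = IFT (fun ξ => FT k ξ * G ξ) x := by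
  have hI : Integrable (fun p : (Fin n → ℝ) × (Fin n → ℝ) =>
      k p.1 * (expi (dotp (x - p.1) p.2) * G p.2)) (volume.prod volume) := by
    refine (hk.mul_prod hG).norm.mono' ?_ (.of_forall fun p => by simp [norm_expi])
    exact hk.1.comp_fst.mul ((Continuous.aestronglyMeasurable (by fun_prop)).mul hG.1.comp_snd)
  calc ∫ z, k z * IFT G (x - z) = ∫ z, ∫ ξ, k z * (expi (dotp (x - z) ξ) * G ξ) := by
        simp only [IFT, integral_const_mul]
    _ = ∫ ξ, ∫ z, k z * (expi (dotp (x - z) ξ) * G ξ) := integral_integral_swap hI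
    _ = ∫ ξ, ∫ z, expi (dotp x ξ) * (k z * expi (-dotp z ξ) * G ξ) := by
        simp only [dotp_sub_left, sub_eq_add_neg (dotp x _), expi_add]
        congr! 4
        ring
    _ = IFT (fun ξ => FT k ξ * G ξ) x := by
        simp only [IFT, FT, integral_const_mul, integral_mul_const]

theorem integral_oscillatory_mul_conj_eq_kernelForm {b : (Fin n → ℝ) → (Fin n → ℝ) → ℂ}
    (hb : ∀ x, Continuous (b x)) (hbi : ∀ x, Integrable (b x))
    (hK : IsDominatedKernel (fun x => IFT (b x)) H) {G : (Fin n → ℝ) → ℂ} (hG : MemL1L2 G)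
    (hv : MemLp v 2) (hvc : Continuous v) :
    ∫ x, (∫ ξ, expi (dotp x ξ) * (b x ξ * G ξ)) * conj (v x)
      = kernelForm (fun x => IFT (b x)) (IFT G) v := by
  rw [hK.kernelForm_swap hG.memLp_IFT (continuous_IFT hG.integrable) hv hvc]
  refine integral_congr_ae (.of_forall fun x => ?_)
  have hi : Integrable (IFT (b x)) := hK.integrable.mono'
    (continuous_IFT (hbi x)).aestronglyMeasurable (.of_forall fun z => hK.norm_le x z)
  simp only
  rw [integral_mul_IFT_sub hi hG.integrable, FT_IFT (hb x) (hbi x) hi, IFT]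

theorem isDominatedKernel_mul {a : (Fin n → ℝ) → (Fin n → ℝ) → ℂ} {k : (Fin n → ℝ) → ℂ} {A : ℝ}
    (ha : Continuous fun p : (Fin n → ℝ) × (Fin n → ℝ) => a p.1 p.2) (hA : ∀ x z, ‖a x z‖ ≤ A)
    (hkc : Continuous k) (hk : Integrable k) :
    IsDominatedKernel (fun x z => a x z * k z) fun z => A * ‖k z‖ where
  continuous := by fun_prop
  integrable := hk.norm.const_mul A
  norm_le x z := by rw [norm_mul]; gcongr; exact hA x z

theorem kernelForm_comp_sub_mul_eq {a k h : (Fin n → ℝ) → ℂ} {A : ℝ} (ha : Continuous a)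
    (hA : ∀ x, ‖a x‖ ≤ A) (hkc : Continuous k) (hk : Integrable k)
    (hk_symm : ∀ z, conj (k (-z)) = k z) (hw : MemLp w 2) (hwc : Continuous w) (hh : MemL1L2 h) :
    kernelForm (fun x z => a (x - z) * k z) w (IFT h)
      = ∫ x, a x * w x * conj (IFT (fun ξ => FT k ξ * h ξ) x) := by
  have hdual : IsDominatedKernel (fun x z => conj (a x) * k z) fun z => A * ‖k z‖ :=
    isDominatedKernel_mul (continuous_conj.comp (by fun_prop)) (fun x _ => by simpa using hA x)
      hkc hk
  have hflip : kernelForm (fun x z => a (x - z) * k z) w (IFT h)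
      = conj (kernelForm (fun x z => conj (a x) * k z) (IFT h) w) := by
    rw [kernelForm, kernelForm, ← integral_conj, ← integral_neg_eq_self (fun z => ∫ x, _)]
    refine integral_congr_ae (.of_forall fun z => ?_)
    simp only
    rw [← integral_conj, ← integral_sub_right_eq_self (fun x => _) z]
    refine integral_congr_ae (.of_forall fun x => ?_)
    simp only [sub_neg_eq_add, sub_add_cancel, map_mul, Complex.conj_conj]
    rw [← hk_symm z, Complex.conj_conj]; ring
  rw [hflip, hdual.kernelForm_swap hh.memLp_IFT (continuous_IFT hh.integrable) hw hwc,
    ← integral_conj]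
  refine integral_congr_ae (.of_forall fun x => ?_)
  simp only [mul_assoc, integral_const_mul, integral_mul_IFT_sub hk hh.integrable, map_mul,
    Complex.conj_conj]
  ring

end KernelForms

section SpectralSeparation

theorem hasLineDerivAt_integral_expi_dotp {Y : Type*} [MeasurableSpace Y] {μ : Measure Y}
    {φ : Y → Fin n → ℝ} (hφ : Measurable φ) {G : Y → ℂ} (hG : Integrable G μ) {u : Fin n → ℝ}
    (hG' : Integrable (fun p => dotp u (φ p) * G p) μ) (x : Fin n → ℝ) :
    HasLineDerivAt ℝ (fun x => ∫ p, expi (dotp x (φ p)) * G p ∂μ)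
      (2 * Real.pi * I * ∫ p, expi (dotp x (φ p)) * (dotp u (φ p) * G p) ∂μ) x u := by
  have hexpi (y : Fin n → ℝ) : AEStronglyMeasurable (fun p => expi (dotp y (φ p))) μ :=
    ((by fun_prop : Continuous fun ξ => expi (dotp y ξ)).measurable.comp hφ).aestronglyMeasurable
  rw [← integral_const_mul]
  refine (hasDerivAt_integral_of_dominated_loc_of_deriv_le (x₀ := (0 : ℝ)) (s := univ)
    (F := fun t p => expi (dotp (x + t • u) (φ p)) * G p)
    (F' := fun t p => 2 * Real.pi * I * (expi (dotp (x + t • u) (φ p)) * (dotp u (φ p) * G p)))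
    (bound := fun p => 2 * Real.pi * ‖dotp u (φ p) * G p‖) univ_mem
    (.of_forall fun t => (hexpi _).mul hG.1) ?_ (((hexpi _).mul hG'.1).const_mul _)
    (.of_forall fun p t _ => ?_) (hG'.norm.const_mul _) (.of_forall fun p t _ => ?_)).2.congr_deriv
      (by simp)
  · exact hG.bdd_mul (c := 1) (hexpi _) (.of_forall fun p => (norm_expi _).le)
  · simp [norm_expi, abs_of_pos Real.pi_pos]
  · have h := (hasDerivAt_expi_add_mul (dotp (x + t • u) (φ p)) (dotp u (φ p))).mul_const (G p)
    have hshift : (fun r => expi (dotp (x + r • u) (φ p)) * G p) = fun r =>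
        expi (dotp (x + t • u) (φ p) + (r - t) * dotp u (φ p)) * G p := by
      ext r
      simp only [dotp_comm _ (φ p), dotp_add_right, dotp_smul_right]
      ring_nf
    rw [hshift]
    rw [← sub_self t] at h
    exact (h.comp_sub_const t t).congr_deriv (by ring)

/-- Exponential damping `e^{-tℓ} h` of `h` by a weight `ℓ`: dividing by a positive `ℓ` amounts to
integrating these over `t > 0`. -/
def damp (ℓ : (Fin n → ℝ) → ℝ) (t : ℝ) (h : (Fin n → ℝ) → ℂ) (ξ : Fin n → ℝ) : ℂ :=
  Real.exp (-(t * ℓ ξ)) * h ξ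

theorem norm_damp_le {ℓ : (Fin n → ℝ) → ℝ} {h : (Fin n → ℝ) → ℂ} {d t : ℝ}
    (hℓ : ∀ ξ, h ξ ≠ 0 → d ≤ ℓ ξ) (ht : 0 ≤ t) (ξ : Fin n → ℝ) :
    ‖damp ℓ t h ξ‖ ≤ Real.exp (-(t * d)) * ‖h ξ‖ := by
  rw [damp, norm_mul, norm_real, Real.norm_of_nonneg (Real.exp_pos _).le]
  by_cases h0 : h ξ = 0
  · simp [h0]
  · gcongr
    exact hℓ ξ h0

theorem damp_ne_zero {ℓ : (Fin n → ℝ) → ℝ} {h : (Fin n → ℝ) → ℂ} {t : ℝ} {ξ : Fin n → ℝ}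
    (hne : damp ℓ t h ξ ≠ 0) : h ξ ≠ 0 :=
  right_ne_zero_of_mul hne

theorem MemL1L2.damp {ℓ : (Fin n → ℝ) → ℝ} {h : (Fin n → ℝ) → ℂ} {d t : ℝ} (hh : MemL1L2 h)
    (hℓc : Continuous ℓ) (hℓ : ∀ ξ, h ξ ≠ 0 → d ≤ ℓ ξ) (ht : 0 ≤ t) : MemL1L2 (damp ℓ t h) :=
  hh.of_le_mul ((Continuous.aestronglyMeasurable (by fun_prop)).mul hh.integrable.1)
    (norm_damp_le hℓ ht)

theorem aestronglyMeasurable_IFT_damp {ℓ : (Fin n → ℝ) → ℝ} {h : (Fin n → ℝ) → ℂ}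
    (hh : Integrable h) (hℓ : Continuous ℓ) (μ : Measure ((Fin n → ℝ) × ℝ)) :
    AEStronglyMeasurable (fun p : (Fin n → ℝ) × ℝ => IFT (damp ℓ p.2 h) p.1) μ := by
  have hf : AEStronglyMeasurable (fun q : ((Fin n → ℝ) × ℝ) × (Fin n → ℝ) =>
      expi (dotp q.1.1 q.2) * (Real.exp (-(q.1.2 * ℓ q.2)) * h q.2)) (μ.prod volume) :=
    (Continuous.aestronglyMeasurable (by fun_prop)).mul
      ((Continuous.aestronglyMeasurable (by fun_prop)).mul hh.1.comp_snd)
  exact hf.integral_prod_right'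

theorem IFT_mul_conj_IFT (W U : (Fin n → ℝ) → ℂ) (x : Fin n → ℝ) :
    IFT W x * conj (IFT U x) = ∫ p : (Fin n → ℝ) × (Fin n → ℝ),
      expi (dotp x (p.1 - p.2)) * (W p.1 * conj (U p.2)) ∂(volume.prod volume) := by
  rw [IFT, IFT, ← integral_conj, ← integral_prod_mul]
  refine integral_congr_ae (.of_forall fun p => ?_)
  simp only [map_mul, conj_expi, dotp_comm x, dotp_sub_left]
  rw [sub_eq_add_neg, expi_add]
  ring

theorem norm_mul_mul_conj_eq (a b c : ℂ) : ‖a * (b * conj c)‖ = ‖a‖ * (‖b‖ * ‖c‖) := by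
  rw [norm_mul, norm_mul, RCLike.norm_conj]

theorem integrable_mul_IFT_mul_conj_IFT {a W U : (Fin n → ℝ) → ℂ} {A : ℝ} (ha : Continuous a)
    (hA : ∀ x, ‖a x‖ ≤ A) (hW : MemL1L2 W) (hU : MemL1L2 U) :
    Integrable fun x => a x * (IFT W x * conj (IFT U x)) := by
  have hWc := continuous_IFT hW.integrable
  have hUc := continuous_IFT hU.integrable
  refine ((integrable_norm_mul_norm hW.memLp_IFT hU.memLp_IFT).const_mul A).mono'
    (ha.mul (hWc.mul (continuous_conj.comp hUc))).aestronglyMeasurable (.of_forall fun x => ?_)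
  rw [norm_mul_mul_conj_eq]
  gcongr
  exact hA x

theorem integral_norm_mul_IFT_mul_conj_IFT_le {a W U : (Fin n → ℝ) → ℂ} {A : ℝ}
    (hA : ∀ x, ‖a x‖ ≤ A) (hW : MemL1L2 W) (hU : MemL1L2 U) :
    ∫ x, ‖a x * (IFT W x * conj (IFT U x))‖ ≤ A * (l2norm W * l2norm U) := by
  have hA0 : 0 ≤ A := (norm_nonneg _).trans (hA 0)
  simp only [norm_mul_mul_conj_eq]
  calc ∫ x, ‖a x‖ * (‖IFT W x‖ * ‖IFT U x‖) ≤ ∫ x, A * (‖IFT W x‖ * ‖IFT U x‖) :=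
        integral_mono_of_nonneg (.of_forall fun x => by positivity)
          ((integrable_norm_mul_norm hW.memLp_IFT hU.memLp_IFT).const_mul A)
          (.of_forall fun x => mul_le_mul_of_nonneg_right (hA x) (by positivity))
    _ ≤ A * (l2norm W * l2norm U) := by
        rw [integral_const_mul, ← l2norm_IFT hW, ← l2norm_IFT hU]
        gcongr
        exact integral_norm_mul_norm_le_l2norm_mul hW.memLp_IFT hU.memLp_IFT

theorem integrableOn_inv_sqrt_mul_exp {d : ℝ} (hd : 0 < d) :
    IntegrableOn (fun t => t ^ (1 / 2 - 1 : ℝ) * Real.exp (-(d / 2 * t))) (Ioi 0) := by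
  simpa using integrableOn_rpow_mul_exp_neg_mul_rpow (s := (1 / 2 - 1 : ℝ)) (p := 1)
    (b := d / 2) (by norm_num) one_pos (by positivity)

theorem integral_inv_sqrt_mul_exp {d : ℝ} (hd : 0 < d) :
    ∫ t in Ioi (0 : ℝ), t ^ (1 / 2 - 1 : ℝ) * Real.exp (-(d / 2 * t)) = √(2 * Real.pi) / √d := by
  rw [Real.integral_rpow_mul_exp_neg_mul_Ioi (by norm_num) (by positivity),
    Real.Gamma_one_half_eq, ← Real.sqrt_eq_rpow, ← Real.sqrt_mul (by positivity),
    ← Real.sqrt_div (by positivity)]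
  congr 1
  field_simp

/-- `W` and `U` are supported on opposite sides of the slab `0 < u · ξ - α < d`. -/
structure IsSlabSeparated (u : Fin n → ℝ) (α d : ℝ) (W U : (Fin n → ℝ) → ℂ) : Prop where
  memL1L2_left : MemL1L2 W
  memL1L2_right : MemL1L2 U
  pos : 0 < d
  left_le : ∀ ξ, W ξ ≠ 0 → 0 ≤ α - dotp u ξ
  le_right : ∀ η, U η ≠ 0 → d ≤ dotp u η - α

/-- The `u`-primitive of `-2πi · IFT W · conj (IFT U)`, by division on the Fourier side. -/
def slabPrimitive (u : Fin n → ℝ) (W U : (Fin n → ℝ) → ℂ) (x : Fin n → ℝ) : ℂ :=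
  ∫ p : (Fin n → ℝ) × (Fin n → ℝ), expi (dotp x (p.1 - p.2)) *
    (W p.1 * conj (U p.2) / (dotp u p.2 - dotp u p.1 : ℝ)) ∂(volume.prod volume)

namespace IsSlabSeparated

variable {u : Fin n → ℝ} {α d t : ℝ} {W U a : (Fin n → ℝ) → ℂ}

theorem damped (h : IsSlabSeparated u α d W U) (ht : 0 ≤ t) :
    IsSlabSeparated u α d (damp (fun ξ => α - dotp u ξ) t W)
      (damp (fun η => dotp u η - α) t U) where
  memL1L2_left := h.memL1L2_left.damp (by fun_prop) h.left_le ht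
  memL1L2_right := h.memL1L2_right.damp (by fun_prop) h.le_right ht
  pos := h.pos
  left_le _ hξ := h.left_le _ (damp_ne_zero hξ)
  le_right _ hη := h.le_right _ (damp_ne_zero hη)

theorem le_sub (h : IsSlabSeparated u α d W U) {ξ η : Fin n → ℝ}
    (hne : W ξ * conj (U η) ≠ 0) : d ≤ dotp u η - dotp u ξ := by
  have hU : U η ≠ 0 := by simpa using right_ne_zero_of_mul hne
  linarith [h.left_le ξ (left_ne_zero_of_mul hne), h.le_right η hU]

theorem integrable_mul_conj (h : IsSlabSeparated u α d W U) :
    Integrable (fun p : (Fin n → ℝ) × (Fin n → ℝ) => W p.1 * conj (U p.2))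
      (volume.prod volume) :=
  h.memL1L2_left.integrable.mul_prod (conjCLE.toContinuousLinearMap.integrable_comp
    h.memL1L2_right.integrable)

theorem integrable_mul_conj_div (h : IsSlabSeparated u α d W U) :
    Integrable (fun p : (Fin n → ℝ) × (Fin n → ℝ) =>
      W p.1 * conj (U p.2) / (dotp u p.2 - dotp u p.1 : ℝ)) (volume.prod volume) := by
  refine (h.integrable_mul_conj.norm.mul_const d⁻¹).mono' ?_ (.of_forall fun p => ?_)
  · have hm : Measurable fun p : (Fin n → ℝ) × (Fin n → ℝ) =>
        ((dotp u p.2 - dotp u p.1 : ℝ) : ℂ)⁻¹ := by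
      have : Continuous fun p : (Fin n → ℝ) × (Fin n → ℝ) => dotp u p.2 - dotp u p.1 := by fun_prop
      exact (measurable_ofReal.comp this.measurable).inv
    simp only [div_eq_mul_inv]
    exact h.integrable_mul_conj.1.mul hm.aestronglyMeasurable
  · by_cases hne : W p.1 * conj (U p.2) = 0
    · simp [hne]
    · have hd := h.pos
      have hle := h.le_sub hne
      rw [norm_div, norm_real, Real.norm_of_nonneg (hd.le.trans hle), div_eq_mul_inv]
      gcongr

theorem hasLineDerivAt_slabPrimitive (h : IsSlabSeparated u α d W U) (x : Fin n → ℝ) :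
    HasLineDerivAt ℝ (slabPrimitive u W U)
      (-(2 * Real.pi * I) * (IFT W x * conj (IFT U x))) x u := by
  have hcancel (p : (Fin n → ℝ) × (Fin n → ℝ)) : (dotp u (p.1 - p.2) : ℂ) *
      (W p.1 * conj (U p.2) / (dotp u p.2 - dotp u p.1 : ℝ)) = -(W p.1 * conj (U p.2)) := by
    by_cases hne : W p.1 * conj (U p.2) = 0
    · simp [hne]
    · have hpos : ((dotp u p.2 - dotp u p.1 : ℝ) : ℂ) ≠ 0 :=
        ofReal_ne_zero.2 (h.pos.trans_le (h.le_sub hne)).ne'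
      have hneg : dotp u (p.1 - p.2) = -(dotp u p.2 - dotp u p.1) := by
        rw [dotp_comm, dotp_sub_left, dotp_comm p.1, dotp_comm p.2]; ring
      rw [hneg, ofReal_neg, neg_mul, mul_div_cancel₀ _ hpos]
  have hderiv := hasLineDerivAt_integral_expi_dotp (φ := fun p : (Fin n → ℝ) × (Fin n → ℝ) =>
    p.1 - p.2) (by fun_prop) h.integrable_mul_conj_div (u := u)
    (h.integrable_mul_conj.neg.congr (.of_forall fun p => (hcancel p).symm)) x
  simp only [hcancel, mul_neg, integral_neg, ← IFT_mul_conj_IFT] at hderiv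
  rwa [neg_mul]

theorem damp_mul_conj_damp (W U : (Fin n → ℝ) → ℂ) (ξ η : Fin n → ℝ) :
    damp (fun ξ => α - dotp u ξ) t W ξ * conj (damp (fun η => dotp u η - α) t U η)
      = Real.exp (-(t * (dotp u η - dotp u ξ))) * (W ξ * conj (U η)) := by
  have hexp : -(t * (dotp u η - dotp u ξ)) = -(t * (α - dotp u ξ)) + -(t * (dotp u η - α)) := by
    ring
  rw [hexp, Real.exp_add]
  simp only [damp, map_mul, conj_ofReal, ofReal_mul]
  ring

theorem norm_exp_mul_mul_conj_le (h : IsSlabSeparated u α d W U) (ht : 0 ≤ t)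
    (ξ η : Fin n → ℝ) :
    ‖Real.exp (-(t * (dotp u η - dotp u ξ))) * (W ξ * conj (U η))‖
      ≤ Real.exp (-d * t) * ‖W ξ * conj (U η)‖ := by
  by_cases hne : W ξ * conj (U η) = 0
  · simp [hne]
  · rw [norm_mul, norm_real, Real.norm_of_nonneg (Real.exp_pos _).le, neg_mul, mul_comm d]
    gcongr
    exact h.le_sub hne

theorem slabPrimitive_eq_integral (h : IsSlabSeparated u α d W U) (x : Fin n → ℝ) :
    slabPrimitive u W U x = ∫ t in Ioi (0 : ℝ), IFT (damp (fun ξ => α - dotp u ξ) t W) x *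
      conj (IFT (damp (fun η => dotp u η - α) t U) x) := by
  simp only [IFT_mul_conj_IFT, damp_mul_conj_damp]
  have hint : Integrable (fun q : ℝ × (Fin n → ℝ) × (Fin n → ℝ) => expi (dotp x (q.2.1 - q.2.2)) *
      (Real.exp (-(q.1 * (dotp u q.2.2 - dotp u q.2.1))) * (W q.2.1 * conj (U q.2.2))))
      ((volume.restrict (Ioi 0)).prod (volume.prod volume)) := by
    have hd : IntegrableOn (fun t => Real.exp (-d * t)) (Ioi 0) :=
      integrableOn_exp_mul_Ioi (neg_neg_of_pos h.pos) 0
    refine (hd.mul_prod h.integrable_mul_conj.norm).mono' ?_ ?_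
    · exact (Continuous.aestronglyMeasurable (by fun_prop)).mul
        ((Continuous.aestronglyMeasurable (by fun_prop)).mul h.integrable_mul_conj.1.comp_snd)
    · filter_upwards [Measure.quasiMeasurePreserving_fst.ae (ae_restrict_mem measurableSet_Ioi)]
        with q hq
      rw [norm_mul, norm_expi, one_mul]
      exact h.norm_exp_mul_mul_conj_le (mem_Ioi.1 hq).le _ _
  rw [integral_integral_swap hint, slabPrimitive]
  refine integral_congr_ae (.of_forall fun p => ?_)
  simp only [integral_const_mul, integral_mul_const]
  by_cases hne : W p.1 * conj (U p.2) = 0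
  · simp [hne]
  · have hpos := h.pos.trans_le (h.le_sub hne)
    have hexp : ∫ t in Ioi (0 : ℝ), Real.exp (-(t * (dotp u p.2 - dotp u p.1)))
        = (dotp u p.2 - dotp u p.1)⁻¹ := by
      set s := dotp u p.2 - dotp u p.1
      simpa [mul_comm, neg_div_neg_eq] using integral_exp_mul_Ioi (neg_neg_of_pos hpos) 0
    rw [integral_complex_ofReal, hexp, div_eq_inv_mul, ofReal_inv]

theorem integrable_prod_mul_damp {A : ℝ} (h : IsSlabSeparated u α d W U) (ha : Continuous a)
    (hA : ∀ x, ‖a x‖ ≤ A) :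
    Integrable (fun p : (Fin n → ℝ) × ℝ => a p.1 * (IFT (damp (fun ξ => α - dotp u ξ) p.2 W) p.1 *
      conj (IFT (damp (fun η => dotp u η - α) p.2 U) p.1)))
      (volume.prod (volume.restrict (Ioi 0))) := by
  have hA0 : 0 ≤ A := (norm_nonneg _).trans (hA 0)
  have hm : AEStronglyMeasurable (fun p : (Fin n → ℝ) × ℝ =>
      a p.1 * (IFT (damp (fun ξ => α - dotp u ξ) p.2 W) p.1 *
        conj (IFT (damp (fun η => dotp u η - α) p.2 U) p.1)))
      (volume.prod (volume.restrict (Ioi 0))) :=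
    (Continuous.aestronglyMeasurable (by fun_prop)).mul
      ((aestronglyMeasurable_IFT_damp h.memL1L2_left.integrable (by fun_prop) _).mul
        (continuous_conj.comp_aestronglyMeasurable
          (aestronglyMeasurable_IFT_damp h.memL1L2_right.integrable (by fun_prop) _)))
  rw [integrable_prod_iff' hm]
  constructor
  · filter_upwards [ae_restrict_mem measurableSet_Ioi] with t ht
    have hd := h.damped (mem_Ioi.1 ht).le
    exact integrable_mul_IFT_mul_conj_IFT ha hA hd.memL1L2_left hd.memL1L2_right
  · have hexp : IntegrableOn (fun t => Real.exp (-d * t)) (Ioi 0) :=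
      integrableOn_exp_mul_Ioi (neg_neg_of_pos h.pos) 0
    refine (hexp.mul_const (A * (l2norm W * l2norm U))).mono'
      (hm.norm.prod_swap (μ := volume.restrict (Ioi 0)) (ν := volume)).integral_prod_right' ?_
    filter_upwards [ae_restrict_mem measurableSet_Ioi] with t ht
    have ht0 : 0 ≤ t := (mem_Ioi.1 ht).le
    have hd := h.damped ht0
    have hWt := l2norm_le_mul_l2norm h.memL1L2_left (by positivity) (norm_damp_le h.left_le ht0)
    have hUt := l2norm_le_mul_l2norm h.memL1L2_right (by positivity) (norm_damp_le h.le_right ht0)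
    rw [mul_zero, neg_zero, Real.exp_zero, one_mul] at hWt
    rw [Real.norm_of_nonneg (integral_nonneg fun _ => norm_nonneg _)]
    calc _ ≤ A * (_ * _) := integral_norm_mul_IFT_mul_conj_IFT_le hA hd.memL1L2_left
            hd.memL1L2_right
      _ ≤ A * (l2norm W * (Real.exp (-(t * d)) * l2norm U)) := by
          gcongr
          exacts [l2norm_nonneg _, l2norm_nonneg _]
      _ = Real.exp (-d * t) * (A * (l2norm W * l2norm U)) := by
          rw [neg_mul, mul_comm d]; ring

theorem integral_mul_eq_integral_damp {a' : (Fin n → ℝ) → ℂ} {A A' : ℝ}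
    (h : IsSlabSeparated u α d W U) (ha : Continuous a) (hA : ∀ x, ‖a x‖ ≤ A)
    (ha' : Continuous a') (hA' : ∀ x, ‖a' x‖ ≤ A') (hderiv : ∀ x, HasLineDerivAt ℝ a (a' x) x u) :
    2 * Real.pi * I * ∫ x, a x * (IFT W x * conj (IFT U x)) =
      ∫ t in Ioi (0 : ℝ), ∫ x, a' x * (IFT (damp (fun ξ => α - dotp u ξ) t W) x *
        conj (IFT (damp (fun η => dotp u η - α) t U) x)) := by
  have hint {b : (Fin n → ℝ) → ℂ} {B : ℝ} (hb : Continuous b) (hB : ∀ x, ‖b x‖ ≤ B) :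
      Integrable fun x => b x * slabPrimitive u W U x := by
    simpa only [integral_const_mul, ← h.slabPrimitive_eq_integral] using
      (h.integrable_prod_mul_damp hb hB).integral_prod_left
  have parts := integral_bilinear_hasLineDerivAt_right_eq_neg_left_of_integrable (μ := volume)
    (B := ContinuousLinearMap.mul ℝ ℂ) (f := a) (f' := a') (g := slabPrimitive u W U)
    (g' := fun x => -(2 * Real.pi * I) * (IFT W x * conj (IFT U x))) (v := u)
    (hint ha' hA') (by
      simpa [mul_left_comm] using ((integrable_mul_IFT_mul_conj_IFT ha hA h.memL1L2_left
        h.memL1L2_right).const_mul (-(2 * Real.pi * I)))) (hint ha hA)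
    (fun x _ => hderiv x) fun x _ => h.hasLineDerivAt_slabPrimitive x
  simp only [ContinuousLinearMap.mul_apply', mul_left_comm (a _) (2 * Real.pi * I),
    integral_const_mul, neg_mul, neg_inj, mul_neg, integral_neg] at parts
  rw [parts, ← integral_integral_swap (h.integrable_prod_mul_damp ha' hA')]
  simp only [integral_const_mul, ← h.slabPrimitive_eq_integral]

theorem integrable_sq_div_pow (h : IsSlabSeparated u α d W U) (k : ℕ) :
    Integrable fun η => ‖U η‖ ^ 2 / (dotp u η - α) ^ k := by
  have hm : Measurable fun η => ((dotp u η - α) ^ k)⁻¹ :=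
    (by fun_prop : Continuous fun η => (dotp u η - α) ^ k).measurable.inv
  refine (h.memL1L2_right.integrable_sq.mul_const (d ^ k)⁻¹).mono' ?_ (.of_forall fun η => ?_)
  · simp only [div_eq_mul_inv]
    exact h.memL1L2_right.integrable_sq.1.mul hm.aestronglyMeasurable
  · by_cases hne : U η = 0
    · simp [hne]
    · have hd := h.pos
      have hle := h.le_right η hne
      have : 0 < dotp u η - α := hd.trans_le hle
      rw [Real.norm_of_nonneg (by positivity), div_eq_mul_inv]
      gcongr

theorem sqrt_integral_damp_sq_div_pow_le (h : IsSlabSeparated u α d W U) (ht : 0 < t) (k : ℕ) :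
    √(∫ η, ‖damp (fun η => dotp u η - α) t U η‖ ^ 2 / (dotp u η - α) ^ k)
      ≤ t ^ (1 / 2 - 1 : ℝ) * Real.exp (-(d / 2 * t)) *
        √(∫ η, ‖U η‖ ^ 2 / (dotp u η - α) ^ (k + 1)) := by
  have hfac : t ^ (1 / 2 - 1 : ℝ) * Real.exp (-(d / 2 * t)) = √(t⁻¹ * Real.exp (-(t * d))) := by
    rw [Real.sqrt_mul (by positivity), Real.sqrt_eq_rpow, Real.sqrt_eq_rpow, ← Real.rpow_neg_one,
      ← Real.rpow_mul ht.le, ← Real.exp_mul]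
    ring_nf
  rw [hfac, ← Real.sqrt_mul (by positivity), ← integral_const_mul]
  refine Real.sqrt_le_sqrt (integral_mono ((h.damped ht.le).integrable_sq_div_pow k)
    ((h.integrable_sq_div_pow _).const_mul _) fun η => ?_)
  by_cases hne : U η = 0
  · simp [hne, damp]
  set s := dotp u η - α with hs
  have hds : d ≤ s := h.le_right η hne
  have hs0 : 0 < s := h.pos.trans_le hds
  have hexp : Real.exp (-(t * s)) ≤ (t * s)⁻¹ := by
    rw [Real.exp_neg]
    gcongr
    linarith [Real.add_one_le_exp (t * s)]
  simp only [damp, ← hs, norm_mul, norm_real, Real.norm_of_nonneg (Real.exp_pos _).le]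
  calc (Real.exp (-(t * s)) * ‖U η‖) ^ 2 / s ^ k
      = Real.exp (-(t * s)) * Real.exp (-(t * s)) * (‖U η‖ ^ 2 / s ^ k) := by ring
    _ ≤ (t * s)⁻¹ * Real.exp (-(t * d)) * (‖U η‖ ^ 2 / s ^ k) := by gcongr
    _ = t⁻¹ * Real.exp (-(t * d)) * (‖U η‖ ^ 2 / s ^ (k + 1)) := by
        field_simp; ring

theorem norm_integral_mul_le_of_damped {a' : (Fin n → ℝ) → ℂ} {A A' M : ℝ}
    (h : IsSlabSeparated u α d W U) (ha : Continuous a) (hA : ∀ x, ‖a x‖ ≤ A)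
    (ha' : Continuous a') (hA' : ∀ x, ‖a' x‖ ≤ A') (hderiv : ∀ x, HasLineDerivAt ℝ a (a' x) x u)
    (hM : ∀ t > 0, ‖∫ x, a' x * (IFT (damp (fun ξ => α - dotp u ξ) t W) x *
      conj (IFT (damp (fun η => dotp u η - α) t U) x))‖
        ≤ t ^ (1 / 2 - 1 : ℝ) * Real.exp (-(d / 2 * t)) * M) :
    ‖∫ x, a x * (IFT W x * conj (IFT U x))‖ ≤ M / √d := by
  have hd := h.pos
  have hM0 : 0 ≤ M := by
    have := (norm_nonneg _).trans (hM 1 one_pos)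
    rw [Real.one_rpow, one_mul] at this
    exact nonneg_of_mul_nonneg_right this (Real.exp_pos _)
  have hbound : ‖2 * Real.pi * I * ∫ x, a x * (IFT W x * conj (IFT U x))‖
      ≤ √(2 * Real.pi) / √d * M := by
    rw [h.integral_mul_eq_integral_damp ha hA ha' hA' hderiv, ← integral_inv_sqrt_mul_exp hd,
      ← integral_mul_const]
    refine norm_integral_le_of_norm_le ((integrableOn_inv_sqrt_mul_exp hd).mul_const M) ?_
    filter_upwards [ae_restrict_mem measurableSet_Ioi] with t ht using hM t ht
  have hsqrt : √(2 * Real.pi) ≤ 2 * Real.pi :=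
    Real.sqrt_le_self_iff.2 (.inr (by linarith [Real.pi_gt_three]))
  have hnorm : ‖(2 * Real.pi * I : ℂ)‖ = 2 * Real.pi := by simp [abs_of_pos Real.pi_pos]
  rw [norm_mul, hnorm] at hbound
  refine le_of_mul_le_mul_left (hbound.trans ?_) Real.two_pi_pos
  rw [div_mul_eq_mul_div, mul_div_assoc]
  gcongr

theorem norm_integral_mul_le {a : ℕ → (Fin n → ℝ) → ℂ} {A : ℝ} (k : ℕ)
    (h : IsSlabSeparated u α d W U) (ha : ∀ j, Continuous (a j))
    (hbdd : ∀ j, ∃ B, ∀ x, ‖a j x‖ ≤ B)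
    (hderiv : ∀ j x, HasLineDerivAt ℝ (a j) (a (j + 1) x) x u) (hA : ∀ x, ‖a k x‖ ≤ A) :
    ‖∫ x, a 0 x * (IFT W x * conj (IFT U x))‖
      ≤ A / √d ^ k * (l2norm W * √(∫ η, ‖U η‖ ^ 2 / (dotp u η - α) ^ k)) := by
  have hA0 : 0 ≤ A := (norm_nonneg _).trans (hA 0)
  induction k generalizing a W U with
  | zero =>
    simpa [l2norm] using (norm_integral_le_integral_norm _).trans
      (integral_norm_mul_IFT_mul_conj_IFT_le hA h.memL1L2_left h.memL1L2_right)
  | succ k ih =>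
    obtain ⟨B₀, hB₀⟩ := hbdd 0
    obtain ⟨B₁, hB₁⟩ := hbdd 1
    set S := √(∫ η, ‖U η‖ ^ 2 / (dotp u η - α) ^ (k + 1))
    have hstep := h.norm_integral_mul_le_of_damped (M := A / √d ^ k * (l2norm W * S))
      (ha 0) hB₀ (ha 1) hB₁ (hderiv 0) fun t ht => ?_
    · rwa [mul_div_right_comm, div_div, ← pow_succ] at hstep
    have hWt := l2norm_le_mul_l2norm h.memL1L2_left (by positivity) (norm_damp_le h.left_le ht.le)
    rw [mul_zero, neg_zero, Real.exp_zero, one_mul] at hWt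
    refine (ih (h.damped ht.le) (fun j => ha (j + 1)) (fun j => hbdd (j + 1))
      (fun j => hderiv (j + 1)) hA).trans ?_
    rw [mul_left_comm _ (A / _), mul_left_comm _ (l2norm W)]
    have := l2norm_nonneg W
    gcongr
    exact h.sqrt_integral_damp_sq_div_pow_le ht k

end IsSlabSeparated

end SpectralSeparation

section JapaneseBracket

/-- The Japanese bracket `⟨ξ⟩ = (1 + |ξ|²)^{1/2}`. -/
def jb (ξ : Fin n → ℝ) : ℝ := √(wt ξ)

theorem one_le_wt (ξ : Fin n → ℝ) : 1 ≤ wt ξ :=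
  le_add_of_nonneg_right (Finset.sum_nonneg fun i _ => sq_nonneg (ξ i))

theorem one_le_jb (ξ : Fin n → ℝ) : 1 ≤ jb ξ := Real.one_le_sqrt.2 (one_le_wt ξ)

theorem jb_pos (ξ : Fin n → ℝ) : 0 < jb ξ := one_pos.trans_le (one_le_jb ξ)

theorem jb_rpow_pos (ξ : Fin n → ℝ) (p : ℝ) : 0 < jb ξ ^ p := Real.rpow_pos_of_pos (jb_pos ξ) p

theorem sq_jb (ξ : Fin n → ℝ) : jb ξ ^ 2 = wt ξ :=
  Real.sq_sqrt (zero_le_one.trans (one_le_wt ξ))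

theorem wt_rpow_div_two (ξ : Fin n → ℝ) (p : ℝ) : wt ξ ^ (p / 2) = jb ξ ^ p := by
  rw [← sq_jb, ← Real.rpow_natCast, ← Real.rpow_mul (jb_pos ξ).le]
  norm_num [mul_div_cancel₀]

theorem jb_zero : jb (0 : Fin n → ℝ) = 1 := by simp [jb, wt]

theorem contDiff_wt : ContDiff ℝ ∞ (wt : (Fin n → ℝ) → ℝ) := by
  unfold wt
  fun_prop

theorem contDiff_jb_rpow (p : ℝ) : ContDiff ℝ ∞ fun ξ : Fin n → ℝ => jb ξ ^ p := by
  simp only [← wt_rpow_div_two]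
  exact contDiff_wt.rpow_const_of_ne fun ξ => (zero_lt_one.trans_le (one_le_wt ξ)).ne'

@[fun_prop]
theorem continuous_jb_rpow (p : ℝ) : Continuous fun ξ : Fin n → ℝ => jb ξ ^ p :=
  (contDiff_jb_rpow p).continuous

theorem abs_apply_le_jb (ξ : Fin n → ℝ) (i : Fin n) : |ξ i| ≤ jb ξ := by
  refine Real.abs_le_sqrt ((Finset.single_le_sum (f := fun i => ξ i ^ 2)
    (fun i _ => sq_nonneg _) (Finset.mem_univ i)).trans ?_)
  exact le_add_of_nonneg_left zero_le_one

theorem norm_le_jb (ξ : Fin n → ℝ) : ‖ξ‖ ≤ jb ξ :=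
  (pi_norm_le_iff_of_nonneg (jb_pos ξ).le).2 (abs_apply_le_jb ξ)

theorem abs_jb_sub_jb_le (ξ ζ : Fin n → ℝ) : |jb ξ - jb ζ| ≤ n * ‖ξ - ζ‖ := by
  have hpos : 0 < jb ξ + jb ζ := add_pos (jb_pos _) (jb_pos _)
  have hfactor : (jb ξ - jb ζ) * (jb ξ + jb ζ) = ∑ i, (ξ i - ζ i) * (ξ i + ζ i) := by
    calc (jb ξ - jb ζ) * (jb ξ + jb ζ) = jb ξ ^ 2 - jb ζ ^ 2 := by ring
      _ = ∑ i, (ξ i ^ 2 - ζ i ^ 2) := by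
        rw [sq_jb, sq_jb, wt, wt, add_sub_add_left_eq_sub, Finset.sum_sub_distrib]
      _ = ∑ i, (ξ i - ζ i) * (ξ i + ζ i) := Finset.sum_congr rfl fun i _ => by ring
  refine le_of_mul_le_mul_right ?_ hpos
  calc |jb ξ - jb ζ| * (jb ξ + jb ζ) = |∑ i, (ξ i - ζ i) * (ξ i + ζ i)| := by
        rw [← hfactor, abs_mul, abs_of_pos hpos]
    _ ≤ ∑ i, |ξ i - ζ i| * |ξ i + ζ i| := by
        simpa only [abs_mul] using
          Finset.abs_sum_le_sum_abs (fun i => (ξ i - ζ i) * (ξ i + ζ i)) Finset.univ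
    _ ≤ ∑ _i : Fin n, ‖ξ - ζ‖ * (jb ξ + jb ζ) := by
        gcongr with i
        · exact norm_le_pi_norm (ξ - ζ) i
        · exact (abs_add_le _ _).trans (add_le_add (abs_apply_le_jb ξ i) (abs_apply_le_jb ζ i))
    _ = n * ‖ξ - ζ‖ * (jb ξ + jb ζ) := by simp [mul_assoc]

theorem jb_le_add (ξ ζ : Fin n → ℝ) : jb ξ ≤ jb ζ + n * ‖ξ - ζ‖ := by
  linarith [(abs_le.1 (abs_jb_sub_jb_le ξ ζ)).2]

theorem rpow_le_two_rpow_abs_mul {a b : ℝ} (ha : 0 < a) (hb : 0 < b) (hba : b ≤ 2 * a)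
    (hab : a ≤ 2 * b) (p : ℝ) : b ^ p ≤ 2 ^ |p| * a ^ p := by
  rcases le_total 0 p with hp | hp
  · rw [abs_of_nonneg hp, ← Real.mul_rpow zero_le_two ha.le]
    exact Real.rpow_le_rpow hb.le hba hp
  · rw [abs_of_nonpos hp, Real.rpow_neg zero_le_two, ← Real.inv_rpow zero_le_two,
      ← Real.mul_rpow (by norm_num) ha.le]
    exact Real.rpow_le_rpow_of_nonpos (by positivity) (by linarith) hp

theorem integrable_jb_rpow : Integrable fun ζ : Fin n → ℝ => jb ζ ^ (-(n + 1) : ℝ) := by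
  have hdecay := integrable_one_add_norm (E := Fin n → ℝ) (μ := volume) (r := n + 1) (by simp)
  refine (hdecay.const_mul (2 ^ (n + 1 : ℝ))).mono'
    (continuous_jb_rpow _).aestronglyMeasurable (.of_forall fun ζ => ?_)
  have hle : 1 + ‖ζ‖ ≤ 2 * jb ζ := by linarith [norm_le_jb ζ, one_le_jb ζ]
  rw [Real.norm_of_nonneg (jb_rpow_pos ζ _).le, ← div_le_iff₀' (by positivity), div_eq_mul_inv,
    ← Real.rpow_neg zero_le_two, mul_comm, ← Real.mul_rpow zero_le_two (jb_pos ζ).le]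
  exact Real.rpow_le_rpow_of_nonpos (by positivity) hle (neg_nonpos.2 (by positivity))

end JapaneseBracket

section Cells

/-- The radius `⟨ζ⟩^τ / (2n)` of the frequency cell around `ζ`. For `τ ≤ 1` the bracket varies by
at most a factor `2` on the cell. -/
def cellRadius (τ : ℝ) (ζ : Fin n → ℝ) : ℝ := jb ζ ^ τ / (2 * n)

variable {τ : ℝ}

theorem cellRadius_pos [NeZero n] (τ : ℝ) (ζ : Fin n → ℝ) : 0 < cellRadius τ ζ := by
  have := jb_rpow_pos ζ τ
  have : (0 : ℝ) < n := Nat.cast_pos.2 (NeZero.pos n)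
  rw [cellRadius]
  positivity

theorem two_mul_natCast_mul_cellRadius [NeZero n] (τ : ℝ) (ζ : Fin n → ℝ) :
    2 * n * cellRadius τ ζ = jb ζ ^ τ := by
  rw [cellRadius]
  field_simp [NeZero.ne n]

theorem jb_rpow_le_jb (hτ : τ ≤ 1) (ζ : Fin n → ℝ) : jb ζ ^ τ ≤ jb ζ := by
  simpa using Real.rpow_le_rpow_of_exponent_le (one_le_jb ζ) hτ

theorem natCast_mul_norm_sub_le_of_mem_cell [NeZero n] (hτ : τ ≤ 1) {ζ ξ : Fin n → ℝ}
    (hξ : ξ ∈ closedBall ζ (cellRadius τ ζ)) : n * ‖ξ - ζ‖ ≤ jb ζ / 2 := by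
  rw [mem_closedBall_iff_norm] at hξ
  calc n * ‖ξ - ζ‖ ≤ n * cellRadius τ ζ := by gcongr
    _ = jb ζ ^ τ / 2 := by rw [← two_mul_natCast_mul_cellRadius]; ring
    _ ≤ jb ζ / 2 := by gcongr; exact jb_rpow_le_jb hτ ζ

theorem jb_rpow_le_of_mem_cell [NeZero n] (hτ : τ ≤ 1) {ζ ξ : Fin n → ℝ}
    (hξ : ξ ∈ closedBall ζ (cellRadius τ ζ)) (p : ℝ) : jb ξ ^ p ≤ 2 ^ |p| * jb ζ ^ p := by
  have hd := natCast_mul_norm_sub_le_of_mem_cell hτ hξ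
  have hlip := abs_le.1 (abs_jb_sub_jb_le ξ ζ)
  have := jb_pos ζ
  exact rpow_le_two_rpow_abs_mul (jb_pos ζ) (jb_pos ξ) (by linarith) (by linarith) p

theorem jb_rpow_le_of_mem_cell' [NeZero n] (hτ : τ ≤ 1) {ζ ξ : Fin n → ℝ}
    (hξ : ξ ∈ closedBall ζ (cellRadius τ ζ)) (p : ℝ) : jb ζ ^ p ≤ 2 ^ |p| * jb ξ ^ p := by
  have hd := natCast_mul_norm_sub_le_of_mem_cell hτ hξ
  have hlip := abs_le.1 (abs_jb_sub_jb_le ξ ζ)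
  have := jb_pos ζ
  exact rpow_le_two_rpow_abs_mul (jb_pos ξ) (jb_pos ζ) (by linarith) (by linarith) p

/-- The integrable weight `sⁿ (1 + s|z|)^{-(n+1)}` describing the decay of a kernel whose symbol
varies on the scale `s`. -/
def decayWeight (s : ℝ) (z : Fin n → ℝ) : ℝ := s ^ n / (1 + s * ‖z‖) ^ (n + 1)

theorem decayWeight_eq_comp_smul {s : ℝ} (hs : 0 < s) :
    (decayWeight s : (Fin n → ℝ) → ℝ) = fun z => s ^ n * decayWeight 1 (s • z) := by
  ext z
  simp [decayWeight, norm_smul, abs_of_pos hs, div_eq_mul_inv]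

theorem decayWeight_nonneg {s : ℝ} (hs : 0 < s) (z : Fin n → ℝ) : 0 ≤ decayWeight s z := by
  rw [decayWeight]
  positivity

theorem integrable_decayWeight {s : ℝ} (hs : 0 < s) :
    Integrable (decayWeight s : (Fin n → ℝ) → ℝ) := by
  have hone : Integrable (decayWeight 1 : (Fin n → ℝ) → ℝ) := by
    refine (integrable_one_add_norm (E := Fin n → ℝ) (μ := volume) (r := n + 1) (by simp)).congr
      (.of_forall fun z => ?_)
    simp only [decayWeight, one_pow, one_mul, one_div]
    rw [Real.rpow_neg (by positivity), ← Nat.cast_add_one, Real.rpow_natCast]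
  rw [decayWeight_eq_comp_smul hs]
  exact (hone.comp_smul hs.ne').const_mul _

theorem integral_decayWeight {s : ℝ} (hs : 0 < s) :
    ∫ z : Fin n → ℝ, decayWeight s z = ∫ z : Fin n → ℝ, decayWeight 1 z := by
  rw [decayWeight_eq_comp_smul hs, integral_const_mul, Measure.integral_comp_smul_of_nonneg _ _ s
    (hR := hs.le)]
  simp only [Module.finrank_fintype_fun_eq_card, Fintype.card_fin, smul_eq_mul]
  field_simp

end Cells

theorem md_single (i : Fin n) (j : ℕ) (F : (Fin n → ℝ) → ℂ) :
    md (Pi.single i j) F = (dirDeriv (Pi.single i 1))^[j] F := by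
  have foldr_eq (l : List (Fin n)) (hl : l.Nodup) :
      (l.map fun a => (pd a)^[(Pi.single i j : Fin n → ℕ) a]).foldr (· ∘ ·) id
        = if i ∈ l then (pd i)^[j] else id := by
    induction l with
    | nil => simp
    | cons a l ih =>
      rw [List.nodup_cons] at hl
      simp only [List.map_cons, List.foldr_cons, ih hl.2]
      obtain rfl | hai := eq_or_ne a i
      · simp [hl.1]
      · simp [hai.symm]
  rw [md, foldr_eq _ (List.nodup_finRange n), if_pos (List.mem_finRange i)]
  rfl

theorem mOrd_single (i : Fin n) (j : ℕ) : mOrd (Pi.single i j : Fin n → ℕ) = j := by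
  rw [mOrd, Finset.sum_eq_single i] <;> simp +contextual

/-- The derivative `∂_{x_i}^k σ` of a symbol. -/
def xDeriv (i : Fin n) (k : ℕ) (σ : (Fin n → ℝ) → (Fin n → ℝ) → ℂ) :
    (Fin n → ℝ) → (Fin n → ℝ) → ℂ :=
  fun x ξ => (dirDeriv (Pi.single i 1))^[k] (fun y => σ y ξ) x

theorem xDeriv_zero (i : Fin n) (σ : (Fin n → ℝ) → (Fin n → ℝ) → ℂ) : xDeriv i 0 σ = σ := rfl

section SmoothSymbol

variable {σ : (Fin n → ℝ) → (Fin n → ℝ) → ℂ}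

theorem uncurry_xDeriv (hσ : ContDiff ℝ ∞ (Function.uncurry σ)) (i : Fin n) (k : ℕ) :
    Function.uncurry (xDeriv i k σ) = (dirDeriv (Pi.single i 1, 0))^[k] (Function.uncurry σ) := by
  ext ⟨x, ξ⟩
  exact congrFun (iterate_dirDeriv_prodMk_left _ k hσ ξ) x

theorem contDiff_xDeriv (hσ : ContDiff ℝ ∞ (Function.uncurry σ)) (i : Fin n) (k : ℕ) :
    ContDiff ℝ ∞ (Function.uncurry (xDeriv i k σ)) := by
  rw [uncurry_xDeriv hσ]
  exact contDiff_iterate_dirDeriv _ hσ k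

theorem hasLineDerivAt_xDeriv (hσ : ContDiff ℝ ∞ (Function.uncurry σ)) (i : Fin n) (k : ℕ)
    (x ξ : Fin n → ℝ) :
    HasLineDerivAt ℝ (fun y => xDeriv i k σ y ξ) (xDeriv i (k + 1) σ x ξ) x (Pi.single i 1) := by
  have hslice : ContDiff ℝ ∞ fun y => σ y ξ := hσ.comp (contDiff_prodMk_left ξ)
  simp only [xDeriv, Function.iterate_succ_apply']
  exact hasLineDerivAt_dirDeriv _ (contDiff_iterate_dirDeriv _ hslice k) x

theorem iterate_dirDeriv_xDeriv (hσ : ContDiff ℝ ∞ (Function.uncurry σ)) (i l : Fin n) (j k : ℕ)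
    (x ξ : Fin n → ℝ) :
    (dirDeriv (Pi.single l 1))^[j] (xDeriv i k σ x) ξ =
      mixedD (Pi.single i k) (Pi.single l j) σ x ξ := by
  have hξ := contDiff_iterate_dirDeriv ((0, Pi.single l 1) : (Fin n → ℝ) × (Fin n → ℝ)) hσ j
  have hmixed : mixedD (Pi.single i k) (Pi.single l j) σ x ξ =
      (dirDeriv (Pi.single i 1, 0))^[k] ((dirDeriv (0, Pi.single l 1))^[j] (Function.uncurry σ))
        (x, ξ) := by
    simp only [mixedD, md_single]
    rw [← congrFun (iterate_dirDeriv_prodMk_left _ k hξ ξ) x]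
    congr! 2 with y
    exact congrFun (iterate_dirDeriv_prodMk_right _ j hσ y) ξ
  rw [hmixed, iterate_dirDeriv_comm _ _ _ _ hσ, ← uncurry_xDeriv hσ]
  exact congrFun (iterate_dirDeriv_prodMk_right _ j (contDiff_xDeriv hσ i k) x) ξ

end SmoothSymbol

namespace SymbolClass

variable {m ρ δ : ℝ} {σ : (Fin n → ℝ) → (Fin n → ℝ) → ℂ}

theorem contDiff_uncurry (hσ : SymbolClass m ρ δ σ) : ContDiff ℝ ∞ (Function.uncurry σ) := hσ.1

theorem exists_norm_iterate_dirDeriv_xDeriv_le (hσ : SymbolClass m ρ δ σ) (J k : ℕ) :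
    ∃ A > 0, ∀ i l : Fin n, ∀ j ≤ J, ∀ x ξ,
      ‖(dirDeriv (Pi.single l 1))^[j] (xDeriv i k σ x) ξ‖ ≤ A * jb ξ ^ (m + δ * k - ρ * j) := by
  choose C _ hC using hσ.2
  obtain ⟨A, hA⟩ := (finite_range fun t : Fin n × Fin n × Fin (J + 1) =>
    C (Pi.single t.2.1 t.2.2.1) (Pi.single t.1 k)).bddAbove
  refine ⟨max A 1, by positivity, fun i l j hj x ξ => ?_⟩
  have hCA : C (Pi.single l j) (Pi.single i k) ≤ A :=
    hA ⟨(i, l, ⟨j, Nat.lt_succ_of_le hj⟩), rfl⟩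
  calc ‖(dirDeriv (Pi.single l 1))^[j] (xDeriv i k σ x) ξ‖
      ≤ C (Pi.single l j) (Pi.single i k) * jb ξ ^ (m - ρ * j + δ * k) := by
        rw [iterate_dirDeriv_xDeriv hσ.contDiff_uncurry, ← wt_rpow_div_two]
        simpa only [mOrd_single] using hC (Pi.single l j) (Pi.single i k) x ξ
    _ ≤ max A 1 * jb ξ ^ (m + δ * k - ρ * j) := by
        rw [sub_add_eq_add_sub]
        have := jb_rpow_pos ξ (m + δ * k - ρ * j)
        gcongr
        exact hCA.trans (le_max_left A 1)

end SymbolClass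

/-- The function `⟨ξ⟩^q χ(⟨ξ⟩^{-τ}(ξ - ζ))`: a bump at `ζ` whose scale `⟨ξ⟩^τ` is governed by the
variable `ξ` rather than by the centre, so that its integrals over `ζ` are exactly computable. -/
def scaledBump (χ : (Fin n → ℝ) → ℂ) (τ q : ℝ) (ζ ξ : Fin n → ℝ) : ℂ :=
  (jb ξ ^ q : ℝ) * χ (jb ξ ^ (-τ) • (ξ - ζ))

theorem hasLineDerivAt_jb_rpow (p : ℝ) (ξ : Fin n → ℝ) (i : Fin n) :
    HasLineDerivAt ℝ (fun ξ => jb ξ ^ p) (p * ξ i * jb ξ ^ (p - 2)) ξ (Pi.single i 1) := by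
  have hwt : HasLineDerivAt ℝ wt (2 * ξ i) ξ (Pi.single i 1) := by
    have hcoord (l : Fin n) : HasDerivAt
        (fun t : ℝ => (ξ l + t * (Pi.single i 1 : Fin n → ℝ) l) ^ 2)
        (2 * ξ l * (Pi.single i 1 : Fin n → ℝ) l) 0 := by
      simpa using (((hasDerivAt_id (0 : ℝ)).mul_const
        ((Pi.single i 1 : Fin n → ℝ) l)).const_add (ξ l)).fun_pow 2
    have hsum := (HasDerivAt.fun_sum (u := Finset.univ) fun l _ => hcoord l).const_add 1
    exact hsum.congr_deriv (by simp [Pi.single_apply])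
  have hpow := HasDerivAt.rpow_const (p := p / 2) hwt
    (Or.inl (zero_lt_one.trans_le (one_le_wt _)).ne')
  simp only [zero_smul, add_zero, wt_rpow_div_two, show p / 2 - 1 = (p - 2) / 2 by ring] at hpow
  exact hpow.congr_deriv (by ring)

section ScaledBump

variable {χ : (Fin n → ℝ) → ℂ} {τ : ℝ}

theorem contDiff_scaledBump (hχ : ContDiff ℝ ∞ χ) (τ q : ℝ) (ζ : Fin n → ℝ) :
    ContDiff ℝ ∞ (scaledBump χ τ q ζ) :=
  (ofRealCLM.contDiff.comp (contDiff_jb_rpow q)).mul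
    (hχ.comp ((contDiff_jb_rpow (-τ)).smul (contDiff_id.sub contDiff_const)))

/-- The Euler derivative `t ↦ Dχ(t)t`, which appears when the scale of a bump is differentiated. -/
def eulerDeriv (χ : (Fin n → ℝ) → ℂ) (t : Fin n → ℝ) : ℂ := fderiv ℝ χ t t

theorem contDiff_eulerDeriv (hχ : ContDiff ℝ ∞ χ) : ContDiff ℝ ∞ (eulerDeriv χ) :=
  (hχ.fderiv_right (m := ∞) (by simp)).clm_apply contDiff_id

theorem hasCompactSupport_eulerDeriv (hc : HasCompactSupport χ) :
    HasCompactSupport (eulerDeriv χ) :=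
  (hc.fderiv ℝ).mono fun t ht hzero => ht (by simp [eulerDeriv, hzero])

theorem dirDeriv_scaledBump (hχ : ContDiff ℝ ∞ χ) (q : ℝ) (ζ : Fin n → ℝ) (i : Fin n) :
    dirDeriv (Pi.single i 1) (scaledBump χ τ q ζ) = fun ξ =>
      q * ((ξ i : ℂ) * scaledBump χ τ (q - 2) ζ ξ)
        + (scaledBump (dirDeriv (Pi.single i 1) χ) τ (q - τ) ζ ξ
          + -τ * ((ξ i : ℂ) * scaledBump (eulerDeriv χ) τ (q - 2) ζ ξ)) := by
  refine dirDeriv_eq_of_hasLineDerivAt (contDiff_scaledBump hχ τ q ζ) fun ξ => ?_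
  have hscale : HasDerivAt (fun t : ℝ => jb (ξ + t • Pi.single i 1) ^ (-τ) •
      (ξ + t • Pi.single i 1 - ζ)) (jb ξ ^ (-τ) • Pi.single i 1
        + (-τ * ξ i * jb ξ ^ (-τ - 2)) • (ξ - ζ)) 0 := by
    have hline : HasDerivAt (fun t : ℝ => ξ + t • Pi.single i 1 - ζ) (Pi.single i 1) 0 := by
      simpa using (((hasDerivAt_id (0 : ℝ)).smul_const
        (Pi.single i 1 : Fin n → ℝ)).const_add ξ).sub_const ζ
    exact (HasDerivAt.fun_smul (hasLineDerivAt_jb_rpow (-τ) ξ i) hline).congr_deriv (by simp)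
  have hbump := HasFDerivAt.comp_hasDerivAt (0 : ℝ)
    (hχ.differentiable (by simp) _).hasFDerivAt hscale
  have hprod := (HasDerivAt.ofReal_comp (hasLineDerivAt_jb_rpow q ξ i)).mul hbump
  refine HasDerivAt.congr_deriv hprod ?_
  have hτ : jb ξ ^ (q - τ) = jb ξ ^ q * jb ξ ^ (-τ) := by
    rw [← Real.rpow_add (jb_pos ξ), sub_eq_add_neg]
  have htwo : jb ξ ^ (q - 2) * jb ξ ^ (-τ) = jb ξ ^ q * jb ξ ^ (-τ - 2) := by
    rw [← Real.rpow_add (jb_pos ξ), ← Real.rpow_add (jb_pos ξ)]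
    ring_nf
  have htwo' := congrArg ((↑) : ℝ → ℂ) htwo
  push_cast at htwo'
  simp only [Function.comp_apply, zero_smul, add_zero, map_add, map_smul, real_smul, scaledBump,
    dirDeriv, eulerDeriv, hτ]
  push_cast
  linear_combination (-τ * (ξ i : ℂ) * fderiv ℝ χ (jb ξ ^ (-τ) • (ξ - ζ)) (ξ - ζ)) * (-htwo')

theorem pow_mul_norm_iterate_dirDeriv_apply_le {s : ℝ} (ξ : Fin n → ℝ)
    (hsξ : s ≤ jb ξ) (i : Fin n) (k : ℕ) :
    s ^ k * ‖(dirDeriv (Pi.single i 1))^[k] (fun η : Fin n → ℝ => (η i : ℂ)) ξ‖ ≤ jb ξ := by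
  have hone : dirDeriv (Pi.single i 1) (fun η : Fin n → ℝ => (η i : ℂ)) = fun _ => 1 := by
    ext η
    have hcoord : HasFDerivAt (fun η : Fin n → ℝ => (η i : ℂ)) _ η :=
      ofRealCLM.hasFDerivAt.comp η (hasFDerivAt_apply i η)
    simp [dirDeriv, hcoord.fderiv]
  have hzero : dirDeriv (Pi.single i 1) (fun _ : Fin n → ℝ => (1 : ℂ)) = 0 := by
    ext η
    simp [dirDeriv]
  match k with
  | 0 => simpa using abs_apply_le_jb ξ i
  | 1 => simpa [hone] using hsξ
  | k + 2 =>
    have hiter : (dirDeriv (Pi.single i 1))^[k] (0 : (Fin n → ℝ) → ℂ) = 0 :=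
      Function.iterate_fixed (by ext; simp [dirDeriv]) k
    simp [hone, hzero, hiter, (jb_pos ξ).le]

theorem pow_succ_mul_norm_iterate_dirDeriv_apply_mul_le (hτ : τ ≤ 1) (i : Fin n) {k : ℕ}
    {ξ : Fin n → ℝ} {F : (Fin n → ℝ) → ℂ} (hF : ContDiff ℝ ∞ F) {C q : ℝ}
    (hC : ∀ j ≤ k, (jb ξ ^ τ) ^ j * ‖(dirDeriv (Pi.single i 1))^[j] F ξ‖ ≤ C * jb ξ ^ (q - 2)) :
    (jb ξ ^ τ) ^ (k + 1) * ‖(dirDeriv (Pi.single i 1))^[k] (fun η => (η i : ℂ) * F η) ξ‖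
      ≤ 2 ^ k * C * jb ξ ^ q := by
  have hs := jb_rpow_pos ξ τ
  have hsξ := jb_rpow_le_jb hτ ξ
  have hcoord : ContDiff ℝ ∞ fun η : Fin n → ℝ => (η i : ℂ) :=
    ofRealCLM.contDiff.comp (contDiff_apply ℝ ℝ i)
  calc (jb ξ ^ τ) ^ (k + 1) * ‖(dirDeriv (Pi.single i 1))^[k] (fun η => (η i : ℂ) * F η) ξ‖
      = jb ξ ^ τ * ((jb ξ ^ τ) ^ k *
          ‖(dirDeriv (Pi.single i 1))^[k] (fun η => (η i : ℂ) * F η) ξ‖) := by ring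
    _ ≤ jb ξ * (2 ^ k * jb ξ * (C * jb ξ ^ (q - 2))) := by
        have := jb_pos ξ
        refine mul_le_mul hsξ ?_ (by positivity) this.le
        exact pow_mul_norm_iterate_dirDeriv_mul_le _ k hs ξ hcoord hF
          (fun j _ => pow_mul_norm_iterate_dirDeriv_apply_le ξ hsξ i j) hC
    _ = 2 ^ k * C * (jb ξ ^ (q - 2) * jb ξ ^ (2 : ℝ)) := by rw [Real.rpow_two]; ring
    _ = 2 ^ k * C * jb ξ ^ q := by rw [← Real.rpow_add (jb_pos ξ), sub_add_cancel]

theorem exists_norm_scaledBump_le (hχ : ContDiff ℝ ∞ χ) (hc : HasCompactSupport χ) (τ q : ℝ) :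
    ∃ C ≥ 0, ∀ ζ ξ, ‖scaledBump χ τ q ζ ξ‖ ≤ C * jb ξ ^ q := by
  obtain ⟨C, hC⟩ := hχ.continuous.bounded_above_of_compact_support hc
  refine ⟨C, (norm_nonneg _).trans (hC 0), fun ζ ξ => ?_⟩
  have := jb_rpow_pos ξ q
  rw [scaledBump, norm_mul, norm_real, Real.norm_of_nonneg this.le, mul_comm]
  gcongr
  exact hC _

theorem iterate_succ_dirDeriv_scaledBump (hχ : ContDiff ℝ ∞ χ) (q : ℝ) (ζ : Fin n → ℝ) (i : Fin n)
    (j : ℕ) (ξ : Fin n → ℝ) :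
    (dirDeriv (Pi.single i 1))^[j + 1] (scaledBump χ τ q ζ) ξ =
      q * (dirDeriv (Pi.single i 1))^[j] (fun η => (η i : ℂ) * scaledBump χ τ (q - 2) ζ η) ξ
        + ((dirDeriv (Pi.single i 1))^[j]
            (scaledBump (dirDeriv (Pi.single i 1) χ) τ (q - τ) ζ) ξ
          + -τ * (dirDeriv (Pi.single i 1))^[j]
            (fun η => (η i : ℂ) * scaledBump (eulerDeriv χ) τ (q - 2) ζ η) ξ) := by
  have hcoord : ContDiff ℝ ∞ fun η : Fin n → ℝ => (η i : ℂ) :=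
    ofRealCLM.contDiff.comp (contDiff_apply ℝ ℝ i)
  have hχ₁ := hcoord.mul (contDiff_scaledBump hχ τ (q - 2) ζ)
  have hχ₂ := contDiff_scaledBump (contDiff_dirDeriv (Pi.single i 1) hχ) τ (q - τ) ζ
  have hχ₃ := hcoord.mul (contDiff_scaledBump (contDiff_eulerDeriv hχ) τ (q - 2) ζ)
  rw [Function.iterate_succ_apply, dirDeriv_scaledBump hχ q ζ i,
    iterate_dirDeriv_add _ j (contDiff_const.mul hχ₁) (hχ₂.add (contDiff_const.mul hχ₃)),
    iterate_dirDeriv_add _ j hχ₂ (contDiff_const.mul hχ₃),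
    iterate_dirDeriv_const_mul _ j _ hχ₁, iterate_dirDeriv_const_mul _ j _ hχ₃]

theorem pow_succ_mul_norm_iterate_dirDeriv_scaledBump_le (hτ : τ ≤ 1) (hχ : ContDiff ℝ ∞ χ) (q : ℝ)
    (i : Fin n) (j : ℕ) (ζ ξ : Fin n → ℝ) {C₁ C₂ C₃ : ℝ}
    (h₁ : ∀ l ≤ j, (jb ξ ^ τ) ^ l * ‖(dirDeriv (Pi.single i 1))^[l]
      (scaledBump χ τ (q - 2) ζ) ξ‖ ≤ C₁ * jb ξ ^ (q - 2))
    (h₂ : (jb ξ ^ τ) ^ j * ‖(dirDeriv (Pi.single i 1))^[j]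
      (scaledBump (dirDeriv (Pi.single i 1) χ) τ (q - τ) ζ) ξ‖ ≤ C₂ * jb ξ ^ (q - τ))
    (h₃ : ∀ l ≤ j, (jb ξ ^ τ) ^ l * ‖(dirDeriv (Pi.single i 1))^[l]
      (scaledBump (eulerDeriv χ) τ (q - 2) ζ) ξ‖ ≤ C₃ * jb ξ ^ (q - 2)) :
    (jb ξ ^ τ) ^ (j + 1) * ‖(dirDeriv (Pi.single i 1))^[j + 1] (scaledBump χ τ q ζ) ξ‖
      ≤ (|q| * (2 ^ j * C₁) + (C₂ + |τ| * (2 ^ j * C₃))) * jb ξ ^ q := by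
  have hs := jb_rpow_pos ξ τ
  have hD₁ := pow_succ_mul_norm_iterate_dirDeriv_apply_mul_le hτ i
    (contDiff_scaledBump hχ τ (q - 2) ζ) h₁
  have hD₂ := mul_le_mul_of_nonneg_left h₂ hs.le
  have hD₃ := pow_succ_mul_norm_iterate_dirDeriv_apply_mul_le hτ i
    (contDiff_scaledBump (contDiff_eulerDeriv hχ) τ (q - 2) ζ) h₃
  rw [← mul_assoc, ← pow_succ', mul_left_comm, ← Real.rpow_add (jb_pos ξ),
    add_sub_cancel] at hD₂
  rw [iterate_succ_dirDeriv_scaledBump hχ]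
  generalize (dirDeriv (Pi.single i 1))^[j] _ ξ = D₁ at hD₁ ⊢
  generalize (dirDeriv (Pi.single i 1))^[j] _ ξ = D₂ at hD₂ ⊢
  generalize (dirDeriv (Pi.single i 1))^[j] _ ξ = D₃ at hD₃ ⊢
  calc (jb ξ ^ τ) ^ (j + 1) * ‖q * D₁ + (D₂ + -τ * D₃)‖
      ≤ (jb ξ ^ τ) ^ (j + 1) * (|q| * ‖D₁‖ + (‖D₂‖ + |τ| * ‖D₃‖)) := by
        gcongr
        refine (norm_add_le _ _).trans (add_le_add (by simp) ((norm_add_le _ _).trans ?_))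
        simp
    _ = |q| * ((jb ξ ^ τ) ^ (j + 1) * ‖D₁‖) + ((jb ξ ^ τ) ^ (j + 1) * ‖D₂‖
          + |τ| * ((jb ξ ^ τ) ^ (j + 1) * ‖D₃‖)) := by ring
    _ ≤ |q| * (2 ^ j * C₁ * jb ξ ^ q) + (C₂ * jb ξ ^ q + |τ| * (2 ^ j * C₃ * jb ξ ^ q)) :=
        add_le_add (mul_le_mul_of_nonneg_left hD₁ (abs_nonneg q))
          (add_le_add hD₂ (mul_le_mul_of_nonneg_left hD₃ (abs_nonneg τ)))
    _ = (|q| * (2 ^ j * C₁) + (C₂ + |τ| * (2 ^ j * C₃))) * jb ξ ^ q := by ring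

theorem exists_pow_mul_norm_iterate_dirDeriv_scaledBump_le (hτ : τ ≤ 1) (i : Fin n) (k : ℕ)
    (hχ : ContDiff ℝ ∞ χ) (hc : HasCompactSupport χ) (q : ℝ) :
    ∃ C ≥ 0, ∀ j ≤ k, ∀ ζ ξ,
      (jb ξ ^ τ) ^ j * ‖(dirDeriv (Pi.single i 1))^[j] (scaledBump χ τ q ζ) ξ‖
        ≤ C * jb ξ ^ q := by
  induction k generalizing χ q with
  | zero =>
    obtain ⟨C, hC0, hC⟩ := exists_norm_scaledBump_le hχ hc τ q
    exact ⟨C, hC0, fun j hj ζ ξ => by simpa [Nat.le_zero.1 hj] using hC ζ ξ⟩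
  | succ k ih =>
    obtain ⟨C₀, hC₀0, hC₀⟩ := exists_norm_scaledBump_le hχ hc τ q
    obtain ⟨C₁, hC₁0, hC₁⟩ := ih hχ hc (q - 2)
    obtain ⟨C₂, hC₂0, hC₂⟩ := ih (contDiff_dirDeriv _ hχ) (hc.fderiv_apply ℝ _) (q - τ)
    obtain ⟨C₃, hC₃0, hC₃⟩ := ih (contDiff_eulerDeriv hχ) (hasCompactSupport_eulerDeriv hc) (q - 2)
    refine ⟨C₀ + (|q| * (2 ^ k * C₁) + (C₂ + |τ| * (2 ^ k * C₃))), by positivity, ?_⟩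
    rintro (_ | j) hj ζ ξ
    all_goals have := jb_rpow_pos ξ q
    · calc _ ≤ C₀ * jb ξ ^ q := by simpa using hC₀ ζ ξ
        _ ≤ _ := by gcongr; exact le_add_of_nonneg_right (by positivity)
    · replace hj : j ≤ k := Nat.le_of_succ_le_succ hj
      refine (pow_succ_mul_norm_iterate_dirDeriv_scaledBump_le hτ hχ q i j ζ ξ
        (fun l hl => hC₁ l (hl.trans hj) ζ ξ) (hC₂ j hj ζ ξ)
        fun l hl => hC₃ l (hl.trans hj) ζ ξ).trans ?_
      refine mul_le_mul_of_nonneg_right (le_add_of_nonneg_of_le hC₀0 ?_) this.le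
      gcongr <;> exact one_le_two

end ScaledBump

/-- A normalised real bump, so small that all scaled bumps centred at `ζ` built from it are
supported well inside the cell of `ζ`. -/
structure IsWindow (χ : (Fin n → ℝ) → ℂ) : Prop where
  contDiff : ContDiff ℝ ∞ χ
  tsupport_subset : tsupport χ ⊆ closedBall 0 (1 / (8 * n))
  conj_eq : ∀ t, conj (χ t) = χ t
  integral_norm_sq : ∫ t, ‖χ t‖ ^ 2 = 1

theorem exists_isWindow [NeZero n] : ∃ χ : (Fin n → ℝ) → ℂ, IsWindow χ := by
  have hn : (0 : ℝ) < n := Nat.cast_pos.2 (NeZero.pos n)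
  let b : ContDiffBump (0 : Fin n → ℝ) :=
    ⟨1 / (16 * n), 1 / (8 * n), by positivity, by gcongr; norm_num⟩
  have hpos : 0 < ∫ t, b t ^ 2 :=
    Continuous.integral_pos_of_hasCompactSupport_nonneg_nonzero (x := 0) (b.continuous.pow 2)
      (b.hasCompactSupport.comp_left (g := fun r => r ^ 2) (by simp)) (fun t => sq_nonneg (b t))
      (by simp [b.one_of_mem_closedBall (mem_closedBall_self b.rIn_pos.le)])
  refine ⟨fun t => ((b t / √(∫ t, b t ^ 2) : ℝ) : ℂ),
    ofRealCLM.contDiff.comp (b.contDiff.div_const _), ?_, fun t => conj_ofReal _, ?_⟩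
  · rw [← b.tsupport_eq]
    refine closure_mono fun t ht hzero => ht ?_
    simp [hzero]
  · simp only [norm_real, Real.norm_eq_abs, sq_abs, div_pow, Real.sq_sqrt hpos.le]
    rw [integral_div, div_self hpos.ne']

/-- The windows `θ_ζ(ξ) = ⟨ξ⟩^{-nτ/2} χ(⟨ξ⟩^{-τ}(ξ - ζ))`, whose squares form a continuous partition
of unity: `∫ θ_ζ(ξ)² dζ = 1` for every `ξ`. -/
def cellWindow (χ : (Fin n → ℝ) → ℂ) (τ : ℝ) (ζ ξ : Fin n → ℝ) : ℂ :=
  scaledBump χ τ (-(n * τ / 2)) ζ ξ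

namespace IsWindow

variable {χ : (Fin n → ℝ) → ℂ} {τ : ℝ}

theorem hasCompactSupport (hχ : IsWindow χ) : HasCompactSupport χ :=
  hasCompactSupport_of_tsupport_subset_closedBall hχ.tsupport_subset

theorem contDiff_cellWindow (hχ : IsWindow χ) (τ : ℝ) (ζ : Fin n → ℝ) :
    ContDiff ℝ ∞ (cellWindow χ τ ζ) :=
  contDiff_scaledBump hχ.contDiff τ _ ζ

theorem continuous_cellWindow (hχ : IsWindow χ) (τ : ℝ) :
    Continuous (Function.uncurry (cellWindow χ τ)) :=
  (continuous_ofReal.comp ((continuous_jb_rpow _).comp continuous_snd)).mul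
    (hχ.contDiff.continuous.comp (((continuous_jb_rpow _).comp continuous_snd).smul
      (continuous_snd.sub continuous_fst)))

theorem conj_cellWindow (hχ : IsWindow χ) (ζ ξ : Fin n → ℝ) :
    conj (cellWindow χ τ ζ ξ) = cellWindow χ τ ζ ξ := by
  rw [cellWindow, scaledBump, map_mul, conj_ofReal, hχ.conj_eq]

theorem cellWindow_mul_self (hχ : IsWindow χ) (ζ ξ : Fin n → ℝ) :
    cellWindow χ τ ζ ξ * cellWindow χ τ ζ ξ = (‖cellWindow χ τ ζ ξ‖ ^ 2 : ℝ) := by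
  rw [← normSq_eq_norm_sq, ← mul_conj, hχ.conj_cellWindow]

theorem integral_norm_cellWindow_sq (hχ : IsWindow χ) (τ : ℝ) (ξ : Fin n → ℝ) :
    ∫ ζ, ‖cellWindow χ τ ζ ξ‖ ^ 2 = 1 := by
  have hs := jb_rpow_pos ξ (-τ)
  have hscale : (jb ξ ^ (-(n * τ / 2))) ^ 2 = (jb ξ ^ (-τ)) ^ n := by
    rw [← Real.rpow_natCast, ← Real.rpow_natCast, ← Real.rpow_mul (jb_pos ξ).le,
      ← Real.rpow_mul (jb_pos ξ).le]
    push_cast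
    ring_nf
  simp only [cellWindow, scaledBump, norm_mul, mul_pow, norm_real, Real.norm_eq_abs, sq_abs, hscale]
  rw [integral_const_mul, integral_sub_left_eq_self (fun η => ‖χ (jb ξ ^ (-τ) • η)‖ ^ 2) volume ξ,
    Measure.integral_comp_smul_of_nonneg _ (fun η => ‖χ η‖ ^ 2) _ (hR := hs.le),
    hχ.integral_norm_sq]
  simp only [Module.finrank_fintype_fun_eq_card, Fintype.card_fin, smul_eq_mul]
  field_simp

theorem norm_sub_le_of_cellWindow_ne_zero [NeZero n] (hχ : IsWindow χ) (hτ₀ : 0 ≤ τ) (hτ : τ ≤ 1)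
    {ζ ξ : Fin n → ℝ} (h : cellWindow χ τ ζ ξ ≠ 0) : ‖ξ - ζ‖ ≤ cellRadius τ ζ / 2 := by
  have hn : (0 : ℝ) < n := Nat.cast_pos.2 (NeZero.pos n)
  have hs := jb_rpow_pos ξ (-τ)
  have hmem : jb ξ ^ (-τ) * ‖ξ - ζ‖ ≤ 1 / (8 * n) := by
    have := hχ.tsupport_subset (subset_tsupport _ (right_ne_zero_of_mul h))
    rwa [mem_closedBall_zero_iff, norm_smul, Real.norm_of_nonneg hs.le] at this
  have hξ : n * ‖ξ - ζ‖ ≤ jb ξ ^ τ / 8 := by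
    rw [Real.rpow_neg (jb_pos ξ).le, inv_mul_le_iff₀ (jb_rpow_pos ξ τ)] at hmem
    calc n * ‖ξ - ζ‖ ≤ n * (jb ξ ^ τ * (1 / (8 * n))) := by gcongr
      _ = jb ξ ^ τ / 8 := by field_simp
  have hjb : jb ξ ^ τ ≤ 2 * jb ζ ^ τ := by
    have hle := jb_rpow_le_jb hτ ξ
    have hlip := (abs_le.1 (abs_jb_sub_jb_le ξ ζ)).2
    have := jb_pos ξ
    calc jb ξ ^ τ ≤ (2 * jb ζ) ^ τ := by gcongr; linarith
      _ = 2 ^ τ * jb ζ ^ τ := Real.mul_rpow zero_le_two (jb_pos ζ).le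
      _ ≤ 2 * jb ζ ^ τ := by
        have := jb_rpow_pos ζ τ
        gcongr
        simpa using Real.rpow_le_rpow_of_exponent_le one_le_two hτ
  rw [cellRadius, div_div, le_div_iff₀ (by positivity)]
  linarith

theorem tsupport_cellWindow_subset [NeZero n] (hχ : IsWindow χ) (hτ₀ : 0 ≤ τ) (hτ : τ ≤ 1)
    (ζ : Fin n → ℝ) : tsupport (cellWindow χ τ ζ) ⊆ closedBall ζ (cellRadius τ ζ / 2) :=
  closure_minimal (fun _ h => mem_closedBall_iff_norm.2
    (hχ.norm_sub_le_of_cellWindow_ne_zero hτ₀ hτ h)) isClosed_closedBall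

theorem exists_pow_mul_norm_iterate_dirDeriv_cellWindow_le [NeZero n] (hχ : IsWindow χ)
    (hτ₀ : 0 ≤ τ) (hτ : τ ≤ 1) (k : ℕ) :
    ∃ C ≥ 0, ∀ i, ∀ j ≤ k, ∀ ζ, ∀ ξ ∈ closedBall ζ (cellRadius τ ζ),
      cellRadius τ ζ ^ j * ‖(dirDeriv (Pi.single i 1))^[j] (cellWindow χ τ ζ) ξ‖
        ≤ C * jb ζ ^ (-(n * τ / 2)) := by
  set q : ℝ := -(n * τ / 2)
  choose C hC0 hC using fun i => exists_pow_mul_norm_iterate_dirDeriv_scaledBump_le hτ i k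
    hχ.contDiff hχ.hasCompactSupport q
  have hsum : 0 ≤ ∑ i, C i := Finset.sum_nonneg fun i _ => hC0 i
  refine ⟨(∑ i, C i) * 2 ^ |q|, by positivity, fun i j hj ζ ξ hξ => ?_⟩
  have hs := cellRadius_pos τ ζ
  have hscale : cellRadius τ ζ ≤ jb ξ ^ τ := by
    have hle := jb_rpow_le_of_mem_cell' hτ hξ τ
    have htwo : (2 : ℝ) ^ |τ| ≤ 2 := by
      simpa [abs_of_nonneg hτ₀] using Real.rpow_le_rpow_of_exponent_le one_le_two hτ
    have hn : (1 : ℝ) ≤ n := Nat.one_le_cast.2 (NeZero.one_le)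
    have := jb_rpow_pos ξ τ
    rw [cellRadius, div_le_iff₀ (by positivity)]
    calc jb ζ ^ τ ≤ 2 ^ |τ| * jb ξ ^ τ := hle
      _ ≤ 2 * n * jb ξ ^ τ := by gcongr; linarith
      _ = jb ξ ^ τ * (2 * n) := mul_comm _ _
  have := jb_rpow_pos ξ q
  calc cellRadius τ ζ ^ j * ‖(dirDeriv (Pi.single i 1))^[j] (cellWindow χ τ ζ) ξ‖
      ≤ (jb ξ ^ τ) ^ j * ‖(dirDeriv (Pi.single i 1))^[j] (scaledBump χ τ q ζ) ξ‖ := by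
        rw [show cellWindow χ τ ζ = scaledBump χ τ q ζ from rfl]
        gcongr
    _ ≤ C i * jb ξ ^ q := hC i j hj ζ ξ
    _ ≤ (∑ i, C i) * (2 ^ |q| * jb ζ ^ q) := by
        gcongr
        · exact Finset.single_le_sum (fun i _ => hC0 i) (Finset.mem_univ i)
        · exact jb_rpow_le_of_mem_cell hτ hξ q
    _ = (∑ i, C i) * 2 ^ |q| * jb ζ ^ q := by ring

theorem tsupport_mul_cellWindow_subset [NeZero n] (hχ : IsWindow χ) (hτ₀ : 0 ≤ τ) (hτ : τ ≤ 1)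
    (b : (Fin n → ℝ) → ℂ) (ζ : Fin n → ℝ) :
    tsupport (fun ξ => b ξ * cellWindow χ τ ζ ξ) ⊆ closedBall ζ (cellRadius τ ζ) :=
  (tsupport_mul_subset_right.trans (hχ.tsupport_cellWindow_subset hτ₀ hτ ζ)).trans
    (closedBall_subset_closedBall (half_le_self (cellRadius_pos τ ζ).le))

theorem exists_norm_IFT_mul_cellWindow_le [NeZero n] (hχ : IsWindow χ) (hτ₀ : 0 ≤ τ) (hτ : τ ≤ 1)
    (k : ℕ) :
    ∃ C ≥ 0, ∀ (ζ : Fin n → ℝ) (b : (Fin n → ℝ) → ℂ) (B : ℝ), ContDiff ℝ ∞ b →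
      (∀ i, ∀ j ≤ k, ∀ ξ ∈ closedBall ζ (cellRadius τ ζ),
        cellRadius τ ζ ^ j * ‖(dirDeriv (Pi.single i 1))^[j] b ξ‖ ≤ B) →
      ∀ z, ‖IFT (fun ξ => b ξ * cellWindow χ τ ζ ξ) z‖ ≤ C * (B * jb ζ ^ (-(n * τ / 2))) *
        (cellRadius τ ζ ^ n / (1 + cellRadius τ ζ * ‖z‖) ^ k) := by
  obtain ⟨C, hC0, hC⟩ := hχ.exists_pow_mul_norm_iterate_dirDeriv_cellWindow_le hτ₀ hτ k
  refine ⟨2 ^ (k + n) * (2 ^ k * C), by positivity, fun ζ b B hb hB z => ?_⟩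
  have hs := cellRadius_pos τ ζ
  have hw := hχ.contDiff_cellWindow τ ζ
  have hB0 : 0 ≤ B := le_trans (by positivity)
    (hB ⟨0, NeZero.pos n⟩ 0 k.zero_le ζ (mem_closedBall_self hs.le))
  have hprod : ∀ i, ∀ j ≤ k, ∀ ξ ∈ closedBall ζ (cellRadius τ ζ),
      cellRadius τ ζ ^ j * ‖(dirDeriv (Pi.single i 1))^[j]
        (fun ξ => b ξ * cellWindow χ τ ζ ξ) ξ‖ ≤ 2 ^ k * B * (C * jb ζ ^ (-(n * τ / 2))) := by
    intro i j hj ξ hξ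
    have := jb_rpow_pos ζ (-(n * τ / 2))
    refine (pow_mul_norm_iterate_dirDeriv_mul_le _ j hs ξ hb hw
      (fun l hl => hB i l (hl.trans hj) ξ hξ) fun l hl => hC i l (hl.trans hj) ζ ξ hξ).trans ?_
    gcongr
    exact one_le_two
  refine (norm_IFT_le_div_of_norm_iterate_dirDeriv_le (hb.mul hw) hs
    (hχ.tsupport_mul_cellWindow_subset hτ₀ hτ b ζ) k hprod z).trans_eq ?_
  ring

end IsWindow

/-- The kernel `K_ζ(x, z) = ∫ e^{2πi z·ξ} σ(x, ξ) θ_ζ(ξ) dξ` of `σ(x, D) θ_ζ(D)`. -/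
def cellKernel (χ : (Fin n → ℝ) → ℂ) (τ : ℝ) (σ : (Fin n → ℝ) → (Fin n → ℝ) → ℂ)
    (ζ x z : Fin n → ℝ) : ℂ :=
  IFT (fun ξ => σ x ξ * cellWindow χ τ ζ ξ) z

section CellKernel

variable {χ : (Fin n → ℝ) → ℂ} {m ρ δ τ : ℝ} {σ : (Fin n → ℝ) → (Fin n → ℝ) → ℂ}

theorem SymbolClass.exists_pow_mul_norm_iterate_dirDeriv_xDeriv_le [NeZero n]
    (hσ : SymbolClass m ρ δ σ) (hτ : τ ≤ 1) (J k : ℕ) :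
    ∃ A ≥ 0, ∀ i l, ∀ j ≤ J, ∀ x ζ, ∀ ξ ∈ closedBall ζ (cellRadius τ ζ),
      cellRadius τ ζ ^ j * ‖(dirDeriv (Pi.single l 1))^[j] (xDeriv i k σ x) ξ‖
        ≤ A * jb ζ ^ (m + δ * k - (ρ - τ) * j) := by
  obtain ⟨A, hA0, hA⟩ := hσ.exists_norm_iterate_dirDeriv_xDeriv_le J k
  refine ⟨A * ∑ j ∈ Finset.range (J + 1), 2 ^ |m + δ * k - ρ * j|, by positivity,
    fun i l j hj x ζ ξ hξ => ?_⟩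
  have hs := cellRadius_pos τ ζ
  have hscale : cellRadius τ ζ ≤ jb ζ ^ τ := by
    have hn : (1 : ℝ) ≤ n := Nat.one_le_cast.2 NeZero.one_le
    exact div_le_self (jb_rpow_pos ζ τ).le (by linarith)
  have hsum : (2 : ℝ) ^ |m + δ * k - ρ * j| ≤
      ∑ j ∈ Finset.range (J + 1), 2 ^ |m + δ * k - ρ * j| :=
    Finset.single_le_sum (f := fun j : ℕ => (2 : ℝ) ^ |m + δ * k - ρ * j|)
      (fun _ _ => by positivity) (Finset.mem_range.2 (Nat.lt_succ_of_le hj))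
  have := jb_rpow_pos ζ τ
  have := jb_rpow_pos ζ (m + δ * k - ρ * j)
  calc cellRadius τ ζ ^ j * ‖(dirDeriv (Pi.single l 1))^[j] (xDeriv i k σ x) ξ‖
      ≤ (jb ζ ^ τ) ^ j * (A * (2 ^ |m + δ * k - ρ * j| * jb ζ ^ (m + δ * k - ρ * j))) := by
        gcongr
        refine (hA i l j hj x ξ).trans ?_
        gcongr
        exact jb_rpow_le_of_mem_cell hτ hξ _
    _ ≤ (jb ζ ^ τ) ^ j * (A * ((∑ j ∈ Finset.range (J + 1), 2 ^ |m + δ * k - ρ * j|)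
          * jb ζ ^ (m + δ * k - ρ * j))) := by gcongr
    _ = A * (∑ j ∈ Finset.range (J + 1), 2 ^ |m + δ * k - ρ * j|)
          * (jb ζ ^ (τ * j) * jb ζ ^ (m + δ * k - ρ * j)) := by
        rw [Real.rpow_mul_natCast (jb_pos ζ).le]
        ring
    _ = A * (∑ j ∈ Finset.range (J + 1), 2 ^ |m + δ * k - ρ * j|)
          * jb ζ ^ (m + δ * k - (ρ - τ) * j) := by
        rw [← Real.rpow_add (jb_pos ζ)]
        ring_nf

theorem SymbolClass.exists_norm_cellKernel_xDeriv_le [NeZero n] (hσ : SymbolClass m ρ δ σ)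
    (hχ : IsWindow χ) (hτ₀ : 0 ≤ τ) (hτ : τ ≤ 1) (hτρ : τ ≤ ρ) (k : ℕ) :
    ∃ C ≥ 0, ∀ i ζ x z, ‖cellKernel χ τ (xDeriv i k σ) ζ x z‖ ≤
      C * jb ζ ^ (m + δ * k - n * τ / 2) * decayWeight (cellRadius τ ζ) z := by
  obtain ⟨A, hA0, hA⟩ := hσ.exists_pow_mul_norm_iterate_dirDeriv_xDeriv_le hτ (n + 1) k
  obtain ⟨C, hC0, hC⟩ := hχ.exists_norm_IFT_mul_cellWindow_le hτ₀ hτ (n + 1)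
  refine ⟨C * A, by positivity, fun i ζ x z => ?_⟩
  refine (hC ζ (xDeriv i k σ x) (A * jb ζ ^ (m + δ * k))
    ((contDiff_xDeriv hσ.contDiff_uncurry i k).comp (contDiff_prodMk_right x))
    (fun l j hj ξ hξ => (hA i l j hj x ζ ξ hξ).trans ?_) z).trans_eq ?_
  · gcongr
    · exact one_le_jb ζ
    · have : 0 ≤ (ρ - τ) * j := mul_nonneg (sub_nonneg.2 hτρ) j.cast_nonneg
      linarith
  · rw [decayWeight, mul_assoc A, ← Real.rpow_add (jb_pos ζ), ← sub_eq_add_neg]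
    ring

namespace IsWindow

theorem cellWindow_eq_zero_of_notMem [NeZero n] (hχ : IsWindow χ) (hτ₀ : 0 ≤ τ) (hτ : τ ≤ 1)
    {ζ ξ : Fin n → ℝ} (hξ : ξ ∉ closedBall ζ (cellRadius τ ζ)) : cellWindow χ τ ζ ξ = 0 := by
  by_contra hne
  exact hξ (mem_closedBall_iff_norm.2 ((hχ.norm_sub_le_of_cellWindow_ne_zero hτ₀ hτ hne).trans
    (half_le_self (cellRadius_pos τ ζ).le)))

theorem integrable_mul_cellWindow [NeZero n] (hχ : IsWindow χ) (hτ₀ : 0 ≤ τ) (hτ : τ ≤ 1)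
    {b : (Fin n → ℝ) → ℂ} (hb : Continuous b) (ζ : Fin n → ℝ) :
    Integrable fun ξ => b ξ * cellWindow χ τ ζ ξ :=
  (hb.mul (hχ.contDiff_cellWindow τ ζ).continuous).integrable_of_hasCompactSupport
    (hasCompactSupport_of_tsupport_subset_closedBall
      (hχ.tsupport_mul_cellWindow_subset hτ₀ hτ b ζ))

theorem continuous_cellKernel [NeZero n] (hχ : IsWindow χ) (hτ₀ : 0 ≤ τ) (hτ : τ ≤ 1)
    (hσ : Continuous (Function.uncurry σ)) (ζ : Fin n → ℝ) :
    Continuous fun p : (Fin n → ℝ) × (Fin n → ℝ) => cellKernel χ τ σ ζ p.1 p.2 := by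
  have hw := (hχ.contDiff_cellWindow τ ζ).continuous
  rw [← continuousOn_univ]
  refine continuousOn_integral_of_compact_support
    (isCompact_closedBall ζ (cellRadius τ ζ)) (Continuous.continuousOn ?_) fun p ξ _ hξ => ?_
  · have : Continuous fun q : ((Fin n → ℝ) × (Fin n → ℝ)) × (Fin n → ℝ) => σ q.1.1 q.2 :=
      hσ.comp (by fun_prop : Continuous fun q : ((Fin n → ℝ) × (Fin n → ℝ)) × (Fin n → ℝ) =>
        (q.1.1, q.2))
    unfold Function.uncurry
    fun_prop
  · simp only [hχ.cellWindow_eq_zero_of_notMem hτ₀ hτ hξ, mul_zero]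

end IsWindow

theorem SymbolClass.exists_isDominatedKernel_cellKernel [NeZero n] (hσ : SymbolClass m ρ δ σ)
    (hχ : IsWindow χ) (hτ₀ : 0 ≤ τ) (hτ : τ ≤ 1) (hτρ : τ ≤ ρ) :
    ∃ C ≥ 0, ∀ ζ, IsDominatedKernel (cellKernel χ τ σ ζ)
      fun z => C * jb ζ ^ (m - n * τ / 2) * decayWeight (cellRadius τ ζ) z := by
  obtain ⟨C, hC0, hC⟩ := hσ.exists_norm_cellKernel_xDeriv_le hχ hτ₀ hτ hτρ 0
  refine ⟨C, hC0, fun ζ => ⟨hχ.continuous_cellKernel hτ₀ hτ hσ.contDiff_uncurry.continuous ζ,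
    (integrable_decayWeight (cellRadius_pos τ ζ)).const_mul _, fun x z => ?_⟩⟩
  simpa only [Nat.cast_zero, mul_zero, add_zero, xDeriv_zero] using hC ⟨0, NeZero.pos n⟩ ζ x z

end CellKernel

section FrozenSymbol

variable {χ : (Fin n → ℝ) → ℂ} {m ρ δ τ κ : ℝ} {σ : (Fin n → ℝ) → (Fin n → ℝ) → ℂ}

theorem dirDeriv_sub_const {E : Type*} [NormedAddCommGroup E] [NormedSpace ℝ E] (v : E) (F : E → ℂ)
    (c : ℂ) : dirDeriv v (fun x => F x - c) = dirDeriv v F := by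
  ext x
  rw [dirDeriv, fderiv_sub_const, dirDeriv]

theorem pow_mul_norm_iterate_dirDeriv_one_le (s : ℝ) (v ξ : Fin n → ℝ) (j : ℕ) :
    s ^ j * ‖(dirDeriv v)^[j] (fun _ => 1) ξ‖ ≤ 1 := by
  cases j with
  | zero => simp
  | succ j =>
    have hconst (c : ℂ) : dirDeriv v (fun _ => c) = fun _ => 0 := by
      ext x
      simp [dirDeriv]
    rw [Function.iterate_succ_apply, hconst, Function.iterate_fixed (hconst 0)]
    simp

theorem IsWindow.exists_norm_IFT_cellWindow_le [NeZero n] (hχ : IsWindow χ) (hτ₀ : 0 ≤ τ)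
    (hτ : τ ≤ 1) (k : ℕ) :
    ∃ C ≥ 0, ∀ ζ z, ‖IFT (cellWindow χ τ ζ) z‖ ≤ C * jb ζ ^ (-(n * τ / 2)) *
      (cellRadius τ ζ ^ n / (1 + cellRadius τ ζ * ‖z‖) ^ k) := by
  obtain ⟨C, hC0, hC⟩ := hχ.exists_norm_IFT_mul_cellWindow_le hτ₀ hτ k
  refine ⟨C, hC0, fun ζ z => ?_⟩
  simpa only [one_mul] using hC ζ (fun _ => 1) 1 contDiff_const
    (fun i j _ ξ _ => pow_mul_norm_iterate_dirDeriv_one_le _ _ ξ j) z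

theorem IsWindow.integrable_cellWindow [NeZero n] (hχ : IsWindow χ) (hτ₀ : 0 ≤ τ) (hτ : τ ≤ 1)
    (ζ : Fin n → ℝ) : Integrable (cellWindow χ τ ζ) := by
  simpa only [one_mul] using
    hχ.integrable_mul_cellWindow hτ₀ hτ (continuous_const (y := (1 : ℂ))) ζ

theorem IsWindow.integrable_IFT_cellWindow [NeZero n] (hχ : IsWindow χ) (hτ₀ : 0 ≤ τ) (hτ : τ ≤ 1)
    (ζ : Fin n → ℝ) : Integrable (IFT (cellWindow χ τ ζ)) := by
  obtain ⟨C, -, hC⟩ := hχ.exists_norm_IFT_cellWindow_le hτ₀ hτ (n + 1)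
  exact ((integrable_decayWeight (cellRadius_pos τ ζ)).const_mul _).mono'
    (continuous_IFT (hχ.integrable_cellWindow hτ₀ hτ ζ)).aestronglyMeasurable (.of_forall (hC ζ))

theorem SymbolClass.norm_sub_le_of_mem_cell [NeZero n] (hσ : SymbolClass m ρ δ σ)
    {B : ℝ} {x ζ ξ : Fin n → ℝ} (hξ : ξ ∈ closedBall ζ (cellRadius τ ζ))
    (hB : ∀ l, ∀ η ∈ closedBall ζ (cellRadius τ ζ),
      cellRadius τ ζ * ‖dirDeriv (Pi.single l 1) (σ x) η‖ ≤ B) : ‖σ x ξ - σ x ζ‖ ≤ n * B := by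
  have hs := cellRadius_pos τ ζ
  have hζ := mem_closedBall_self (x := ζ) hs.le
  have hB0 : 0 ≤ B := le_trans (by positivity) (hB ⟨0, NeZero.pos n⟩ ζ hζ)
  calc ‖σ x ξ - σ x ζ‖ ≤ n * (B / cellRadius τ ζ) * ‖ξ - ζ‖ :=
        norm_sub_le_of_norm_dirDeriv_le (hσ.contDiff_uncurry.comp (contDiff_prodMk_right x))
          (convex_closedBall ζ _) (by positivity)
          (fun l η hη => (le_div_iff₀' hs).2 (hB l η hη)) hζ hξ
    _ ≤ n * (B / cellRadius τ ζ) * cellRadius τ ζ := by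
        gcongr
        exact mem_closedBall_iff_norm.1 hξ
    _ = n * B := by field_simp

theorem SymbolClass.exists_pow_mul_norm_iterate_dirDeriv_sub_le [NeZero n]
    (hσ : SymbolClass m ρ δ σ) (hτ : τ ≤ 1) (hκ₀ : 0 ≤ κ) (hκ : κ ≤ ρ - τ) (J : ℕ) :
    ∃ A ≥ 0, ∀ l, ∀ j ≤ J, ∀ x ζ, ∀ ξ ∈ closedBall ζ (cellRadius τ ζ),
      cellRadius τ ζ ^ j * ‖(dirDeriv (Pi.single l 1))^[j] (fun η => σ x η - σ x ζ) ξ‖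
        ≤ A * jb ζ ^ (m - κ) := by
  obtain ⟨A, hA0, hA⟩ := hσ.exists_pow_mul_norm_iterate_dirDeriv_xDeriv_le hτ (J + 1) 0
  have hderiv (l : Fin n) {j : ℕ} (hj : j ≤ J) (x ζ ξ : Fin n → ℝ)
      (hξ : ξ ∈ closedBall ζ (cellRadius τ ζ)) :
      cellRadius τ ζ ^ (j + 1) * ‖(dirDeriv (Pi.single l 1))^[j + 1] (σ x) ξ‖
        ≤ A * jb ζ ^ (m - κ) := by
    refine (hA l l (j + 1) (by lia) x ζ ξ hξ).trans ?_
    have hexp : m + δ * (0 : ℕ) - (ρ - τ) * (j + 1 : ℕ) ≤ m - κ := by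
      have : 0 ≤ (ρ - τ) * j := mul_nonneg (hκ₀.trans hκ) j.cast_nonneg
      push_cast
      linarith
    exact mul_le_mul_of_nonneg_left (Real.rpow_le_rpow_of_exponent_le (one_le_jb ζ) hexp) hA0
  refine ⟨(n + 1) * A, by positivity, fun l j hj x ζ ξ hξ => ?_⟩
  have := jb_rpow_pos ζ (m - κ)
  have := mul_nonneg hA0 this.le
  have : (0 : ℝ) ≤ n := n.cast_nonneg
  cases j with
  | zero =>
    have := hσ.norm_sub_le_of_mem_cell hξ fun l η hη => by simpa using hderiv l J.zero_le x ζ η hη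
    rw [pow_zero, one_mul, Function.iterate_zero_apply]
    linarith
  | succ j =>
    rw [Function.iterate_succ_apply, dirDeriv_sub_const, ← Function.iterate_succ_apply]
    have := hderiv l (Nat.le_of_succ_le hj) x ζ ξ hξ
    nlinarith

theorem SymbolClass.exists_norm_sub_comp_sub_le (hσ : SymbolClass m ρ δ σ) :
    ∃ A ≥ 0, ∀ ζ x z, ‖σ x ζ - σ (x - z) ζ‖ ≤ A * jb ζ ^ (m + δ) * ‖z‖ := by
  obtain ⟨A, hA0, hA⟩ := hσ.exists_norm_iterate_dirDeriv_xDeriv_le 0 1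
  refine ⟨n * A, by positivity, fun ζ x z => ?_⟩
  have := jb_rpow_pos ζ (m + δ)
  have hlip := norm_sub_le_of_norm_dirDeriv_le (F := fun y => σ y ζ)
    (hσ.contDiff_uncurry.comp (contDiff_prodMk_left ζ)) convex_univ
    (A := A * jb ζ ^ (m + δ)) (by positivity)
    (fun i y _ => by simpa [xDeriv] using hA i i 0 le_rfl y ζ) (mem_univ (x - z)) (mem_univ x)
  simpa [mul_assoc] using hlip

end FrozenSymbol

section NearDiagonal

variable {χ : (Fin n → ℝ) → ℂ} {m ρ δ τ κ : ℝ} {σ : (Fin n → ℝ) → (Fin n → ℝ) → ℂ}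

theorem IsWindow.IFT_sub_mul_cellWindow [NeZero n] (hχ : IsWindow χ) (hτ₀ : 0 ≤ τ) (hτ : τ ≤ 1)
    {b : (Fin n → ℝ) → ℂ} (hb : Continuous b) (c : ℂ) (ζ z : Fin n → ℝ) :
    IFT (fun ξ => (b ξ - c) * cellWindow χ τ ζ ξ) z =
      IFT (fun ξ => b ξ * cellWindow χ τ ζ ξ) z - c * IFT (cellWindow χ τ ζ) z := by
  have hsub := IFT_add (hχ.integrable_mul_cellWindow hτ₀ hτ hb ζ)
    ((hχ.integrable_cellWindow hτ₀ hτ ζ).const_mul (-c)) z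
  have hconst : IFT (fun ξ => -c * cellWindow χ τ ζ ξ) z = -c * IFT (cellWindow χ τ ζ) z := by
    simp only [IFT, mul_left_comm _ (-c), integral_const_mul]
  rw [sub_eq_add_neg, ← neg_mul, ← hconst, ← hsub]
  congr! 2 with ξ
  ring

theorem norm_mul_div_one_add_mul_pow_succ_le {s : ℝ} (hs : 0 < s) (z : Fin n → ℝ) (N : ℕ) :
    ‖z‖ * (s ^ n / (1 + s * ‖z‖) ^ (N + 1)) ≤ s⁻¹ * (s ^ n / (1 + s * ‖z‖) ^ N) := by
  have : 0 < 1 + s * ‖z‖ := by positivity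
  have hz : ‖z‖ ≤ s⁻¹ * (1 + s * ‖z‖) := by
    rw [le_inv_mul_iff₀ hs]
    linarith
  calc ‖z‖ * (s ^ n / (1 + s * ‖z‖) ^ (N + 1))
      ≤ s⁻¹ * (1 + s * ‖z‖) * (s ^ n / (1 + s * ‖z‖) ^ (N + 1)) := by gcongr
    _ = s⁻¹ * (s ^ n / (1 + s * ‖z‖) ^ N) := by rw [pow_succ]; field_simp

theorem SymbolClass.exists_norm_cellKernel_sub_le [NeZero n] (hσ : SymbolClass m ρ δ σ)
    (hχ : IsWindow χ) (hτ₀ : 0 ≤ τ) (hτ : τ ≤ 1) (hκ₀ : 0 ≤ κ) (hκ : κ ≤ ρ - τ) :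
    ∃ C ≥ 0, ∀ ζ x z, ‖cellKernel χ τ σ ζ x z - σ x ζ * IFT (cellWindow χ τ ζ) z‖ ≤
      C * jb ζ ^ (m - κ - n * τ / 2) * decayWeight (cellRadius τ ζ) z := by
  obtain ⟨A, hA0, hA⟩ := hσ.exists_pow_mul_norm_iterate_dirDeriv_sub_le hτ hκ₀ hκ (n + 1)
  obtain ⟨C, hC0, hC⟩ := hχ.exists_norm_IFT_mul_cellWindow_le hτ₀ hτ (n + 1)
  refine ⟨C * A, by positivity, fun ζ x z => ?_⟩
  have hσx : ContDiff ℝ ∞ (σ x) := hσ.contDiff_uncurry.comp (contDiff_prodMk_right x)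
  rw [cellKernel, ← hχ.IFT_sub_mul_cellWindow hτ₀ hτ hσx.continuous]
  refine (hC ζ _ _ (hσx.sub contDiff_const) (fun l j hj ξ hξ => hA l j hj x ζ ξ hξ) z).trans_eq ?_
  rw [decayWeight, mul_assoc A, ← Real.rpow_add (jb_pos ζ), ← sub_eq_add_neg]
  ring

theorem SymbolClass.exists_norm_sub_mul_IFT_cellWindow_le [NeZero n] (hσ : SymbolClass m ρ δ σ)
    (hχ : IsWindow χ) (hτ₀ : 0 ≤ τ) (hτ : τ ≤ 1) (hκ : κ ≤ τ - δ) :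
    ∃ C ≥ 0, ∀ ζ x z, ‖(σ x ζ - σ (x - z) ζ) * IFT (cellWindow χ τ ζ) z‖ ≤
      C * jb ζ ^ (m - κ - n * τ / 2) * decayWeight (cellRadius τ ζ) z := by
  obtain ⟨A, hA0, hA⟩ := hσ.exists_norm_sub_comp_sub_le
  obtain ⟨C, hC0, hC⟩ := hχ.exists_norm_IFT_cellWindow_le hτ₀ hτ (n + 2)
  refine ⟨A * C * (2 * n), by positivity, fun ζ x z => ?_⟩
  have hs := cellRadius_pos τ ζ
  have := jb_rpow_pos ζ
  have hinv : (cellRadius τ ζ)⁻¹ = 2 * n * jb ζ ^ (-τ) := by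
    rw [cellRadius, inv_div, Real.rpow_neg (jb_pos ζ).le, div_eq_mul_inv]
  calc ‖(σ x ζ - σ (x - z) ζ) * IFT (cellWindow χ τ ζ) z‖
      ≤ A * jb ζ ^ (m + δ) * ‖z‖ * (C * jb ζ ^ (-(n * τ / 2)) *
          (cellRadius τ ζ ^ n / (1 + cellRadius τ ζ * ‖z‖) ^ (n + 2))) := by
        rw [norm_mul]
        exact mul_le_mul (hA ζ x z) (hC ζ z) (norm_nonneg _)
          (mul_nonneg (mul_nonneg hA0 (this _).le) (norm_nonneg z))
    _ = A * C * (jb ζ ^ (m + δ) * jb ζ ^ (-(n * τ / 2))) * (‖z‖ *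
          (cellRadius τ ζ ^ n / (1 + cellRadius τ ζ * ‖z‖) ^ (n + 2))) := by ring
    _ ≤ A * C * (jb ζ ^ (m + δ) * jb ζ ^ (-(n * τ / 2))) *
          ((cellRadius τ ζ)⁻¹ * decayWeight (cellRadius τ ζ) z) :=
        mul_le_mul_of_nonneg_left (norm_mul_div_one_add_mul_pow_succ_le hs z (n + 1))
          (mul_nonneg (by positivity) (mul_pos (this _) (this _)).le)
    _ = A * C * (2 * n) * jb ζ ^ (m + δ + -(n * τ / 2) + -τ) *
          decayWeight (cellRadius τ ζ) z := by
        rw [hinv, Real.rpow_add (jb_pos ζ) (m + δ + -(n * τ / 2)), Real.rpow_add (jb_pos ζ) (m + δ)]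
        ring
    _ ≤ A * C * (2 * n) * jb ζ ^ (m - κ - n * τ / 2) * decayWeight (cellRadius τ ζ) z := by
        refine mul_le_mul_of_nonneg_right (mul_le_mul_of_nonneg_left
          (Real.rpow_le_rpow_of_exponent_le (one_le_jb ζ) (by linarith)) (by positivity))
          (decayWeight_nonneg hs z)

/-- The kernel of `θ_ζ(D) σ(x, ζ)`, whose form is positive where `Re σ` is. -/
def frozenKernel (χ : (Fin n → ℝ) → ℂ) (τ : ℝ) (σ : (Fin n → ℝ) → (Fin n → ℝ) → ℂ)
    (ζ x z : Fin n → ℝ) : ℂ :=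
  σ (x - z) ζ * IFT (cellWindow χ τ ζ) z

theorem SymbolClass.exists_norm_cellKernel_sub_frozenKernel_le [NeZero n]
    (hσ : SymbolClass m ρ δ σ) (hχ : IsWindow χ) (hτ₀ : 0 ≤ τ) (hτ : τ ≤ 1) (hκ₀ : 0 ≤ κ)
    (hκρ : κ ≤ ρ - τ) (hκδ : κ ≤ τ - δ) :
    ∃ C ≥ 0, ∀ ζ x z, ‖cellKernel χ τ σ ζ x z - frozenKernel χ τ σ ζ x z‖ ≤
      C * jb ζ ^ (m - κ - n * τ / 2) * decayWeight (cellRadius τ ζ) z := by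
  obtain ⟨C, hC0, hC⟩ := hσ.exists_norm_cellKernel_sub_le hχ hτ₀ hτ hκ₀ hκρ
  obtain ⟨C', hC'0, hC'⟩ := hσ.exists_norm_sub_mul_IFT_cellWindow_le hχ hτ₀ hτ hκδ
  refine ⟨C + C', by positivity, fun ζ x z => ?_⟩
  calc ‖cellKernel χ τ σ ζ x z - frozenKernel χ τ σ ζ x z‖
      = ‖(cellKernel χ τ σ ζ x z - σ x ζ * IFT (cellWindow χ τ ζ) z)
          + (σ x ζ - σ (x - z) ζ) * IFT (cellWindow χ τ ζ) z‖ := by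
        rw [frozenKernel]
        ring_nf
    _ ≤ _ := (norm_add_le _ _).trans (add_le_add (hC ζ x z) (hC' ζ x z))
    _ = (C + C') * jb ζ ^ (m - κ - n * τ / 2) * decayWeight (cellRadius τ ζ) z := by ring

theorem SymbolClass.exists_norm_le (hσ : SymbolClass m ρ δ σ) [NeZero n] :
    ∃ A ≥ 0, ∀ x ξ, ‖σ x ξ‖ ≤ A * jb ξ ^ m := by
  obtain ⟨A, hA0, hA⟩ := hσ.exists_norm_iterate_dirDeriv_xDeriv_le 0 0
  refine ⟨A, hA0.le, fun x ξ => ?_⟩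
  simpa [xDeriv_zero] using hA ⟨0, NeZero.pos n⟩ ⟨0, NeZero.pos n⟩ 0 le_rfl x ξ

theorem SymbolClass.exists_isDominatedKernel_frozenKernel [NeZero n] (hσ : SymbolClass m ρ δ σ)
    (hχ : IsWindow χ) (hτ₀ : 0 ≤ τ) (hτ : τ ≤ 1) (ζ : Fin n → ℝ) :
    ∃ H, IsDominatedKernel (frozenKernel χ τ σ ζ) H := by
  obtain ⟨A, -, hA⟩ := hσ.exists_norm_le
  have hζ : Continuous fun y => σ y ζ :=
    hσ.contDiff_uncurry.continuous.comp (by fun_prop : Continuous fun y => (y, ζ))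
  exact ⟨_, isDominatedKernel_mul (a := fun x z => σ (x - z) ζ) (by fun_prop)
    (fun x z => hA (x - z) ζ) (continuous_IFT (hχ.integrable_cellWindow hτ₀ hτ ζ))
    (hχ.integrable_IFT_cellWindow hτ₀ hτ ζ)⟩

theorem IsWindow.conj_IFT_cellWindow_neg (hχ : IsWindow χ) (ζ z : Fin n → ℝ) :
    conj (IFT (cellWindow χ τ ζ) (-z)) = IFT (cellWindow χ τ ζ) z := by
  rw [IFT, ← integral_conj]
  refine integral_congr_ae (.of_forall fun ξ => ?_)
  simp only [map_mul, conj_expi, dotp_neg_left, neg_neg, hχ.conj_cellWindow]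

end NearDiagonal

section NearForm

variable {χ g : (Fin n → ℝ) → ℂ} {c m ρ δ τ κ : ℝ} {σ : (Fin n → ℝ) → (Fin n → ℝ) → ℂ}

namespace IsWindow

theorem exists_norm_cellWindow_le [NeZero n] (hχ : IsWindow χ) (hτ₀ : 0 ≤ τ) (hτ : τ ≤ 1) :
    ∃ C ≥ 0, ∀ ζ ξ, ‖cellWindow χ τ ζ ξ‖ ≤ C * jb ζ ^ (-(n * τ / 2)) := by
  obtain ⟨C, hC0, hC⟩ := hχ.exists_pow_mul_norm_iterate_dirDeriv_cellWindow_le hτ₀ hτ 0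
  refine ⟨C, hC0, fun ζ ξ => ?_⟩
  by_cases hξ : ξ ∈ closedBall ζ (cellRadius τ ζ)
  · simpa using hC ⟨0, NeZero.pos n⟩ 0 le_rfl ζ ξ hξ
  · rw [hχ.cellWindow_eq_zero_of_notMem hτ₀ hτ hξ, norm_zero]
    exact mul_nonneg hC0 (jb_rpow_pos ζ _).le

theorem memL1L2_cellWindow_mul [NeZero n] (hχ : IsWindow χ) (hτ₀ : 0 ≤ τ) (hτ : τ ≤ 1)
    (hg : MemL1L2 g) (ζ : Fin n → ℝ) : MemL1L2 fun ξ => cellWindow χ τ ζ ξ * g ξ := by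
  obtain ⟨C, -, hC⟩ := hχ.exists_norm_cellWindow_le hτ₀ hτ
  refine hg.of_le_mul
    ((hχ.contDiff_cellWindow τ ζ).continuous.aestronglyMeasurable.mul hg.integrable.1)
    (c := C * jb ζ ^ (-(n * τ / 2))) fun ξ => ?_
  rw [norm_mul]
  gcongr
  exact hC ζ ξ

theorem cellWindow_mul_indicator [NeZero n] (hχ : IsWindow χ) (hτ₀ : 0 ≤ τ) (hτ : τ ≤ 1)
    (g : (Fin n → ℝ) → ℂ) (ζ ξ : Fin n → ℝ) :
    cellWindow χ τ ζ ξ * (closedBall ζ (cellRadius τ ζ)).indicator g ξ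
      = cellWindow χ τ ζ ξ * g ξ := by
  by_cases hξ : ξ ∈ closedBall ζ (cellRadius τ ζ)
  · rw [indicator_of_mem hξ]
  · rw [hχ.cellWindow_eq_zero_of_notMem hτ₀ hτ hξ, zero_mul, zero_mul]

theorem exists_l2norm_cellWindow_mul_le [NeZero n] (hχ : IsWindow χ) (hτ₀ : 0 ≤ τ) (hτ : τ ≤ 1) :
    ∃ C ≥ 0, ∀ ζ g, MemL1L2 g → l2norm (fun ξ => cellWindow χ τ ζ ξ * g ξ) ≤
      C * jb ζ ^ (-(n * τ / 2)) * l2norm ((closedBall ζ (cellRadius τ ζ)).indicator g) := by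
  obtain ⟨C, hC0, hC⟩ := hχ.exists_norm_cellWindow_le hτ₀ hτ
  refine ⟨C, hC0, fun ζ g hg => ?_⟩
  refine l2norm_le_mul_l2norm (hg.indicator measurableSet_closedBall)
    (mul_nonneg hC0 (jb_rpow_pos ζ _).le) fun ξ => ?_
  rw [← hχ.cellWindow_mul_indicator hτ₀ hτ, norm_mul]
  gcongr
  exact hC ζ ξ

end IsWindow

theorem SymbolClass.kernelForm_frozenKernel_eq [NeZero n] (hσ : SymbolClass m ρ δ σ)
    (hχ : IsWindow χ) (hτ₀ : 0 ≤ τ) (hτ : τ ≤ 1) (hg : MemL1L2 g) (ζ : Fin n → ℝ) :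
    kernelForm (frozenKernel χ τ σ ζ) (IFT fun ξ => cellWindow χ τ ζ ξ * g ξ)
        (IFT ((closedBall ζ (cellRadius τ ζ)).indicator g))
      = ∫ x, σ x ζ * ((‖IFT (fun ξ => cellWindow χ τ ζ ξ * g ξ) x‖ ^ 2 : ℝ) : ℂ) := by
  obtain ⟨A, -, hA⟩ := hσ.exists_norm_le
  have hθ := hχ.integrable_cellWindow hτ₀ hτ ζ
  have hθg := hχ.memL1L2_cellWindow_mul hτ₀ hτ hg ζ
  have hζ : Continuous fun x => σ x ζ :=
    hσ.contDiff_uncurry.continuous.comp (by fun_prop : Continuous fun x => (x, ζ))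
  have hk := hχ.integrable_IFT_cellWindow hτ₀ hτ ζ
  refine (kernelForm_comp_sub_mul_eq hζ (fun x => hA x ζ) (continuous_IFT hθ) hk
    (hχ.conj_IFT_cellWindow_neg ζ) hθg.memLp_IFT (continuous_IFT hθg.integrable)
    (hg.indicator measurableSet_closedBall)).trans ?_
  simp only [FT_IFT (hχ.contDiff_cellWindow τ ζ).continuous hθ hk,
    hχ.cellWindow_mul_indicator hτ₀ hτ, mul_assoc, mul_conj, normSq_eq_norm_sq]

theorem SymbolClass.le_re_kernelForm_frozenKernel [NeZero n] (hσ : SymbolClass m ρ δ σ)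
    (hχ : IsWindow χ) (hτ₀ : 0 ≤ τ) (hτ : τ ≤ 1) (hell : ∀ x ξ, c * jb ξ ^ m ≤ (σ x ξ).re)
    (hg : MemL1L2 g) (ζ : Fin n → ℝ) :
    c * jb ζ ^ m * l2norm (fun ξ => cellWindow χ τ ζ ξ * g ξ) ^ 2 ≤
      (kernelForm (frozenKernel χ τ σ ζ) (IFT fun ξ => cellWindow χ τ ζ ξ * g ξ)
        (IFT ((closedBall ζ (cellRadius τ ζ)).indicator g))).re := by
  obtain ⟨A, -, hA⟩ := hσ.exists_norm_le
  have hθg := hχ.memL1L2_cellWindow_mul hτ₀ hτ hg ζ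
  have hsq := hθg.memLp_IFT.integrable_norm_pow (by norm_num : (2 : ℕ) ≠ 0)
  have hζ : Continuous fun x => σ x ζ :=
    hσ.contDiff_uncurry.continuous.comp (by fun_prop : Continuous fun x => (x, ζ))
  have hint : Integrable fun x =>
      σ x ζ * ((‖IFT (fun ξ => cellWindow χ τ ζ ξ * g ξ) x‖ ^ 2 : ℝ) : ℂ) :=
    hsq.ofReal.bdd_mul hζ.aestronglyMeasurable (.of_forall fun x => hA x ζ)
  rw [hσ.kernelForm_frozenKernel_eq hχ hτ₀ hτ hg ζ, ← l2norm_IFT hθg, sq_l2norm,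
    ← integral_const_mul]
  refine (integral_mono (hsq.const_mul _) hint.re fun x => ?_).trans_eq (integral_re hint)
  simpa only [RCLike.re_to_complex, re_mul_ofReal] using
    mul_le_mul_of_nonneg_right (hell x ζ) (sq_nonneg _)

theorem SymbolClass.exists_norm_kernelForm_sub_le [NeZero n] (hσ : SymbolClass m ρ δ σ)
    (hχ : IsWindow χ) (hτ₀ : 0 ≤ τ) (hτ : τ ≤ 1) (hκ₀ : 0 ≤ κ) (hκρ : κ ≤ ρ - τ)
    (hκδ : κ ≤ τ - δ) :
    ∃ C ≥ 0, ∀ ζ w v, MemLp w 2 → Continuous w → MemLp v 2 → Continuous v →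
      ‖kernelForm (cellKernel χ τ σ ζ) w v - kernelForm (frozenKernel χ τ σ ζ) w v‖
        ≤ C * jb ζ ^ (m - κ - n * τ / 2) * (l2norm w * l2norm v) := by
  obtain ⟨C, hC0, hC⟩ := hσ.exists_norm_cellKernel_sub_frozenKernel_le hχ hτ₀ hτ hκ₀ hκρ hκδ
  obtain ⟨C', -, hcell⟩ := hσ.exists_isDominatedKernel_cellKernel hχ hτ₀ hτ
    (by linarith : τ ≤ ρ)
  have hI : 0 ≤ ∫ z : Fin n → ℝ, decayWeight 1 z :=
    integral_nonneg fun z => decayWeight_nonneg one_pos z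
  refine ⟨C * ∫ z : Fin n → ℝ, decayWeight 1 z, by positivity, fun ζ w v hw hwc hv hvc => ?_⟩
  obtain ⟨H, hfrozen⟩ := hσ.exists_isDominatedKernel_frozenKernel hχ hτ₀ hτ ζ
  have hs := cellRadius_pos τ ζ
  have hdiff : IsDominatedKernel
      (fun x z => cellKernel χ τ σ ζ x z - frozenKernel χ τ σ ζ x z)
      fun z => C * jb ζ ^ (m - κ - n * τ / 2) * decayWeight (cellRadius τ ζ) z :=
    ⟨(hcell ζ).continuous.sub hfrozen.continuous, (integrable_decayWeight hs).const_mul _, hC ζ⟩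
  rw [← (hcell ζ).kernelForm_sub hfrozen hw hwc hv hvc]
  refine (hdiff.norm_kernelForm_le hw hv).trans_eq ?_
  rw [integral_const_mul, integral_decayWeight hs]
  ring

theorem SymbolClass.exists_le_re_kernelForm_near [NeZero n] (hσ : SymbolClass m ρ δ σ)
    (hχ : IsWindow χ) (hτ₀ : 0 ≤ τ) (hτ : τ ≤ 1) (hκ₀ : 0 ≤ κ) (hκρ : κ ≤ ρ - τ)
    (hκδ : κ ≤ τ - δ) (hell : ∀ x ξ, c * jb ξ ^ m ≤ (σ x ξ).re) :
    ∃ C ≥ 0, ∀ ζ g, MemL1L2 g →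
      c * jb ζ ^ m * l2norm (fun ξ => cellWindow χ τ ζ ξ * g ξ) ^ 2
          - C * jb ζ ^ (m - κ - n * τ) * l2norm ((closedBall ζ (cellRadius τ ζ)).indicator g) ^ 2
        ≤ (kernelForm (cellKernel χ τ σ ζ) (IFT fun ξ => cellWindow χ τ ζ ξ * g ξ)
            (IFT ((closedBall ζ (cellRadius τ ζ)).indicator g))).re := by
  obtain ⟨C, hC0, hC⟩ := hσ.exists_norm_kernelForm_sub_le hχ hτ₀ hτ hκ₀ hκρ hκδ
  obtain ⟨C', hC'0, hC'⟩ := hχ.exists_l2norm_cellWindow_mul_le hτ₀ hτ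
  refine ⟨C * C', by positivity, fun ζ g hg => ?_⟩
  have hcell := hg.indicator (measurableSet_closedBall (x := ζ) (ε := cellRadius τ ζ))
  have hθg := hχ.memL1L2_cellWindow_mul hτ₀ hτ hg ζ
  have hfrozen := hσ.le_re_kernelForm_frozenKernel hχ hτ₀ hτ hell hg ζ
  have hdiff := (abs_le.1 ((abs_re_le_norm _).trans (hC ζ _ _ hθg.memLp_IFT
    (continuous_IFT hθg.integrable) hcell.memLp_IFT (continuous_IFT hcell.integrable)))).1
  rw [l2norm_IFT hθg, l2norm_IFT hcell, sub_re] at hdiff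
  have herr : C * jb ζ ^ (m - κ - n * τ / 2) * (l2norm (fun ξ => cellWindow χ τ ζ ξ * g ξ) *
      l2norm ((closedBall ζ (cellRadius τ ζ)).indicator g)) ≤
      C * C' * jb ζ ^ (m - κ - n * τ) *
        l2norm ((closedBall ζ (cellRadius τ ζ)).indicator g) ^ 2 := by
    have hexp : jb ζ ^ (m - κ - n * τ)
        = jb ζ ^ (m - κ - n * τ / 2) * jb ζ ^ (-(n * τ / 2)) := by
      rw [← Real.rpow_add (jb_pos ζ)]
      ring_nf
    rw [hexp]
    refine (mul_le_mul_of_nonneg_left (mul_le_mul_of_nonneg_right (hC' ζ g hg) (l2norm_nonneg _))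
      (mul_nonneg hC0 (jb_rpow_pos ζ _).le)).trans_eq ?_
    ring
  linarith

end NearForm

section FarSlice

variable {χ g : (Fin n → ℝ) → ℂ} {m ρ δ τ ε : ℝ} {σ : (Fin n → ℝ) → (Fin n → ℝ) → ℂ}

theorem hasDerivAt_comp_add_smul {f : (Fin n → ℝ) → ℂ} {f' : ℂ} {x v : Fin n → ℝ} {t : ℝ}
    (h : HasLineDerivAt ℝ f f' (x + t • v) v) : HasDerivAt (fun s : ℝ => f (x + s • v)) f' t := by
  have hshift : HasDerivAt (fun s : ℝ => f (x + t • v + s • v)) f' (t - t) := by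
    rwa [sub_self]
  refine (hshift.comp_sub_const t t).congr_of_eventuallyEq (.of_forall fun s => ?_)
  simp only [sub_smul, add_add_sub_cancel]

theorem SymbolClass.hasLineDerivAt_cellKernel_xDeriv [NeZero n] (hσ : SymbolClass m ρ δ σ)
    (hχ : IsWindow χ) (hτ₀ : 0 ≤ τ) (hτ : τ ≤ 1) (i : Fin n) (k : ℕ) (ζ x z : Fin n → ℝ) :
    HasLineDerivAt ℝ (fun y => cellKernel χ τ (xDeriv i k σ) ζ y z)
      (cellKernel χ τ (xDeriv i (k + 1) σ) ζ x z) x (Pi.single i 1) := by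
  obtain ⟨A, -, hA⟩ := hσ.exists_norm_iterate_dirDeriv_xDeriv_le 0 (k + 1)
  have hslice (l : ℕ) (y : Fin n → ℝ) : Continuous (xDeriv i l σ y) :=
    (contDiff_xDeriv hσ.contDiff_uncurry i l).continuous.comp (Continuous.prodMk_right y)
  have hint (l : ℕ) (y : Fin n → ℝ) :
      Integrable fun ξ => expi (dotp z ξ) * (xDeriv i l σ y ξ * cellWindow χ τ ζ ξ) := by
    simpa only [mul_assoc, Pi.mul_apply] using hχ.integrable_mul_cellWindow hτ₀ hτ
      ((by fun_prop : Continuous fun ξ => expi (dotp z ξ)).mul (hslice l y)) ζ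
  have hbound := (hχ.integrable_mul_cellWindow hτ₀ hτ (continuous_ofReal.comp
    ((continuous_jb_rpow (m + δ * (k + 1 : ℕ))).const_mul A)) ζ).norm
  simp only [HasLineDerivAt, cellKernel, IFT]
  refine (hasDerivAt_integral_of_dominated_loc_of_deriv_le (x₀ := (0 : ℝ)) (s := univ)
    (F := fun t ξ => expi (dotp z ξ) *
      (xDeriv i k σ (x + t • Pi.single i 1) ξ * cellWindow χ τ ζ ξ))
    (F' := fun t ξ => expi (dotp z ξ) *
      (xDeriv i (k + 1) σ (x + t • Pi.single i 1) ξ * cellWindow χ τ ζ ξ))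
    univ_mem (.of_forall fun t => (hint k (x + t • Pi.single i 1)).1)
    (hint k (x + (0 : ℝ) • Pi.single i 1)) (hint (k + 1) (x + (0 : ℝ) • Pi.single i 1)).1
    (.of_forall fun ξ t _ => ?_) hbound (.of_forall fun ξ t _ => ?_)).2.congr_deriv
      (by simp only [zero_smul, add_zero])
  · have hle : ‖xDeriv i (k + 1) σ (x + t • Pi.single i 1) ξ‖
        ≤ A * jb ξ ^ (m + δ * (k + 1 : ℕ)) := by
      simpa using hA i i 0 le_rfl (x + t • Pi.single i 1) ξ
    simp only [norm_mul, norm_expi, one_mul, Function.comp_apply, norm_real]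
    gcongr
    exact hle.trans ((Real.le_norm_self _).trans_eq (norm_mul _ _))
  · exact ((hasDerivAt_comp_add_smul (hasLineDerivAt_xDeriv hσ.contDiff_uncurry i k
      (x + t • Pi.single i 1) ξ)).mul_const _).const_mul _

/-- The frequencies outside the cell of `ζ` whose largest displacement from `ζ` is along `ε • e_i`.
For `ε = ±1` these sectors cover the complement of the cell. -/
def farSector (τ : ℝ) (ζ : Fin n → ℝ) (i : Fin n) (ε : ℝ) : Set (Fin n → ℝ) :=
  {η | cellRadius τ ζ < ‖η - ζ‖ ∧ ε * (η i - ζ i) = ‖η - ζ‖}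

theorem measurableSet_farSector (τ : ℝ) (ζ : Fin n → ℝ) (i : Fin n) (ε : ℝ) :
    MeasurableSet (farSector τ ζ i ε) :=
  MeasurableSet.inter
    (measurableSet_lt (f := fun _ : Fin n → ℝ => cellRadius τ ζ) (by fun_prop) (by fun_prop))
    (measurableSet_eq_fun (f := fun η : Fin n → ℝ => ε * (η i - ζ i)) (by fun_prop) (by fun_prop))

theorem compl_cell_subset_iUnion_farSector [NeZero n] (τ : ℝ) (ζ : Fin n → ℝ) :
    (closedBall ζ (cellRadius τ ζ))ᶜ ⊆
      ⋃ j ∈ (Finset.univ : Finset (Fin n)) ×ˢ ({1, -1} : Finset ℝ), farSector τ ζ j.1 j.2 := by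
  intro η hη
  rw [mem_compl_iff, mem_closedBall_iff_norm, not_le] at hη
  obtain ⟨i, hi⟩ := exists_abs_apply_eq_norm (η - ζ)
  rw [Pi.sub_apply] at hi
  rcases abs_choice (η i - ζ i) with hpos | hneg
  · exact mem_iUnion₂.2 ⟨(i, 1), by simp, hη, by rw [one_mul, ← hpos, hi]⟩
  · exact mem_iUnion₂.2 ⟨(i, -1), by simp, hη, by rw [neg_one_mul, ← hneg, hi]⟩

theorem dotp_smul_single (i : Fin n) (ε : ℝ) (η : Fin n → ℝ) :
    dotp (ε • Pi.single i 1) η = ε * η i := by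
  rw [dotp_comm, dotp_smul_right, dotp_single, mul_one]

theorem IsWindow.isSlabSeparated_farSector [NeZero n] (hχ : IsWindow χ) (hτ₀ : 0 ≤ τ) (hτ : τ ≤ 1)
    (hg : MemL1L2 g) (hε : |ε| = 1) {ζ : Fin n → ℝ} {i : Fin n} {T : Set (Fin n → ℝ)}
    (hT : MeasurableSet T) (hTS : T ⊆ farSector τ ζ i ε) (z : Fin n → ℝ) :
    IsSlabSeparated (ε • Pi.single i 1) (ε * ζ i + cellRadius τ ζ / 2) (cellRadius τ ζ / 2)
      (fun ξ => expi (dotp z ξ) * (cellWindow χ τ ζ ξ * g ξ)) (T.indicator g) where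
  memL1L2_left := (hχ.memL1L2_cellWindow_mul hτ₀ hτ hg ζ).expi_mul z
  memL1L2_right := hg.indicator hT
  pos := half_pos (cellRadius_pos τ ζ)
  left_le ξ hξ := by
    have hcell := hχ.norm_sub_le_of_cellWindow_ne_zero hτ₀ hτ
      (left_ne_zero_of_mul (right_ne_zero_of_mul hξ))
    have hcoord : ε * (ξ i - ζ i) ≤ ‖ξ - ζ‖ := by
      calc ε * (ξ i - ζ i) ≤ |ε| * |ξ i - ζ i| := (le_abs_self _).trans_eq (abs_mul _ _)
        _ ≤ ‖ξ - ζ‖ := by rw [hε, one_mul]; exact norm_le_pi_norm (ξ - ζ) i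
    rw [dotp_smul_single]
    linarith
  le_right η hη := by
    obtain ⟨hfar, hcoord⟩ := hTS (mem_of_indicator_ne_zero hη)
    rw [dotp_smul_single]
    linarith

theorem SymbolClass.exists_norm_integral_cellKernel_mul_le [NeZero n] (hσ : SymbolClass m ρ δ σ)
    (hχ : IsWindow χ) (hτ₀ : 0 ≤ τ) (hτ : τ ≤ 1) (hτρ : τ ≤ ρ) (k : ℕ) :
    ∃ C ≥ 0, ∀ ζ z i ε T g, |ε| = 1 → MeasurableSet T → T ⊆ farSector τ ζ i ε → MemL1L2 g →
      ‖∫ x, cellKernel χ τ σ ζ x z * IFT (fun ξ => cellWindow χ τ ζ ξ * g ξ) (x - z) *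
          conj (IFT (T.indicator g) x)‖
        ≤ C * jb ζ ^ (m + δ * k - n * τ / 2) * decayWeight (cellRadius τ ζ) z *
          (1 / √(cellRadius τ ζ / 2) ^ k * (l2norm (fun ξ => cellWindow χ τ ζ ξ * g ξ) *
            √(∫ η, ‖T.indicator g η‖ ^ 2 / (ε * η i - (ε * ζ i + cellRadius τ ζ / 2)) ^ k))) := by
  choose C hC0 hC using fun k => hσ.exists_norm_cellKernel_xDeriv_le hχ hτ₀ hτ hτρ k
  refine ⟨C k, hC0 k, fun ζ z i ε T g hε hT hTS hg => ?_⟩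
  have hε_pow (j : ℕ) : ‖(ε : ℂ) ^ j‖ = 1 := by
    rw [norm_pow, norm_real, Real.norm_eq_abs, hε, one_pow]
  have hcont (j : ℕ) : Continuous fun x => (ε : ℂ) ^ j * cellKernel χ τ (xDeriv i j σ) ζ x z :=
    ((hχ.continuous_cellKernel hτ₀ hτ (contDiff_xDeriv hσ.contDiff_uncurry i j).continuous
      ζ).comp (Continuous.prodMk_left z)).const_mul _
  have hbound (j : ℕ) (x : Fin n → ℝ) : ‖(ε : ℂ) ^ j * cellKernel χ τ (xDeriv i j σ) ζ x z‖ ≤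
      C j * jb ζ ^ (m + δ * j - n * τ / 2) * decayWeight (cellRadius τ ζ) z := by
    rw [norm_mul, hε_pow, one_mul]
    exact hC j i ζ x z
  have hderiv (j : ℕ) (x : Fin n → ℝ) :
      HasLineDerivAt ℝ (fun y => (ε : ℂ) ^ j * cellKernel χ τ (xDeriv i j σ) ζ y z)
        ((ε : ℂ) ^ (j + 1) * cellKernel χ τ (xDeriv i (j + 1) σ) ζ x z) x (ε • Pi.single i 1) := by
    refine (((hσ.hasLineDerivAt_cellKernel_xDeriv hχ hτ₀ hτ i j ζ x z).smul ε).const_mul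
      ((ε : ℂ) ^ j)).congr_deriv ?_
    rw [real_smul, pow_succ, mul_assoc]
  have hslab := (hχ.isSlabSeparated_farSector hτ₀ hτ hg hε hT hTS (-z)).norm_integral_mul_le k
    hcont (fun j => ⟨_, hbound j⟩) hderiv (hbound k)
  simp only [pow_zero, one_mul, xDeriv_zero, ← IFT_comp_sub_right, l2norm_expi_mul,
    dotp_smul_single, ← mul_assoc (cellKernel _ _ _ _ _ _)] at hslab
  refine hslab.trans_eq ?_
  ring

end FarSlice

/-- `∫ ⟨ξ⟩^p |g(ξ)|² dξ`, the squared Sobolev norm of order `p / 2` on the Fourier side. -/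
def weightedSq (p : ℝ) (g : (Fin n → ℝ) → ℂ) : ℝ := ∫ ξ, jb ξ ^ p * ‖g ξ‖ ^ 2

section FarForm

variable {g : (Fin n → ℝ) → ℂ} {τ q ε : ℝ}

theorem weightedSq_nonneg (p : ℝ) (g : (Fin n → ℝ) → ℂ) : 0 ≤ weightedSq p g :=
  integral_nonneg fun ξ => mul_nonneg (jb_rpow_pos ξ p).le (sq_nonneg _)

theorem MemL1L2.integrable_jb_rpow_neg_mul_sq (hg : MemL1L2 g) (hq : 0 ≤ q) :
    Integrable fun ξ => jb ξ ^ (-q) * ‖g ξ‖ ^ 2 :=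
  hg.integrable_sq.bdd_mul (c := 1) (continuous_jb_rpow _).aestronglyMeasurable
    (.of_forall fun ξ => by
      rw [Real.norm_of_nonneg (jb_rpow_pos ξ _).le]
      exact Real.rpow_le_one_of_one_le_of_nonpos (one_le_jb ξ) (neg_nonpos.2 hq))

theorem jb_rpow_mul_sq_l2norm_indicator_cell_le [NeZero n] (hτ : τ ≤ 1) (hg : MemL1L2 g) (p : ℝ)
    (ζ : Fin n → ℝ) : jb ζ ^ p * l2norm ((closedBall ζ (cellRadius τ ζ)).indicator g) ^ 2
      ≤ 2 ^ |p| * ∫ ξ in closedBall ζ (cellRadius τ ζ), jb ξ ^ p * ‖g ξ‖ ^ 2 := by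
  have hint : IntegrableOn (fun ξ => jb ξ ^ p * ‖g ξ‖ ^ 2) (closedBall ζ (cellRadius τ ζ)) :=
    hg.integrable_sq.integrableOn.continuousOn_mul (continuous_jb_rpow p).continuousOn
      (isCompact_closedBall ζ _)
  have hsq : l2norm ((closedBall ζ (cellRadius τ ζ)).indicator g) ^ 2
      = ∫ ξ in closedBall ζ (cellRadius τ ζ), ‖g ξ‖ ^ 2 := by
    rw [sq_l2norm, ← integral_indicator measurableSet_closedBall]
    congr 1 with ξ
    by_cases hξ : ξ ∈ closedBall ζ (cellRadius τ ζ) <;> simp [hξ]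
  rw [hsq, ← integral_const_mul, ← integral_const_mul]
  refine setIntegral_mono_on (hg.integrable_sq.integrableOn.const_mul _) (hint.const_mul _)
    measurableSet_closedBall fun ξ hξ => ?_
  simpa only [mul_assoc] using
    mul_le_mul_of_nonneg_right (jb_rpow_le_of_mem_cell' hτ hξ p) (sq_nonneg ‖g ξ‖)

theorem jb_rpow_div_pow_le_of_cellRadius_lt [NeZero n] (hτ₀ : 0 ≤ τ) {ζ η : Fin n → ℝ}
    (hη : cellRadius τ ζ < ‖η - ζ‖) (hq : 0 ≤ q) {k : ℕ} (hqk : q ≤ k) :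
    jb η ^ q / (‖η - ζ‖ / 2) ^ k ≤ (4 * n) ^ k * 2 ^ q * jb ζ ^ (q + τ * (q - k)) := by
  have hn : (0 : ℝ) < n := Nat.cast_pos.2 (NeZero.pos n)
  set r := 2 * n * ‖η - ζ‖ with hr
  have hτr : jb ζ ^ τ ≤ r := by
    rw [← two_mul_natCast_mul_cellRadius, hr]
    gcongr
  have hr1 : 1 ≤ r := (Real.one_le_rpow (one_le_jb ζ) hτ₀).trans hτr
  have hjb : jb η ≤ 2 * jb ζ * r := by
    nlinarith [jb_le_add η ζ, one_le_jb ζ, mul_le_mul (one_le_jb ζ) hr1 zero_le_one (jb_pos ζ).le]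
  have hζ := jb_pos ζ
  calc jb η ^ q / (‖η - ζ‖ / 2) ^ k = (4 * n) ^ k * (jb η ^ q / r ^ k) := by
        have hhalf : ‖η - ζ‖ / 2 = r / (4 * n) := by rw [hr]; field_simp; ring
        rw [hhalf, div_pow]
        field_simp
    _ ≤ (4 * n) ^ k * ((2 * jb ζ * r) ^ q / r ^ k) := by
        gcongr
        exact (jb_pos η).le
    _ = (4 * n) ^ k * 2 ^ q * (jb ζ ^ q * r ^ (q - k)) := by
        rw [Real.mul_rpow (by positivity) (by positivity), Real.mul_rpow (by positivity) hζ.le,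
          Real.rpow_sub (by positivity), Real.rpow_natCast]
        ring
    _ ≤ (4 * n) ^ k * 2 ^ q * (jb ζ ^ q * (jb ζ ^ τ) ^ (q - k)) := by
        gcongr _ * (_ * ?_)
        exact Real.rpow_le_rpow_of_nonpos (jb_rpow_pos ζ τ) hτr (sub_nonpos.2 hqk)
    _ = (4 * n) ^ k * 2 ^ q * jb ζ ^ (q + τ * (q - k)) := by
        rw [Real.rpow_add hζ, Real.rpow_mul hζ.le]

theorem integral_indicator_farSector_div_pow_le [NeZero n] (hτ₀ : 0 ≤ τ) (hg : MemL1L2 g)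
    (hq : 0 ≤ q) {k : ℕ} (hqk : q ≤ k) {ζ : Fin n → ℝ} {i : Fin n} {T : Set (Fin n → ℝ)}
    (hTS : T ⊆ farSector τ ζ i ε) :
    ∫ η, ‖T.indicator g η‖ ^ 2 / (ε * η i - (ε * ζ i + cellRadius τ ζ / 2)) ^ k
      ≤ (4 * n) ^ k * 2 ^ q * jb ζ ^ (q + τ * (q - k)) * weightedSq (-q) g := by
  have hζ := jb_rpow_pos ζ (q + τ * (q - k))
  have hslab {η : Fin n → ℝ} (hη : η ∈ T) :
      ‖η - ζ‖ / 2 ≤ ε * η i - (ε * ζ i + cellRadius τ ζ / 2) := by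
    obtain ⟨hfar, hcoord⟩ := hTS hη
    linarith
  rw [weightedSq, ← integral_const_mul]
  refine integral_mono_of_nonneg (.of_forall fun η => ?_)
    ((hg.integrable_jb_rpow_neg_mul_sq hq).const_mul _) (.of_forall fun η => ?_)
  all_goals by_cases hη : η ∈ T
  · have hpos : 0 ≤ ε * η i - (ε * ζ i + cellRadius τ ζ / 2) :=
      le_trans (by positivity) (hslab hη)
    simp only [Pi.zero_apply]
    positivity
  · simp [indicator_of_notMem hη]
  · have hpos : 0 < ‖η - ζ‖ := (cellRadius_pos τ ζ).trans (hTS hη).1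
    calc ‖T.indicator g η‖ ^ 2 / (ε * η i - (ε * ζ i + cellRadius τ ζ / 2)) ^ k
        ≤ ‖g η‖ ^ 2 / (‖η - ζ‖ / 2) ^ k := by
          rw [indicator_of_mem hη]
          gcongr
          exact hslab hη
      _ = jb η ^ q / (‖η - ζ‖ / 2) ^ k * (jb η ^ (-q) * ‖g η‖ ^ 2) := by
          rw [Real.rpow_neg (jb_pos η).le]
          field_simp [(jb_rpow_pos η q).ne']
      _ ≤ _ := mul_le_mul_of_nonneg_right
          (jb_rpow_div_pow_le_of_cellRadius_lt hτ₀ (hTS hη).1 hq hqk)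
          (mul_nonneg (jb_rpow_pos η _).le (sq_nonneg _))
  · have := jb_rpow_pos η (-q)
    simp only [indicator_of_notMem hη, norm_zero, ne_eq, OfNat.ofNat_ne_zero, not_false_eq_true,
      zero_pow, zero_div]
    positivity

theorem l2norm_indicator_cell_le [NeZero n] (hτ : τ ≤ 1) (hg : MemL1L2 g) (hq : 0 ≤ q)
    (ζ : Fin n → ℝ) : l2norm ((closedBall ζ (cellRadius τ ζ)).indicator g)
      ≤ √(2 ^ q * jb ζ ^ q * weightedSq (-q) g) := by
  have hcell := (jb_rpow_mul_sq_l2norm_indicator_cell_le hτ hg (-q) ζ).trans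
    (mul_le_mul_of_nonneg_left (setIntegral_le_integral (hg.integrable_jb_rpow_neg_mul_sq hq)
      (.of_forall fun ξ => mul_nonneg (jb_rpow_pos ξ _).le (sq_nonneg _))) (by positivity))
  rw [abs_neg, abs_of_nonneg hq, Real.rpow_neg (jb_pos ζ).le,
    inv_mul_le_iff₀ (jb_rpow_pos ζ q)] at hcell
  refine Real.le_sqrt_of_sq_le (hcell.trans_eq ?_)
  rw [weightedSq]
  ring

theorem inv_sqrt_half_cellRadius_pow (τ : ℝ) (ζ : Fin n → ℝ) (k : ℕ) :
    1 / √(cellRadius τ ζ / 2) ^ k = √((4 * n) ^ k * jb ζ ^ (-(τ * k))) := by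
  have hhalf : cellRadius τ ζ / 2 = (4 * n / jb ζ ^ τ)⁻¹ := by
    rw [cellRadius, inv_div]
    ring
  have hbase : 0 ≤ 4 * n / jb ζ ^ τ := div_nonneg (by positivity) (jb_rpow_pos ζ τ).le
  rw [hhalf, Real.sqrt_inv, inv_pow, one_div, inv_inv,
    ← Real.sqrt_sq (pow_nonneg (Real.sqrt_nonneg _) k), pow_right_comm, Real.sq_sqrt hbase, div_pow,
    Real.rpow_neg (jb_pos ζ).le, Real.rpow_mul_natCast (jb_pos ζ).le, div_eq_mul_inv]

end FarForm

section FarBound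

variable {χ g w : (Fin n → ℝ) → ℂ} {m ρ δ τ q : ℝ} {σ : (Fin n → ℝ) → (Fin n → ℝ) → ℂ}

theorem sqrt_mul_sqrt_mul_sqrt_far_eq (τ q : ℝ) (k : ℕ) (ζ : Fin n → ℝ) (g : (Fin n → ℝ) → ℂ) :
    √((4 * n) ^ k * jb ζ ^ (-(τ * k))) * (√(2 ^ q * jb ζ ^ q * weightedSq (-q) g) *
        √((4 * n) ^ k * 2 ^ q * jb ζ ^ (q + τ * (q - k)) * weightedSq (-q) g))
      = (4 * n) ^ k * 2 ^ q * jb ζ ^ (q + τ * q / 2 - τ * k) * weightedSq (-q) g := by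
  have hζ (p : ℝ) := jb_rpow_pos ζ p
  have hW := weightedSq_nonneg (-q) g
  have hexp : jb ζ ^ (-(τ * k)) * (jb ζ ^ q * jb ζ ^ (q + τ * (q - k)))
      = (jb ζ ^ (q + τ * q / 2 - τ * k)) ^ 2 := by
    rw [← Real.rpow_add (jb_pos ζ), ← Real.rpow_add (jb_pos ζ),
      ← Real.rpow_mul_natCast (jb_pos ζ).le]
    congr 1
    push_cast
    ring
  have hrhs : 0 ≤ (4 * n) ^ k * 2 ^ q * jb ζ ^ (q + τ * q / 2 - τ * k) * weightedSq (-q) g := by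
    have := hζ (q + τ * q / 2 - τ * k)
    positivity
  rw [← Real.sqrt_mul (by have := hζ q; positivity),
    ← Real.sqrt_mul (by have := hζ (-(τ * k)); positivity), ← Real.sqrt_sq hrhs]
  congr 1
  linear_combination (((4 * n) ^ k * 2 ^ q * weightedSq (-q) g) ^ 2) * hexp

theorem IsWindow.exists_inv_sqrt_pow_mul_l2norm_mul_sqrt_le [NeZero n] (hχ : IsWindow χ)
    (hτ₀ : 0 ≤ τ) (hτ : τ ≤ 1) (hq : 0 ≤ q) {k : ℕ} (hqk : q ≤ k) :
    ∃ C ≥ 0, ∀ ζ i ε T g, T ⊆ farSector τ ζ i ε → MemL1L2 g →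
      1 / √(cellRadius τ ζ / 2) ^ k * (l2norm (fun ξ => cellWindow χ τ ζ ξ * g ξ) *
          √(∫ η, ‖T.indicator g η‖ ^ 2 / (ε * η i - (ε * ζ i + cellRadius τ ζ / 2)) ^ k))
        ≤ C * jb ζ ^ (q + τ * q / 2 - τ * k - n * τ / 2) * weightedSq (-q) g := by
  obtain ⟨C, hC, hwindow⟩ := hχ.exists_l2norm_cellWindow_mul_le hτ₀ hτ
  refine ⟨C * ((4 * n) ^ k * 2 ^ q), by positivity, fun ζ i ε T g hTS hg => ?_⟩
  have hζ := jb_rpow_pos ζ (-(n * τ / 2))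
  calc _ ≤ √((4 * n) ^ k * jb ζ ^ (-(τ * k))) * (C * jb ζ ^ (-(n * τ / 2)) *
          √(2 ^ q * jb ζ ^ q * weightedSq (-q) g) *
          √((4 * n) ^ k * 2 ^ q * jb ζ ^ (q + τ * (q - k)) * weightedSq (-q) g)) := by
        rw [inv_sqrt_half_cellRadius_pow]
        gcongr
        · exact (hwindow ζ g hg).trans
            (mul_le_mul_of_nonneg_left (l2norm_indicator_cell_le hτ hg hq ζ) (by positivity))
        · exact integral_indicator_farSector_div_pow_le hτ₀ hg hq hqk hTS
    _ = C * jb ζ ^ (-(n * τ / 2)) *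
          ((4 * n) ^ k * 2 ^ q * jb ζ ^ (q + τ * q / 2 - τ * k) * weightedSq (-q) g) := by
        rw [← sqrt_mul_sqrt_mul_sqrt_far_eq]
        ring
    _ = _ := by
        rw [sub_eq_add_neg _ (n * τ / 2), Real.rpow_add (jb_pos ζ)]
        ring

theorem SymbolClass.exists_norm_kernelForm_farSector_le [NeZero n] (hσ : SymbolClass m ρ δ σ)
    (hχ : IsWindow χ) (hτ₀ : 0 ≤ τ) (hτ : τ ≤ 1) (hτρ : τ ≤ ρ) (hq : 0 ≤ q) {k : ℕ}
    (hqk : q ≤ k) :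
    ∃ C ≥ 0, ∀ ζ i ε T g, |ε| = 1 → MeasurableSet T → T ⊆ farSector τ ζ i ε → MemL1L2 g →
      ‖kernelForm (cellKernel χ τ σ ζ) (IFT fun ξ => cellWindow χ τ ζ ξ * g ξ)
          (IFT (T.indicator g))‖
        ≤ C * jb ζ ^ (m - n * τ + q + τ * q / 2 - (τ - δ) * k) * weightedSq (-q) g := by
  obtain ⟨A, hA, hslice⟩ := hσ.exists_norm_integral_cellKernel_mul_le hχ hτ₀ hτ hτρ k
  obtain ⟨B, hB, hfactors⟩ := hχ.exists_inv_sqrt_pow_mul_l2norm_mul_sqrt_le hτ₀ hτ hq hqk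
  refine ⟨A * B * ∫ z : Fin n → ℝ, decayWeight 1 z,
    mul_nonneg (mul_nonneg hA hB) (integral_nonneg fun z => decayWeight_nonneg one_pos z),
    fun ζ i ε T g hε hT hTS hg => ?_⟩
  have hs := cellRadius_pos τ ζ
  refine (norm_kernelForm_le_of_forall ((integrable_decayWeight hs).const_mul _)
    fun z => (hslice ζ z i ε T g hε hT hTS hg).trans
      (mul_le_mul_of_nonneg_left (hfactors ζ i ε T g hTS hg) ?_)).trans_eq ?_
  · exact mul_nonneg (mul_nonneg hA (jb_rpow_pos ζ _).le) (decayWeight_nonneg hs z)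
  · rw [integral_const_mul, integral_decayWeight hs,
      show m - n * τ + q + τ * q / 2 - (τ - δ) * k
        = (m + δ * k - n * τ / 2) + (q + τ * q / 2 - τ * k - n * τ / 2) by ring,
      Real.rpow_add (jb_pos ζ)]
    ring

namespace IsDominatedKernel

variable {K : (Fin n → ℝ) → (Fin n → ℝ) → ℂ} {H : (Fin n → ℝ) → ℝ} {S T : Set (Fin n → ℝ)}

theorem kernelForm_IFT_indicator_inter_add_diff (hK : IsDominatedKernel K H) (hw : MemLp w 2)
    (hwc : Continuous w) (hg : MemL1L2 g) (hS : MeasurableSet S) (hT : MeasurableSet T) :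
    kernelForm K w (IFT ((T ∩ S).indicator g)) + kernelForm K w (IFT ((T \ S).indicator g))
      = kernelForm K w (IFT (T.indicator g)) := by
  have hin := hg.indicator (hT.inter hS)
  have hout := hg.indicator (hT.diff hS)
  have hsplit : IFT (T.indicator g)
      = fun x => IFT ((T ∩ S).indicator g) x + IFT ((T \ S).indicator g) x := by
    ext x
    rw [← IFT_add hin.integrable hout.integrable,
      ← indicator_union_of_disjoint disjoint_sdiff_inter.symm, inter_union_sdiff]
  rw [hsplit, hK.kernelForm_add_right hw hwc hin.memLp_IFT (continuous_IFT hin.integrable)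
    hout.memLp_IFT (continuous_IFT hout.integrable)]

theorem norm_kernelForm_IFT_indicator_le_card_mul (hK : IsDominatedKernel K H) (hw : MemLp w 2)
    (hwc : Continuous w) (hg : MemL1L2 g) {ι : Type*} {S : ι → Set (Fin n → ℝ)}
    (hS : ∀ j, MeasurableSet (S j)) {B : ℝ} (t : Finset ι)
    (hB : ∀ j ∈ t, ∀ T ⊆ S j, MeasurableSet T → ‖kernelForm K w (IFT (T.indicator g))‖ ≤ B)
    (hT : MeasurableSet T) (hTS : T ⊆ ⋃ j ∈ t, S j) :
    ‖kernelForm K w (IFT (T.indicator g))‖ ≤ t.card * B := by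
  classical
  induction t using Finset.induction_on generalizing T with
  | empty =>
    obtain rfl : T = ∅ := by simpa using hTS
    simp [kernelForm, IFT]
  | insert a t ha ih =>
    have hin := hB a (Finset.mem_insert_self a t) _ inter_subset_right (hT.inter (hS a))
    have hout := ih (fun j hj => hB j (Finset.mem_insert_of_mem hj)) (hT.diff (hS a)) (by
      rw [Finset.set_biUnion_insert] at hTS
      exact sdiff_subset_iff.2 hTS)
    rw [← hK.kernelForm_IFT_indicator_inter_add_diff hw hwc hg (hS a) hT,
      Finset.card_insert_of_notMem ha]
    push_cast
    linarith [norm_add_le (kernelForm K w (IFT ((T ∩ S a).indicator g)))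
      (kernelForm K w (IFT ((T \ S a).indicator g)))]

end IsDominatedKernel

theorem SymbolClass.exists_norm_kernelForm_far_le [NeZero n] (hσ : SymbolClass m ρ δ σ)
    (hχ : IsWindow χ) (hτ₀ : 0 ≤ τ) (hτ : τ ≤ 1) (hτρ : τ ≤ ρ) (hδτ : δ < τ) (hq : 0 ≤ q) (N : ℝ) :
    ∃ C ≥ 0, ∀ ζ g, MemL1L2 g →
      ‖kernelForm (cellKernel χ τ σ ζ) (IFT fun ξ => cellWindow χ τ ζ ξ * g ξ)
          (IFT ((closedBall ζ (cellRadius τ ζ))ᶜ.indicator g))‖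
        ≤ C * jb ζ ^ (-N) * weightedSq (-q) g := by
  obtain ⟨k, hqk, hk⟩ : ∃ k : ℕ, q ≤ k ∧ m - n * τ + q + τ * q / 2 + N ≤ (τ - δ) * k := by
    obtain ⟨k, hk⟩ := exists_nat_ge (max q ((m - n * τ + q + τ * q / 2 + N) / (τ - δ)))
    exact ⟨k, (le_max_left _ _).trans hk,
      (div_le_iff₀' (sub_pos.2 hδτ)).1 ((le_max_right _ _).trans hk)⟩
  obtain ⟨A, -, hdominated⟩ := hσ.exists_isDominatedKernel_cellKernel hχ hτ₀ hτ hτρ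
  obtain ⟨C, hC, hsector⟩ := hσ.exists_norm_kernelForm_farSector_le hχ hτ₀ hτ hτρ hq hqk
  set sectors := (Finset.univ : Finset (Fin n)) ×ˢ ({1, -1} : Finset ℝ) with hsectors
  refine ⟨sectors.card * C, by positivity, fun ζ g hg => ?_⟩
  have hθg := hχ.memL1L2_cellWindow_mul hτ₀ hτ hg ζ
  have hunit {j : Fin n × ℝ} (hj : j ∈ sectors) : |j.2| = 1 := by
    rcases (by simpa [hsectors] using hj : j.2 = 1 ∨ j.2 = -1) with h | h <;> simp [h]
  calc _ ≤ sectors.card * (C * jb ζ ^ (m - n * τ + q + τ * q / 2 - (τ - δ) * k)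
          * weightedSq (-q) g) :=
        (hdominated ζ).norm_kernelForm_IFT_indicator_le_card_mul hθg.memLp_IFT
          (continuous_IFT hθg.integrable) hg (fun j => measurableSet_farSector τ ζ j.1 j.2) sectors
          (fun j hj T hTS hT => hsector ζ j.1 j.2 T g (hunit hj) hT hTS hg)
          isClosed_closedBall.measurableSet.compl (compl_cell_subset_iUnion_farSector τ ζ)
    _ ≤ sectors.card * (C * jb ζ ^ (-N) * weightedSq (-q) g) := by
        have hW := weightedSq_nonneg (-q) g
        gcongr
        · exact one_le_jb ζ
        · linarith
    _ = _ := by ring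

end FarBound

section SchwartzDecay

theorem exists_norm_schwartz_le_jb_rpow (g : 𝓢(Fin n → ℝ, ℂ)) (p : ℝ) :
    ∃ C ≥ 0, ∀ ξ, ‖g ξ‖ ≤ C * jb ξ ^ (-p) := by
  obtain ⟨k, hk⟩ := exists_nat_ge p
  obtain ⟨C, hC⟩ : ∃ C, ∀ ξ, (1 + ‖ξ‖) ^ k * ‖g ξ‖ ≤ C :=
    ⟨_, fun ξ => by simpa only [norm_iteratedFDeriv_zero] using
      SchwartzMap.one_add_le_sup_seminorm_apply (𝕜 := ℂ) (m := (k, 0)) le_rfl le_rfl g ξ⟩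
  have hC₀ : 0 ≤ C := le_trans (by positivity) (hC 0)
  refine ⟨(n + 1) ^ k * C, by positivity, fun ξ => ?_⟩
  have hjb : jb ξ ≤ (n + 1) * (1 + ‖ξ‖) := by
    have hlip := jb_le_add ξ 0
    rw [jb_zero, sub_zero] at hlip
    nlinarith [norm_nonneg ξ]
  rw [Real.rpow_neg (jb_pos ξ).le, ← div_eq_mul_inv, le_div_iff₀' (jb_rpow_pos ξ p)]
  calc jb ξ ^ p * ‖g ξ‖ ≤ jb ξ ^ k * ‖g ξ‖ := by
        rw [← Real.rpow_natCast]
        gcongr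
        exact one_le_jb ξ
    _ ≤ ((n + 1) * (1 + ‖ξ‖)) ^ k * ‖g ξ‖ := by
        gcongr
        exact (jb_pos ξ).le
    _ = (n + 1) ^ k * ((1 + ‖ξ‖) ^ k * ‖g ξ‖) := by rw [mul_pow, mul_assoc]
    _ ≤ (n + 1) ^ k * C := by
        gcongr
        exact hC ξ

theorem integrable_jb_rpow_mul_norm_schwartz (g : 𝓢(Fin n → ℝ, ℂ)) (p : ℝ) :
    Integrable fun ξ => jb ξ ^ p * ‖g ξ‖ := by
  obtain ⟨C, -, hC⟩ := exists_norm_schwartz_le_jb_rpow g (p + (n + 1))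
  refine (integrable_jb_rpow.const_mul C).mono'
    ((continuous_jb_rpow p).mul g.continuous.norm).aestronglyMeasurable (.of_forall fun ξ => ?_)
  rw [Real.norm_of_nonneg (mul_nonneg (jb_rpow_pos ξ p).le (norm_nonneg _))]
  refine (mul_le_mul_of_nonneg_left (hC ξ) (jb_rpow_pos ξ p).le).trans_eq ?_
  rw [mul_left_comm, ← Real.rpow_add (jb_pos ξ)]
  ring_nf

theorem integrable_jb_rpow_mul_sq_norm_schwartz (g : 𝓢(Fin n → ℝ, ℂ)) (p : ℝ) :
    Integrable fun ξ => jb ξ ^ p * ‖g ξ‖ ^ 2 := by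
  obtain ⟨C, -, hC⟩ := exists_norm_schwartz_le_jb_rpow g 0
  refine ((integrable_jb_rpow_mul_norm_schwartz g p).mul_bdd (g := fun ξ => ‖g ξ‖) (c := C)
    g.continuous.norm.aestronglyMeasurable (.of_forall fun ξ => ?_)).congr
    (.of_forall fun ξ => by ring)
  simpa using hC ξ

theorem memL1L2_schwartz (g : 𝓢(Fin n → ℝ, ℂ)) : MemL1L2 g := ⟨g.integrable, g.memLp 2⟩

end SchwartzDecay

section Averaging

variable {α β E : Type*} [MeasurableSpace α] [MeasurableSpace β] [NormedAddCommGroup E]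
  [NormedSpace ℝ E] {μ : Measure α} {ν : Measure β} [SFinite ν] {φ : α → β → ℝ}
  {Φ : α → E} {B : ℝ}

theorem integrable_prod_smul_of_integral_le
    (hφ : AEStronglyMeasurable (Function.uncurry φ) (μ.prod ν)) (hφ₀ : ∀ a b, 0 ≤ φ a b)
    (hφi : ∀ a, Integrable (φ a) ν) (hφB : ∀ a, ∫ b, φ a b ∂ν ≤ B) (hΦ : Integrable Φ μ) :
    Integrable (fun q : α × β => φ q.1 q.2 • Φ q.1) (μ.prod ν) := by
  have hmeas : AEStronglyMeasurable (fun q : α × β => φ q.1 q.2 • Φ q.1) (μ.prod ν) :=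
    hφ.smul hΦ.aestronglyMeasurable.comp_fst
  refine (integrable_prod_iff hmeas).2 ⟨.of_forall fun a => (hφi a).smul_const (Φ a), ?_⟩
  refine (hΦ.norm.const_mul B).mono' hmeas.norm.integral_prod_right' (.of_forall fun a => ?_)
  simp only [norm_smul, Real.norm_of_nonneg (hφ₀ a _), integral_mul_const]
  rw [Real.norm_of_nonneg (mul_nonneg (integral_nonneg (hφ₀ a)) (norm_nonneg _))]
  exact mul_le_mul_of_nonneg_right (hφB a) (norm_nonneg _)

theorem integral_integral_smul_of_integral_eq_one [SFinite μ] [CompleteSpace E]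
    (hφ : AEStronglyMeasurable (Function.uncurry φ) (μ.prod ν)) (hφ₀ : ∀ a b, 0 ≤ φ a b)
    (hφ₁ : ∀ a, ∫ b, φ a b ∂ν = 1) (hΦ : Integrable Φ μ) :
    ∫ b, ∫ a, φ a b • Φ a ∂μ ∂ν = ∫ a, Φ a ∂μ := by
  rw [← integral_integral_swap (f := fun a b => φ a b • Φ a)
    (integrable_prod_smul_of_integral_le hφ hφ₀ (fun a => integrable_of_integral_eq_one (hφ₁ a))
      (fun a => (hφ₁ a).le) hΦ)]
  simp only [integral_smul_const, hφ₁, one_smul]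

theorem integral_integral_mul_le_of_integral_le [SFinite μ] {Φ : α → ℝ}
    (hφ : AEStronglyMeasurable (Function.uncurry φ) (μ.prod ν)) (hφ₀ : ∀ a b, 0 ≤ φ a b)
    (hφi : ∀ a, Integrable (φ a) ν) (hφB : ∀ a, ∫ b, φ a b ∂ν ≤ B) (hΦ : Integrable Φ μ)
    (hΦ₀ : ∀ a, 0 ≤ Φ a) : ∫ b, ∫ a, φ a b * Φ a ∂μ ∂ν ≤ B * ∫ a, Φ a ∂μ := by
  have hprod := integrable_prod_smul_of_integral_le hφ hφ₀ hφi hφB hΦ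
  rw [← integral_integral_swap (f := fun a b => φ a b * Φ a) hprod, ← integral_const_mul]
  refine integral_mono hprod.integral_prod_left (hΦ.const_mul B) fun a => ?_
  simp only [integral_mul_const]
  exact mul_le_mul_of_nonneg_right (hφB a) (hΦ₀ a)

end Averaging

section CellDecomposition

variable {χ f g : (Fin n → ℝ) → ℂ} {m ρ δ τ : ℝ} {σ : (Fin n → ℝ) → (Fin n → ℝ) → ℂ}

theorem IsWindow.continuous_norm_cellWindow_sq (hχ : IsWindow χ) (τ : ℝ) :
    Continuous fun q : (Fin n → ℝ) × (Fin n → ℝ) => ‖cellWindow χ τ q.2 q.1‖ ^ 2 :=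
  ((hχ.continuous_cellWindow τ).comp continuous_swap).norm.pow 2

theorem SymbolClass.integrable_oscillatory_prod [NeZero n] (hσ : SymbolClass m ρ δ σ)
    (hf : Integrable f) (hfc : Continuous f) (hgc : Continuous g)
    (hgm : Integrable fun ξ => jb ξ ^ m * ‖g ξ‖) :
    Integrable (fun P : (Fin n → ℝ) × (Fin n → ℝ) =>
      expi (dotp P.1 P.2) * (σ P.1 P.2 * g P.2) * conj (f P.1)) (volume.prod volume) := by
  obtain ⟨A, -, hA⟩ := hσ.exists_norm_le
  have hσc := hσ.contDiff_uncurry.continuous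
  refine (hf.norm.mul_prod (hgm.const_mul A)).mono'
    (Continuous.aestronglyMeasurable (by fun_prop)) (.of_forall fun P => ?_)
  rw [norm_mul, norm_mul, norm_mul, norm_expi, one_mul, RCLike.norm_conj, mul_comm, ← mul_assoc A]
  gcongr
  exact hA _ _

theorem SymbolClass.kernelForm_cellKernel_eq [NeZero n] (hσ : SymbolClass m ρ δ σ)
    (hχ : IsWindow χ) (hτ₀ : 0 ≤ τ) (hτ : τ ≤ 1) (hτρ : τ ≤ ρ) (hf : MemLp f 2)
    (hfc : Continuous f) (hg : MemL1L2 g) (ζ : Fin n → ℝ) :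
    kernelForm (cellKernel χ τ σ ζ) (IFT fun ξ => cellWindow χ τ ζ ξ * g ξ) f
      = ∫ x, ∫ ξ, ‖cellWindow χ τ ζ ξ‖ ^ 2 • (expi (dotp x ξ) * (σ x ξ * g ξ) * conj (f x)) := by
  obtain ⟨A, -, hdominated⟩ := hσ.exists_isDominatedKernel_cellKernel hχ hτ₀ hτ hτρ
  have hσc (x : Fin n → ℝ) : Continuous (σ x) :=
    hσ.contDiff_uncurry.continuous.comp (by fun_prop : Continuous fun ξ => (x, ξ))
  refine (integral_oscillatory_mul_conj_eq_kernelForm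
    (fun x => (hσc x).mul (hχ.contDiff_cellWindow τ ζ).continuous)
    (fun x => hχ.integrable_mul_cellWindow hτ₀ hτ (hσc x) ζ) (hdominated ζ)
    (hχ.memL1L2_cellWindow_mul hτ₀ hτ hg ζ) hf hfc).symm.trans ?_
  congr 1 with x
  rw [← integral_mul_const]
  congr 1 with ξ
  rw [real_smul, ← hχ.cellWindow_mul_self, Pi.mul_apply]
  ring

theorem SymbolClass.integrable_kernelForm_and_integral_eq [NeZero n] (hσ : SymbolClass m ρ δ σ)
    (hχ : IsWindow χ) (hτ₀ : 0 ≤ τ) (hτ : τ ≤ 1) (hτρ : τ ≤ ρ) (hf : MemL1L2 f)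
    (hfc : Continuous f) (hg : MemL1L2 g) (hgc : Continuous g)
    (hgm : Integrable fun ξ => jb ξ ^ m * ‖g ξ‖) :
    Integrable (fun ζ => kernelForm (cellKernel χ τ σ ζ)
        (IFT fun ξ => cellWindow χ τ ζ ξ * g ξ) f) ∧
      ∫ ζ, kernelForm (cellKernel χ τ σ ζ) (IFT fun ξ => cellWindow χ τ ζ ξ * g ξ) f
        = ∫ x, (∫ ξ, expi (dotp x ξ) * (σ x ξ * g ξ)) * conj (f x) := by
  have hΦ := hσ.integrable_oscillatory_prod hf.integrable hfc hgc hgm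
  set Φ : (Fin n → ℝ) × (Fin n → ℝ) → ℂ :=
    fun P => expi (dotp P.1 P.2) * (σ P.1 P.2 * g P.2) * conj (f P.1) with hΦ_def
  have hφ : AEStronglyMeasurable (Function.uncurry fun (P : (Fin n → ℝ) × (Fin n → ℝ)) ζ =>
      ‖cellWindow χ τ ζ P.2‖ ^ 2) ((volume.prod volume).prod volume) :=
    ((hχ.continuous_norm_cellWindow_sq τ).comp
      (by fun_prop : Continuous fun q : ((Fin n → ℝ) × (Fin n → ℝ)) × (Fin n → ℝ) =>
        (q.1.2, q.2))).aestronglyMeasurable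
  have hone (P : (Fin n → ℝ) × (Fin n → ℝ)) := hχ.integral_norm_cellWindow_sq τ P.2
  have hΨ := integrable_prod_smul_of_integral_le hφ (fun _ _ => sq_nonneg _)
    (fun P => integrable_of_integral_eq_one (hone P)) (fun P => (hone P).le) hΦ
  have hform : ∀ᵐ ζ, ∫ P, ‖cellWindow χ τ ζ P.2‖ ^ 2 • Φ P ∂volume.prod volume
      = kernelForm (cellKernel χ τ σ ζ) (IFT fun ξ => cellWindow χ τ ζ ξ * g ξ) f := by
    filter_upwards [hΨ.prod_left_ae] with ζ hζ
    rw [hσ.kernelForm_cellKernel_eq hχ hτ₀ hτ hτρ hf.memLp_two hfc hg]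
    exact integral_prod _ hζ
  refine ⟨hΨ.integral_prod_right.congr hform, ?_⟩
  rw [← integral_congr_ae hform,
    integral_integral_smul_of_integral_eq_one hφ (fun _ _ => sq_nonneg _) hone hΦ,
    integral_prod _ hΦ]
  simp only [hΦ_def, integral_mul_const]

end CellDecomposition

/-- `⟨ξ⟩^{-nτ}` if `ξ` lies in the cell around `ζ`, and `0` otherwise. Since a cell near `ξ` has
volume comparable to `⟨ξ⟩^{nτ}`, its integral over `ζ` is bounded uniformly in `ξ`. -/
def cellDensity (τ : ℝ) (ξ ζ : Fin n → ℝ) : ℝ :=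
  (closedBall ζ (cellRadius τ ζ)).indicator (fun ξ => jb ξ ^ (-(n * τ))) ξ

section CellAverage

variable {χ g : (Fin n → ℝ) → ℂ} {τ : ℝ}

theorem cellDensity_nonneg (τ : ℝ) (ξ ζ : Fin n → ℝ) : 0 ≤ cellDensity τ ξ ζ :=
  indicator_nonneg (fun ξ _ => (jb_rpow_pos ξ _).le) ξ

theorem measurable_cellDensity (τ : ℝ) :
    Measurable (Function.uncurry (cellDensity (n := n) τ)) := by
  have hcell : MeasurableSet {q : (Fin n → ℝ) × (Fin n → ℝ) |
      q.1 ∈ closedBall q.2 (cellRadius τ q.2)} := by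
    refine (isClosed_le (f := fun q : (Fin n → ℝ) × (Fin n → ℝ) => dist q.1 q.2) (by fun_prop)
      (?_ : Continuous fun q : (Fin n → ℝ) × (Fin n → ℝ) => cellRadius τ q.2)).measurableSet
    exact ((continuous_jb_rpow τ).comp continuous_snd).div_const _
  exact ((continuous_jb_rpow (-(n * τ))).comp continuous_fst).measurable.indicator hcell

theorem cellDensity_le_indicator [NeZero n] (hτ : τ ≤ 1) (ξ ζ : Fin n → ℝ) :
    cellDensity τ ξ ζ
      ≤ (closedBall ξ (2 ^ |τ| * cellRadius τ ξ)).indicator (fun _ => jb ξ ^ (-(n * τ))) ζ := by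
  by_cases hξ : ξ ∈ closedBall ζ (cellRadius τ ζ)
  · have hradius : cellRadius τ ζ ≤ 2 ^ |τ| * cellRadius τ ξ := by
      rw [cellRadius, cellRadius, ← mul_div_assoc]
      gcongr
      exact jb_rpow_le_of_mem_cell' hτ hξ τ
    have hζ : ζ ∈ closedBall ξ (2 ^ |τ| * cellRadius τ ξ) :=
      closedBall_subset_closedBall hradius (mem_closedBall_comm.1 hξ)
    rw [cellDensity, indicator_of_mem hξ, indicator_of_mem hζ]
  · rw [cellDensity, indicator_of_notMem hξ]
    exact indicator_nonneg (fun _ _ => (jb_rpow_pos ξ _).le) ζ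

theorem integrable_cellDensity [NeZero n] (hτ : τ ≤ 1) (ξ : Fin n → ℝ) :
    Integrable (cellDensity τ ξ) := by
  refine Integrable.mono' (integrableOn_const (μ := volume)
    (s := closedBall ξ (2 ^ |τ| * cellRadius τ ξ)) (C := jb ξ ^ (-(n * τ)))
    measure_closedBall_lt_top.ne |>.integrable_indicator measurableSet_closedBall)
    (measurable_cellDensity τ).of_uncurry_left.aestronglyMeasurable (.of_forall fun ζ => ?_)
  rw [Real.norm_of_nonneg (cellDensity_nonneg τ ξ ζ)]
  exact cellDensity_le_indicator hτ ξ ζ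

theorem integral_cellDensity_le [NeZero n] (hτ : τ ≤ 1) (ξ : Fin n → ℝ) :
    ∫ ζ, cellDensity τ ξ ζ ≤ (2 ^ |τ| / n) ^ n := by
  have hn : (n : ℝ) ≠ 0 := NeZero.ne _
  have hradius : 0 ≤ 2 ^ |τ| * cellRadius τ ξ :=
    mul_nonneg (by positivity) (cellRadius_pos τ ξ).le
  refine (integral_mono_of_nonneg (.of_forall (cellDensity_nonneg τ ξ))
    ((integrableOn_const measure_closedBall_lt_top.ne).integrable_indicator
      measurableSet_closedBall) (.of_forall (cellDensity_le_indicator hτ ξ))).trans_eq ?_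
  rw [integral_indicator_const _ measurableSet_closedBall, Measure.real,
    Real.volume_pi_closedBall ξ hradius, ENNReal.toReal_ofReal (by positivity), Fintype.card_fin,
    cellRadius, mul_comm (n : ℝ) τ, Real.rpow_neg (jb_pos ξ).le,
    Real.rpow_mul_natCast (jb_pos ξ).le, smul_eq_mul, ← div_eq_mul_inv, ← div_pow]
  have := (jb_rpow_pos ξ τ).ne'
  congr 1
  field_simp

theorem IsWindow.integral_norm_cellWindow_sq_mul_le [NeZero n] (hχ : IsWindow χ) (hτ₀ : 0 ≤ τ)
    (hτ : τ ≤ 1) (hg : MemL1L2 g) (p : ℝ) (ζ : Fin n → ℝ) :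
    ∫ ξ, ‖cellWindow χ τ ζ ξ‖ ^ 2 * (jb ξ ^ p * ‖g ξ‖ ^ 2)
      ≤ 2 ^ |p| * (jb ζ ^ p * l2norm (fun ξ => cellWindow χ τ ζ ξ * g ξ) ^ 2) := by
  rw [sq_l2norm, ← integral_const_mul, ← integral_const_mul]
  refine integral_mono_of_nonneg (.of_forall fun ξ => mul_nonneg (sq_nonneg _)
      (mul_nonneg (jb_rpow_pos ξ p).le (sq_nonneg _)))
    (((hχ.memL1L2_cellWindow_mul hτ₀ hτ hg ζ).integrable_sq.const_mul _).const_mul _)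
    (.of_forall fun ξ => ?_)
  simp only [norm_mul, mul_pow]
  by_cases hξ : ξ ∈ closedBall ζ (cellRadius τ ζ)
  · calc ‖cellWindow χ τ ζ ξ‖ ^ 2 * (jb ξ ^ p * ‖g ξ‖ ^ 2)
        ≤ ‖cellWindow χ τ ζ ξ‖ ^ 2 * (2 ^ |p| * jb ζ ^ p * ‖g ξ‖ ^ 2) := by
          gcongr
          exact jb_rpow_le_of_mem_cell hτ hξ p
      _ = _ := by ring
  · simp [hχ.cellWindow_eq_zero_of_notMem hτ₀ hτ hξ]

theorem integral_cellDensity_mul (τ p : ℝ) (g : (Fin n → ℝ) → ℂ) (ζ : Fin n → ℝ) :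
    ∫ ξ, cellDensity τ ξ ζ * (jb ξ ^ p * ‖g ξ‖ ^ 2)
      = ∫ ξ in closedBall ζ (cellRadius τ ζ), jb ξ ^ (p - n * τ) * ‖g ξ‖ ^ 2 := by
  rw [← integral_indicator measurableSet_closedBall]
  congr 1 with ξ
  by_cases hξ : ξ ∈ closedBall ζ (cellRadius τ ζ)
  · rw [cellDensity, indicator_of_mem hξ, indicator_of_mem hξ, sub_eq_neg_add,
      Real.rpow_add (jb_pos ξ), mul_assoc]
  · rw [cellDensity, indicator_of_notMem hξ, indicator_of_notMem hξ, zero_mul]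

end CellAverage

section CellSum

variable {χ : (Fin n → ℝ) → ℂ} {Φ : (Fin n → ℝ) → ℝ} {c m ρ δ τ κ q : ℝ}
  {σ : (Fin n → ℝ) → (Fin n → ℝ) → ℂ}

theorem IsWindow.integrable_integral_cellWindow_sq_mul (hχ : IsWindow χ) (τ : ℝ)
    (hΦ : Integrable Φ) : Integrable fun ζ => ∫ ξ, ‖cellWindow χ τ ζ ξ‖ ^ 2 * Φ ξ :=
  (integrable_prod_smul_of_integral_le (φ := fun ξ ζ => ‖cellWindow χ τ ζ ξ‖ ^ 2)
    (hχ.continuous_norm_cellWindow_sq τ).aestronglyMeasurable (fun _ _ => sq_nonneg _)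
    (fun ξ => integrable_of_integral_eq_one (hχ.integral_norm_cellWindow_sq τ ξ))
    (fun ξ => (hχ.integral_norm_cellWindow_sq τ ξ).le) hΦ).integral_prod_right

theorem IsWindow.integral_integral_cellWindow_sq_mul (hχ : IsWindow χ) (τ : ℝ)
    (hΦ : Integrable Φ) : ∫ ζ, ∫ ξ, ‖cellWindow χ τ ζ ξ‖ ^ 2 * Φ ξ = ∫ ξ, Φ ξ :=
  integral_integral_smul_of_integral_eq_one (φ := fun ξ ζ => ‖cellWindow χ τ ζ ξ‖ ^ 2)
    (hχ.continuous_norm_cellWindow_sq τ).aestronglyMeasurable (fun _ _ => sq_nonneg _)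
    (hχ.integral_norm_cellWindow_sq τ) hΦ

theorem integrable_integral_cellDensity_mul [NeZero n] (hτ : τ ≤ 1) (hΦ : Integrable Φ) :
    Integrable fun ζ => ∫ ξ, cellDensity τ ξ ζ * Φ ξ :=
  (integrable_prod_smul_of_integral_le (measurable_cellDensity τ).aestronglyMeasurable
    (cellDensity_nonneg τ) (integrable_cellDensity hτ) (integral_cellDensity_le hτ)
    hΦ).integral_prod_right

theorem integral_integral_cellDensity_mul_le [NeZero n] (hτ : τ ≤ 1) (hΦ : Integrable Φ)
    (hΦ₀ : ∀ ξ, 0 ≤ Φ ξ) :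
    ∫ ζ, ∫ ξ, cellDensity τ ξ ζ * Φ ξ ≤ (2 ^ |τ| / n) ^ n * ∫ ξ, Φ ξ :=
  integral_integral_mul_le_of_integral_le (measurable_cellDensity τ).aestronglyMeasurable
    (cellDensity_nonneg τ) (integrable_cellDensity hτ) (integral_cellDensity_le hτ) hΦ hΦ₀

theorem sub_mul_add_le_re_integral {α : Type*} [MeasurableSpace α] {μ : Measure α} {F : α → ℂ}
    {P Q R : α → ℝ} {a b : ℝ} (hP : Integrable P μ) (hQ : Integrable Q μ) (hR : Integrable R μ)
    (hF : Integrable F μ) (hle : ∀ x, a * P x - b * (Q x + R x) ≤ (F x).re) :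
    a * (∫ x, P x ∂μ) - b * ((∫ x, Q x ∂μ) + ∫ x, R x ∂μ) ≤ (∫ x, F x ∂μ).re := by
  have haP := hP.const_mul a
  have hbQR : Integrable (fun x => b * (Q x + R x)) μ := (hQ.add hR).const_mul b
  rw [← integral_add hQ hR, ← integral_const_mul, ← integral_const_mul,
    ← integral_sub haP hbQR]
  exact (integral_mono (haP.sub hbQR) hF.re hle).trans_eq (integral_re hF)

theorem SymbolClass.exists_le_re_kernelForm_cellKernel [NeZero n] (hσ : SymbolClass m ρ δ σ)
    (hχ : IsWindow χ) (hτ₀ : 0 ≤ τ) (hτ : τ ≤ 1) (hκ₀ : 0 < κ) (hκρ : κ ≤ ρ - τ)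
    (hκδ : κ ≤ τ - δ) (hell : ∀ x ξ, c * jb ξ ^ m ≤ (σ x ξ).re) (hq : 0 ≤ q) (N : ℝ) :
    ∃ C ≥ 0, ∀ ζ g, MemL1L2 g →
      c * (jb ζ ^ m * l2norm (fun ξ => cellWindow χ τ ζ ξ * g ξ) ^ 2)
          - C * (jb ζ ^ (m - κ - n * τ) *
              l2norm ((closedBall ζ (cellRadius τ ζ)).indicator g) ^ 2
            + jb ζ ^ (-N) * weightedSq (-q) g)
        ≤ (kernelForm (cellKernel χ τ σ ζ) (IFT fun ξ => cellWindow χ τ ζ ξ * g ξ)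
            (IFT g)).re := by
  have hτρ : τ ≤ ρ := by linarith
  obtain ⟨A, -, hdominated⟩ := hσ.exists_isDominatedKernel_cellKernel hχ hτ₀ hτ hτρ
  obtain ⟨C₁, hC₁, hnear⟩ := hσ.exists_le_re_kernelForm_near hχ hτ₀ hτ hκ₀.le hκρ hκδ hell
  obtain ⟨C₂, hC₂, hfar⟩ := hσ.exists_norm_kernelForm_far_le hχ hτ₀ hτ hτρ (by linarith) hq N
  refine ⟨C₁ + C₂, by positivity, fun ζ g hg => ?_⟩
  have hθg := hχ.memL1L2_cellWindow_mul hτ₀ hτ hg ζ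
  have hsplit := (hdominated ζ).kernelForm_IFT_indicator_inter_add_diff hθg.memLp_IFT
    (continuous_IFT hθg.integrable) hg
    (measurableSet_closedBall (x := ζ) (ε := cellRadius τ ζ)) MeasurableSet.univ
  rw [univ_inter, ← compl_eq_univ_sdiff, indicator_univ] at hsplit
  rw [← hsplit, add_re]
  have hnear := hnear ζ g hg
  have hfar := (abs_le.1 ((abs_re_le_norm _).trans (hfar ζ g hg))).1
  have hcell := mul_nonneg hC₂ (mul_nonneg (jb_rpow_pos ζ (m - κ - n * τ)).le
    (sq_nonneg (l2norm ((closedBall ζ (cellRadius τ ζ)).indicator g))))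
  have hrest := mul_nonneg hC₁ (mul_nonneg (jb_rpow_pos ζ (-N)).le (weightedSq_nonneg (-q) g))
  linarith

theorem SymbolClass.exists_cell_average_le_re_kernelForm [NeZero n] (hσ : SymbolClass m ρ δ σ)
    (hχ : IsWindow χ) (hτ₀ : 0 ≤ τ) (hτ : τ ≤ 1) (hκ₀ : 0 < κ) (hκρ : κ ≤ ρ - τ)
    (hκδ : κ ≤ τ - δ) (hc : 0 ≤ c) (hell : ∀ x ξ, c * jb ξ ^ m ≤ (σ x ξ).re) (hq : 0 ≤ q)
    (N : ℝ) :
    ∃ C ≥ 0, ∀ ζ g, MemL1L2 g →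
      c / 2 ^ |m| * (∫ ξ, ‖cellWindow χ τ ζ ξ‖ ^ 2 * (jb ξ ^ m * ‖g ξ‖ ^ 2))
          - C * ((∫ ξ, cellDensity τ ξ ζ * (jb ξ ^ (m - κ) * ‖g ξ‖ ^ 2))
            + jb ζ ^ (-N) * weightedSq (-q) g)
        ≤ (kernelForm (cellKernel χ τ σ ζ) (IFT fun ξ => cellWindow χ τ ζ ξ * g ξ)
            (IFT g)).re := by
  obtain ⟨C, hC, hle⟩ := hσ.exists_le_re_kernelForm_cellKernel hχ hτ₀ hτ hκ₀ hκρ hκδ hell hq N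
  refine ⟨C * 2 ^ |m - κ - n * τ|, by positivity, fun ζ g hg => (sub_le_sub ?_ ?_).trans
    (hle ζ g hg)⟩
  · rw [div_mul_eq_mul_div, div_le_iff₀' (by positivity), mul_left_comm]
    exact mul_le_mul_of_nonneg_left (hχ.integral_norm_cellWindow_sq_mul_le hτ₀ hτ hg m ζ) hc
  · rw [mul_assoc, integral_cellDensity_mul, mul_add (2 ^ |m - κ - n * τ|)]
    refine mul_le_mul_of_nonneg_left (add_le_add
      (jb_rpow_mul_sq_l2norm_indicator_cell_le hτ hg _ ζ) ?_) hC
    exact le_mul_of_one_le_left (mul_nonneg (jb_rpow_pos ζ _).le (weightedSq_nonneg _ g))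
      (Real.one_le_rpow one_le_two (abs_nonneg _))

theorem SymbolClass.exists_weightedSq_sub_le_re_integral [NeZero n] (hσ : SymbolClass m ρ δ σ)
    (hτ₀ : 0 ≤ τ) (hτ : τ ≤ 1) (hκ₀ : 0 < κ) (hκρ : κ ≤ ρ - τ) (hκδ : κ ≤ τ - δ) (hc : 0 ≤ c)
    (hell : ∀ x ξ, c * jb ξ ^ m ≤ (σ x ξ).re) (hq : 0 ≤ q) :
    ∃ C ≥ 0, ∀ f g : 𝓢(Fin n → ℝ, ℂ), IFT g = f →
      c / 2 ^ |m| * weightedSq m g - C * (weightedSq (m - κ) g + weightedSq (-q) g)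
        ≤ (∫ x, (∫ ξ, expi (dotp x ξ) * (σ x ξ * g ξ)) * conj (f x)).re := by
  obtain ⟨χ, hχ⟩ := exists_isWindow (n := n)
  obtain ⟨C, hC, hle⟩ :=
    hσ.exists_cell_average_le_re_kernelForm hχ hτ₀ hτ hκ₀ hκρ hκδ hc hell hq (n + 1)
  set J := ∫ ζ : Fin n → ℝ, jb ζ ^ (-(n + 1) : ℝ)
  have hJ : 0 ≤ J := integral_nonneg fun ζ => (jb_rpow_pos ζ _).le
  refine ⟨C * ((2 ^ |τ| / n) ^ n + J), by positivity, fun f g hfg => ?_⟩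
  obtain ⟨hint, hsum⟩ := hσ.integrable_kernelForm_and_integral_eq hχ hτ₀ hτ (by linarith)
    (memL1L2_schwartz f) f.continuous (memL1L2_schwartz g) g.continuous
    (integrable_jb_rpow_mul_norm_schwartz g m)
  have hm := integrable_jb_rpow_mul_sq_norm_schwartz g m
  have hmκ := integrable_jb_rpow_mul_sq_norm_schwartz g (m - κ)
  have hP := hχ.integrable_integral_cellWindow_sq_mul τ hm
  have hQ := integrable_integral_cellDensity_mul hτ hmκ
  have hR := (integrable_jb_rpow (n := n)).mul_const (weightedSq (-q) g)
  have hintegrated := sub_mul_add_le_re_integral hP hQ hR hint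
    fun ζ => by simpa only [hfg] using hle ζ g (memL1L2_schwartz g)
  rw [hsum, hχ.integral_integral_cellWindow_sq_mul τ hm, integral_mul_const] at hintegrated
  refine le_trans (sub_le_sub_left ?_ _) hintegrated
  rw [mul_assoc]
  have hcells := integral_integral_cellDensity_mul_le hτ hmκ
    fun ξ => mul_nonneg (jb_rpow_pos ξ _).le (sq_nonneg _)
  have hcross : 0 ≤ (2 ^ |τ| / n) ^ n * weightedSq (-q) g + J * weightedSq (m - κ) g := by
    have := weightedSq_nonneg (-q) g
    have := weightedSq_nonneg (m - κ) g
    positivity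
  refine mul_le_mul_of_nonneg_left ?_ hC
  rw [← weightedSq] at hcells
  linarith

end CellSum

section Interpolation

theorem weightedSq_le_of_forall_rpow_le {p₀ p₁ p₂ a b : ℝ}
    (h : ∀ t ≥ (1 : ℝ), t ^ p₁ ≤ a * t ^ p₂ + b * t ^ p₀) (g : 𝓢(Fin n → ℝ, ℂ)) :
    weightedSq p₁ g ≤ a * weightedSq p₂ g + b * weightedSq p₀ g := by
  have h₂ := (integrable_jb_rpow_mul_sq_norm_schwartz g p₂).const_mul a
  have h₀ := (integrable_jb_rpow_mul_sq_norm_schwartz g p₀).const_mul b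
  simp only [weightedSq]
  rw [← integral_const_mul, ← integral_const_mul, ← integral_add h₂ h₀]
  refine integral_mono (integrable_jb_rpow_mul_sq_norm_schwartz g p₁) (h₂.add h₀) fun ξ => ?_
  refine (mul_le_mul_of_nonneg_right (h _ (one_le_jb ξ)) (sq_nonneg _)).trans_eq ?_
  ring

theorem weightedSq_mono {p q : ℝ} (hpq : p ≤ q) (g : 𝓢(Fin n → ℝ, ℂ)) :
    weightedSq p g ≤ weightedSq q g := by
  simpa using weightedSq_le_of_forall_rpow_le (a := 1) (b := 0) (p₀ := 0)
    (fun t ht => by simpa using Real.rpow_le_rpow_of_exponent_le ht hpq) g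

theorem exists_rpow_le_mul_rpow_add_mul_rpow {p₁ p₂ ε : ℝ} (hp : p₁ < p₂) (hε : 0 < ε) (p₀ : ℝ) :
    ∃ C ≥ 0, ∀ t ≥ (1 : ℝ), t ^ p₁ ≤ ε * t ^ p₂ + C * t ^ p₀ := by
  set R := ε ^ (-(p₂ - p₁)⁻¹) with hR
  have hR₀ : 0 < R := Real.rpow_pos_of_pos hε _
  refine ⟨R ^ |p₁ - p₀|, by positivity, fun t ht => ?_⟩
  have ht₀ : 0 < t := one_pos.trans_le ht
  rcases le_total R t with hRt | htR
  · have hsmall : t ^ (p₁ - p₂) ≤ ε := by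
      refine (Real.rpow_le_rpow_of_nonpos hR₀ hRt (by linarith)).trans_eq ?_
      rw [hR, ← Real.rpow_mul hε.le, ← neg_sub p₂ p₁, neg_mul_neg,
        inv_mul_cancel₀ (sub_pos.2 hp).ne', Real.rpow_one]
    calc t ^ p₁ = t ^ (p₁ - p₂) * t ^ p₂ := by rw [← Real.rpow_add ht₀, sub_add_cancel]
      _ ≤ ε * t ^ p₂ := by gcongr
      _ ≤ ε * t ^ p₂ + R ^ |p₁ - p₀| * t ^ p₀ := le_add_of_nonneg_right (by positivity)
  · calc t ^ p₁ = t ^ (p₁ - p₀) * t ^ p₀ := by rw [← Real.rpow_add ht₀, sub_add_cancel]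
      _ ≤ R ^ |p₁ - p₀| * t ^ p₀ := by
          gcongr
          exact (Real.rpow_le_rpow_of_exponent_le ht (le_abs_self _)).trans
            (Real.rpow_le_rpow ht₀.le htR (abs_nonneg _))
      _ ≤ ε * t ^ p₂ + R ^ |p₁ - p₀| * t ^ p₀ := le_add_of_nonneg_left (by positivity)

theorem sobSq_eq_weightedSq (s : ℝ) (f : (Fin n → ℝ) → ℂ) :
    sobSq s f = weightedSq (2 * s) (FT f) := by
  simp only [sobSq, weightedSq, ← wt_rpow_div_two, mul_div_cancel_left₀ s (two_ne_zero (α := ℝ))]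

theorem sobSq_nonneg (s : ℝ) (f : (Fin n → ℝ) → ℂ) : 0 ≤ sobSq s f :=
  (weightedSq_nonneg _ _).trans_eq (sobSq_eq_weightedSq s f).symm

end Interpolation

theorem SymbolClass.exists_weightedSq_sub_weightedSq_le_re_integral [NeZero n]
    {m ρ δ c q : ℝ} {σ : (Fin n → ℝ) → (Fin n → ℝ) → ℂ} (hσ : SymbolClass m ρ δ σ) (hρ : ρ ≤ 1)
    (hδρ : δ < ρ) (hδ₀ : 0 ≤ δ) (hc : 0 < c) (hell : ∀ x ξ, c * jb ξ ^ m ≤ (σ x ξ).re)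
    (hq : 0 ≤ q) :
    ∃ c' > 0, ∃ C > 0, ∀ f g : 𝓢(Fin n → ℝ, ℂ), IFT g = f →
      c' * weightedSq m g - C * weightedSq (-q) g
        ≤ (∫ x, (∫ ξ, expi (dotp x ξ) * (σ x ξ * g ξ)) * conj (f x)).re := by
  obtain ⟨C, hC, hle⟩ := hσ.exists_weightedSq_sub_le_re_integral (τ := (ρ + δ) / 2)
    (κ := (ρ - δ) / 2) (by linarith) (by linarith) (by linarith) (by linarith) (by linarith)
    hc.le hell hq
  set c₀ := c / 2 ^ |m|
  have hc₀ : 0 < c₀ := by positivity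
  set ε := c₀ / (2 * (C + 1)) with hε
  obtain ⟨D, hD, hinterp⟩ := exists_rpow_le_mul_rpow_add_mul_rpow
    (by linarith : m - (ρ - δ) / 2 < m) (by positivity : 0 < ε) (-q)
  refine ⟨c₀ / 2, by positivity, C * D + C + 1, by positivity, fun f g hfg =>
    le_trans ?_ (hle f g hfg)⟩
  have hm := weightedSq_nonneg m g
  have hqg := weightedSq_nonneg (-q) g
  have hCε : C * ε ≤ c₀ / 2 := by
    rw [hε, mul_div_assoc', div_le_div_iff₀ (by positivity) two_pos]
    nlinarith
  have herror := mul_le_mul_of_nonneg_left (weightedSq_le_of_forall_rpow_le hinterp g) hC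
  nlinarith [mul_le_mul_of_nonneg_right hCε hm]

end

theorem garding_elliptic_general (n : ℕ) (hn : 1 ≤ n) (m ρ δ : ℝ) (hρ : ρ ≤ 1) (hδρ : δ < ρ)
    (hδ0 : 0 ≤ δ) (σ : (Fin n → ℝ) → (Fin n → ℝ) → ℂ) (hσ : SymbolClass m ρ δ σ) (c : ℝ)
    (hc : 0 < c) (hell : ∀ x ξ, c * wt ξ ^ (m / 2) ≤ (σ x ξ).re) (r : ℝ) :
    ∃ c' > 0, ∃ C > 0, ∀ f : SchwartzMap (Fin n → ℝ) ℂ,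
      c' * sobSq (m / 2) f - C * sobSq r f ≤ (∫ x, OpKN σ f x * (starRingEnd ℂ) (f x)).re := by
  have : NeZero n := ⟨by omega⟩
  obtain ⟨c', hc', C, hC, hle⟩ := hσ.exists_weightedSq_sub_weightedSq_le_re_integral hρ hδρ hδ0 hc
    (fun x ξ => by simpa only [wt_rpow_div_two] using hell x ξ) (le_max_left 0 (-(2 * r)))
  refine ⟨c', hc', C, hC, fun f => ?_⟩
  obtain ⟨g, hg, hgf⟩ := exists_schwartz_eq_FT f
  have hr : weightedSq (-max 0 (-(2 * r))) g ≤ weightedSq (2 * r) g :=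
    weightedSq_mono (by linarith [le_max_right 0 (-(2 * r))]) g
  simp only [OpKN, sobSq_eq_weightedSq, ← hg, mul_assoc, mul_div_cancel₀ m (two_ne_zero (α := ℝ))]
  exact (sub_le_sub_left (mul_le_mul_of_nonneg_left hr hC.le) _).trans (hle f g hgf)

/-- Gårding inequality for elliptic symbols in the Hörmander
calculus on `ℝⁿ`. -/
theorem garding_elliptic (n : ℕ) (hn : 1 ≤ n)
    (m ρ δ : ℝ) (hρ : ρ ≤ 1) (hδρ : δ < ρ) (hδ0 : 0 ≤ δ)
    (σ : (Fin n → ℝ) → (Fin n → ℝ) → ℝ)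
    (hσ : SymbolClass m ρ δ (fun x ξ => ((σ x ξ : ℝ) : ℂ)))
    (c : ℝ) (hc : 0 < c)
    (hell : ∀ x ξ, c * wt ξ ^ (m / 2) ≤ σ x ξ) :
    ∃ C > 0, ∀ f : SchwartzMap (Fin n → ℝ) ℂ,
      -C * sobSq ((m - (ρ - δ)) / 2) (⇑f)
        ≤ (∫ x, OpKN (fun x ξ => ((σ x ξ : ℝ) : ℂ)) (⇑f) x
            * (starRingEnd ℂ) (f x)).re := by
  obtain ⟨c', hc', C, hC, hle⟩ := garding_elliptic_general n hn m ρ δ hρ hδρ hδ0 _ hσ c hc hell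
    ((m - (ρ - δ)) / 2)
  exact ⟨C, hC, fun f => by linarith [hle f, mul_nonneg hc'.le (sobSq_nonneg (m / 2) f)]⟩
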